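/- Let G be a finite group, let x ∈ G with x ≠ 1, let K = x^G, and suppose that K² = {1} ∪ D where D = d^G is the conjugacy class of some element d ≠ 1 of G. Then the subgroup ⟨K⟩ generated by K is a solvable normal subgroup of G. -/

import Mathlib

/-!
Suppose `x² ≠ 1`. Then `D` consists of the squares of the elements of `K`, so `|K²| ≤ |K| + 1`. If
`|K| ≥ 3`, this is small enough for Freiman's theorem on doubling less than `3 / 2` to make `K²` a
subgroup; its nontrivial elements form one class, so it is a `p`-group, and `⟨K⟩` is cyclic modulo
it.

Suppose `x² = 1`. Even powers of a product `uv` of elements of `K` are again such products, so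
either these products all have order at most two and `⟨K⟩` is abelian, or they all have order
dividing an odd prime `p`. In the second case they generate a `p`-group, by induction on `|G|`. For
this it is enough that `|K|` is a power of `p`, since a Sylow `p`-subgroup is then transitive
on `K`. If `x` commutes with another involution `z`, count the `u ∈ K` by the unique element of `K`
conjugating `u` to `zuz⁻¹`; this writes `|K|` as the product of the sizes of its intersections with
the centralizers of `z` and `xz`, to which the induction applies. Otherwise a Sylow 2-subgroup has
a single involution. As in the Brauer-Suzuki theorem, it is not generalized quaternion: in that
case, with `v² = x`, induce to `G` class functions supported on the elements of the centralizer of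
`v` that have `v` as a power. The class sum of `K` acts on an irreducible representation by a scalar
whose square involves only elements of odd order, where the induced functions vanish, and the
resulting relations between degrees are arithmetically impossible. So Sylow 2-subgroups are cyclic
and have a normal complement, and by the Frattini argument every prime `r ≠ p` has a Sylow
`r`-subgroup centralized by an element of `K`.
-/

open Pointwise

/-- The conjugacy class of `x` in `G`. -/
def conjClass {G : Type*} [Group G] (x : G) : Set G :=
  {a : G | ∃ g : G, a = g⁻¹ * x * g}

open MonoidAlgebra (of)

section IdempotentMatrices

variable {k : Type*} [Field k] {n : Type*} [Fintype n]

theorem exists_eq_mul_mul_eq_one_of_isIdempotentElem {Z : Matrix n n k} (hZ : IsIdempotentElem Z) :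
    ∃ (B : Matrix n (Fin Z.rank) k) (C : Matrix (Fin Z.rank) n k), Z = B * C ∧ C * B = 1 := by
  classical
  set f := Matrix.toLin' Z
  have hf : f ∘ₗ f = f := by rw [← Matrix.toLin'_mul, hZ.eq]
  let b : Module.Basis (Fin Z.rank) k (LinearMap.range f) := Module.finBasis k (LinearMap.range f)
  refine ⟨LinearMap.toMatrix b (Pi.basisFun k n) (LinearMap.range f).subtype,
    LinearMap.toMatrix (Pi.basisFun k n) b f.rangeRestrict, ?_, ?_⟩
  · rw [← LinearMap.toMatrix_comp, LinearMap.subtype_comp_codRestrict]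
    exact (LinearMap.toMatrix'_toLin' Z).symm
  · have hid : f.rangeRestrict ∘ₗ (LinearMap.range f).subtype = LinearMap.id := by
      ext ⟨y, z, rfl⟩
      simpa using congrFun (LinearMap.congr_fun hf z) _
    rw [← LinearMap.toMatrix_comp, hid, LinearMap.toMatrix_id]

theorem trace_eq_rank_of_isIdempotentElem {Z : Matrix n n k} (hZ : IsIdempotentElem Z) :
    Z.trace = Z.rank := by
  classical
  obtain ⟨B, C, hBC, hCB⟩ := exists_eq_mul_mul_eq_one_of_isIdempotentElem hZ
  conv_lhs => rw [hBC, Matrix.trace_mul_comm, hCB, Matrix.trace_one, Fintype.card_fin]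

theorem det_one_add_smul_of_isIdempotentElem [DecidableEq n] {Z : Matrix n n k}
    (hZ : IsIdempotentElem Z) (c : k) : (1 + c • Z).det = (1 + c) ^ Z.rank := by
  obtain ⟨B, C, hBC, hCB⟩ := exists_eq_mul_mul_eq_one_of_isIdempotentElem hZ
  conv_lhs => rw [hBC, ← Matrix.smul_mul, Matrix.det_one_add_mul_comm, Matrix.mul_smul, hCB]
  rw [show (1 : Matrix (Fin Z.rank) (Fin Z.rank) k) + c • 1 = (1 + c) • 1 by simp [add_smul],
    Matrix.det_smul, Matrix.det_one, mul_one, Fintype.card_fin]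

end IdempotentMatrices

/-- A Wedderburn decomposition of the complex group algebra of `H` as a product of matrix algebras.
Its factors, indexed by `Fin n`, stand for the irreducible complex representations of `H`. -/
structure WedderburnDecomposition (H : Type*) [Group H] where
  /-- The number of irreducible representations. -/
  n : ℕ
  /-- The degrees of the irreducible representations. -/
  degree : Fin n → ℕ
  neZero_degree : ∀ i, NeZero (degree i)
  /-- The isomorphism with a product of matrix algebras. -/
  equiv : MonoidAlgebra ℂ H ≃ₐ[ℂ] Π i, Matrix (Fin (degree i)) (Fin (degree i)) ℂ

namespace WedderburnDecomposition

variable {H : Type*} [Group H]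

theorem nonempty [Finite H] : Nonempty (WedderburnDecomposition H) := by
  obtain ⟨n, d, h, ⟨e⟩⟩ :=
    IsSemisimpleRing.exists_algEquiv_pi_matrix_of_isAlgClosed ℂ (MonoidAlgebra ℂ H)
  exact ⟨⟨n, d, h, e⟩⟩

variable (W : WedderburnDecomposition H)

instance (i : Fin W.n) : NeZero (W.degree i) := W.neZero_degree i

/-- The `i`-th irreducible matrix representation, as a representation of the group algebra. -/
noncomputable def rep (i : Fin W.n) :
    MonoidAlgebra ℂ H →ₐ[ℂ] Matrix (Fin (W.degree i)) (Fin (W.degree i)) ℂ :=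
  (Pi.evalAlgHom ℂ _ i).comp W.equiv.toAlgHom

/-- The `i`-th irreducible character, extended linearly to the group algebra. -/
noncomputable def tr (i : Fin W.n) : MonoidAlgebra ℂ H →ₗ[ℂ] ℂ :=
  Matrix.traceLinearMap (Fin (W.degree i)) ℂ ℂ ∘ₗ (W.rep i).toLinearMap

/-- The `i`-th irreducible character. -/
noncomputable def chi (i : Fin W.n) (h : H) : ℂ := W.tr i (of ℂ H h)

variable {W}

theorem degree_pos (i : Fin W.n) : 0 < W.degree i := NeZero.pos _

theorem degree_cast_ne_zero (i : Fin W.n) : (W.degree i : ℂ) ≠ 0 := NeZero.ne _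

theorem rep_surjective (i : Fin W.n) : Function.Surjective (W.rep i) :=
  fun M => ⟨W.equiv.symm (Pi.single i M), by simp [rep]⟩

theorem tr_apply (i : Fin W.n) (a : MonoidAlgebra ℂ H) : W.tr i a = (W.rep i a).trace := rfl

theorem tr_of (i : Fin W.n) (h : H) : W.tr i (of ℂ H h) = W.chi i h := rfl

theorem tr_mul_comm (i : Fin W.n) (a b : MonoidAlgebra ℂ H) : W.tr i (a * b) = W.tr i (b * a) := by
  simp only [tr_apply, map_mul]
  exact Matrix.trace_mul_comm _ _

theorem tr_one (i : Fin W.n) : W.tr i 1 = W.degree i := by simp [tr_apply]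

theorem chi_one (i : Fin W.n) : W.chi i 1 = W.degree i := by rw [chi, map_one, tr_one]

theorem chi_mul_comm (i : Fin W.n) (g h : H) : W.chi i (g * h) = W.chi i (h * g) := by
  rw [chi, chi, map_mul (of ℂ H), tr_mul_comm, map_mul (of ℂ H)]

theorem chi_conj (i : Fin W.n) (g h : H) : W.chi i (g * h * g⁻¹) = W.chi i h := by
  rw [chi_mul_comm, inv_mul_cancel_left]

theorem chi_conj' (i : Fin W.n) (g h : H) : W.chi i (g⁻¹ * h * g) = W.chi i h := by
  simpa using chi_conj i g⁻¹ h

theorem tr_eq_rank {i : Fin W.n} {a : MonoidAlgebra ℂ H} (ha : IsIdempotentElem a) :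
    W.tr i a = (W.rep i a).rank :=
  trace_eq_rank_of_isIdempotentElem (ha.map (W.rep i))

theorem det_rep_one_add_smul {i : Fin W.n} {a : MonoidAlgebra ℂ H} (ha : IsIdempotentElem a)
    (c : ℂ) : (W.rep i (1 + c • a)).det = (1 + c) ^ (W.rep i a).rank := by
  rw [map_add, map_one, map_smul, det_one_add_smul_of_isIdempotentElem (ha.map (W.rep i))]

section TraceFunctions

variable (W) in
/-- The matrix unit `e₀₀` of the `i`-th factor, a primitive idempotent of the group algebra. -/
noncomputable def primitiveIdempotent (i : Fin W.n) : MonoidAlgebra ℂ H :=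
  W.equiv.symm (Pi.single i (Matrix.single 0 0 1))

theorem isIdempotentElem_primitiveIdempotent (i : Fin W.n) :
    IsIdempotentElem (W.primitiveIdempotent i) := by
  rw [IsIdempotentElem, primitiveIdempotent, ← map_mul, ← Pi.single_mul]
  simp

variable {τ : MonoidAlgebra ℂ H →ₗ[ℂ] ℂ}

theorem traceFunction_single (hτ : ∀ a b, τ (a * b) = τ (b * a)) (i : Fin W.n)
    (p q : Fin (W.degree i)) (c : ℂ) :
    τ (W.equiv.symm (Pi.single i (Matrix.single p q c))) =
      if p = q then c * τ (W.primitiveIdempotent i) else 0 := by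
  have hfactor : W.equiv.symm (Pi.single i (Matrix.single p q c)) =
      W.equiv.symm (Pi.single i (Matrix.single p 0 c)) *
        W.equiv.symm (Pi.single i (Matrix.single 0 q 1)) := by
    rw [← map_mul, ← Pi.single_mul, Matrix.single_mul_single_same, mul_one]
  rw [hfactor, hτ, ← map_mul, ← Pi.single_mul]
  split_ifs with hpq
  · subst hpq
    rw [Matrix.single_mul_single_same, one_mul,
      show (Matrix.single 0 0 c : Matrix (Fin (W.degree i)) (Fin (W.degree i)) ℂ) =
        c • Matrix.single 0 0 1 by simp, Pi.single_smul, map_smul, map_smul, smul_eq_mul]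
    rfl
  · rw [Matrix.single_mul_single_of_ne 1 _ _ _ (Ne.symm hpq)]
    simp

theorem traceFunction_eq_sum (hτ : ∀ a b, τ (a * b) = τ (b * a)) (a : MonoidAlgebra ℂ H) :
    τ a = ∑ i, τ (W.primitiveIdempotent i) * W.tr i a := by
  obtain ⟨f, rfl⟩ := W.equiv.symm.surjective a
  have hblock (i) (M : Matrix (Fin (W.degree i)) (Fin (W.degree i)) ℂ) :
      τ (W.equiv.symm (Pi.single i M)) = τ (W.primitiveIdempotent i) * M.trace := by
    let T := τ ∘ₗ W.equiv.symm.toLinearMap ∘ₗ LinearMap.single ℂ _ i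
    have hT (p q) (c : ℂ) : T (Matrix.single p q c) = _ := traceFunction_single hτ i p q c
    change T M = _
    conv_lhs => rw [Matrix.matrix_eq_sum_single M]
    simp [hT, Matrix.trace, Finset.mul_sum, mul_comm]
  conv_lhs => rw [← Finset.univ_sum_single f]
  simp [hblock, tr_apply, rep]

theorem traceFunction_of_classFunction (hτ : ∀ g h, τ (of ℂ H (g * h)) = τ (of ℂ H (h * g)))
    (a b : MonoidAlgebra ℂ H) : τ (a * b) = τ (b * a) := by
  have heq : (LinearMap.mul ℂ (MonoidAlgebra ℂ H)).compr₂ τ =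
      (LinearMap.mul ℂ (MonoidAlgebra ℂ H)).flip.compr₂ τ := by
    ext g h
    simpa using hτ g h
  exact LinearMap.congr_fun₂ heq a b

end TraceFunctions

section Orthogonality

theorem trace_mulLeft_comp_mulRight (a b : MonoidAlgebra ℂ H) :
    LinearMap.trace ℂ _ (LinearMap.mulLeft ℂ a ∘ₗ LinearMap.mulRight ℂ b) =
      ∑ i, W.tr i a * W.tr i b := by
  rw [← LinearMap.trace_conj' _ W.equiv.toLinearEquiv, LinearMap.trace_eq_matrix_trace ℂ
    (Pi.basis fun i => Matrix.stdBasis ℂ (Fin (W.degree i)) (Fin (W.degree i))),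
    Matrix.trace, Fintype.sum_sigma]
  refine Finset.sum_congr rfl fun i _ => ?_
  rw [tr_apply, tr_apply, Matrix.trace, Matrix.trace, Finset.sum_mul_sum, Fintype.sum_prod_type]
  refine Finset.sum_congr rfl fun p _ => Finset.sum_congr rfl fun q _ => ?_
  simp [LinearMap.toMatrix_apply, LinearEquiv.conj_apply, Matrix.stdBasis, rep,
    ← Matrix.single_eq_of_single_single, Matrix.mul_apply, Matrix.single_apply, ite_and]

variable [Fintype H]

-- The trace of `a ↦ g * a * y` on the group algebra, computed in the two natural bases.
theorem sum_chi_mul_chi [DecidableEq H] (g y : H) :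
    ∑ i, W.chi i g * W.chi i y = ∑ h, if h⁻¹ * g⁻¹ * h = y then 1 else 0 := by
  simp only [chi, ← trace_mulLeft_comp_mulRight]
  rw [LinearMap.trace_eq_matrix_trace ℂ (MonoidAlgebra.basis H ℂ), Matrix.trace]
  refine Finset.sum_congr rfl fun h _ => ?_
  have hiff : g * (h * y) = h ↔ h⁻¹ * g⁻¹ * h = y := by
    rw [← eq_inv_mul_iff_mul_eq, ← eq_inv_mul_iff_mul_eq, eq_comm, mul_assoc]
  simp [LinearMap.toMatrix_apply, MonoidAlgebra.basis, Finsupp.single_apply, hiff]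

theorem sum_degree_mul_chi [DecidableEq H] (g : H) :
    ∑ i, (W.degree i : ℂ) * W.chi i g = if g = 1 then (Fintype.card H : ℂ) else 0 := by
  have hconj (h : H) : h⁻¹ * g⁻¹ * h = 1 ↔ g = 1 := by
    rw [mul_eq_one_iff_eq_inv, mul_eq_left, inv_eq_one]
  simpa [chi_one, hconj, mul_comm] using sum_chi_mul_chi (W := W) g 1

theorem card_mul_coeff (a : MonoidAlgebra ℂ H) (h : H) :
    (Fintype.card H : ℂ) * a.coeff h = ∑ i, (W.degree i : ℂ) * W.tr i (a * of ℂ H h⁻¹) := by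
  classical
  induction a using MonoidAlgebra.induction_on with
  | of g =>
    simp only [← map_mul, tr_of, sum_degree_mul_chi]
    simp [Finsupp.single_apply, mul_inv_eq_one]
  | add x y hx hy =>
    simp only [MonoidAlgebra.coeff_add, Finsupp.add_apply, mul_add, hx, hy, add_mul, map_add,
      Finset.sum_add_distrib]
  | smul r x hx =>
    simp only [MonoidAlgebra.coeff_smul, Finsupp.smul_apply, smul_mul_assoc, map_smul, smul_eq_mul]
    rw [mul_left_comm, hx, Finset.mul_sum]
    exact Finset.sum_congr rfl fun _ _ => by ring

theorem eq_sum_coeff_smul_of (a : MonoidAlgebra ℂ H) : a = ∑ h, a.coeff h • of ℂ H h := by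
  simpa [MonoidAlgebra.basis] using ((MonoidAlgebra.basis H ℂ).sum_repr a).symm

-- The coefficients of the central idempotent of the `j`-th factor are `d_j * χ_j(h⁻¹) / |H|`.
theorem sum_chi_mul_chi_inv (i j : Fin W.n) :
    ∑ h, W.chi i h * W.chi j h⁻¹ = if i = j then (Fintype.card H : ℂ) else 0 := by
  have hd := degree_cast_ne_zero j
  let z : MonoidAlgebra ℂ H := (W.degree j : ℂ)⁻¹ • W.equiv.symm (Pi.single j 1)
  have htr (l) (a) : W.tr l (z * a) = if l = j then (W.degree j : ℂ)⁻¹ * W.tr j a else 0 := by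
    split_ifs with hl
    · subst hl
      simp [z, tr_apply, rep]
    · simp [z, tr_apply, rep, hl]
  have hcoeff (h) : (Fintype.card H : ℂ) * z.coeff h = W.chi j h⁻¹ := by
    rw [card_mul_coeff (W := W)]
    simp only [htr, mul_ite, mul_zero, Finset.sum_ite_eq', Finset.mem_univ, if_true, tr_of]
    field_simp
  calc ∑ h, W.chi i h * W.chi j h⁻¹
      = Fintype.card H * W.tr i z := by
        conv_rhs => rw [eq_sum_coeff_smul_of z]
        simp only [map_sum, map_smul, tr_of, smul_eq_mul, Finset.mul_sum, ← hcoeff]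
        exact Finset.sum_congr rfl fun _ _ => by ring
    _ = if i = j then (Fintype.card H : ℂ) else 0 := by
        rw [← mul_one z, htr, tr_one, inv_mul_cancel₀ hd, mul_ite, mul_one, mul_zero]

theorem sum_sum_mul_chi_mul_chi_inv (f : Fin W.n → ℂ) (j : Fin W.n) :
    ∑ h, (∑ i, f i * W.chi i h) * W.chi j h⁻¹ = f j * Fintype.card H := by
  simp only [Finset.sum_mul, mul_assoc]
  rw [Finset.sum_comm]
  simp [← Finset.mul_sum, sum_chi_mul_chi_inv]

end Orthogonality

theorem chi_injective [Finite H] : Function.Injective W.chi := by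
  have := Fintype.ofFinite H
  intro i j h
  by_contra hij
  have hi := sum_chi_mul_chi_inv i j
  rw [h, sum_chi_mul_chi_inv, if_pos rfl, if_neg hij] at hi
  exact Nat.cast_ne_zero.2 Fintype.card_ne_zero hi

section IrreducibleCharacters

theorem exists_eq_one_of_sum_sq_eq_one {ι : Type*} [Fintype ι] {m : ι → ℕ}
    (hm : ∑ i, m i ^ 2 = 1) : ∃ i, m i = 1 ∧ ∀ j ≠ i, m j = 0 := by
  classical
  obtain ⟨i, hi⟩ : ∃ i, m i ≠ 0 := by
    by_contra! hzero
    simp [hzero] at hm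
  have hsplit := Finset.add_sum_erase Finset.univ (fun i => m i ^ 2) (Finset.mem_univ i)
  have hpos : 1 ≤ m i ^ 2 := Nat.one_le_iff_ne_zero.2 (pow_ne_zero 2 hi)
  refine ⟨i, by simpa using (show m i ^ 2 = 1 by grind), fun j hj => ?_⟩
  have hrest : ∑ l ∈ Finset.univ.erase i, m l ^ 2 = 0 := by grind
  simpa using Finset.sum_eq_zero_iff.1 hrest j (by simp [hj])

theorem exists_chi_eq [Fintype H] {τ : MonoidAlgebra ℂ H →ₗ[ℂ] ℂ}
    (hclass : ∀ g h, τ (of ℂ H (g * h)) = τ (of ℂ H (h * g)))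
    (hidem : ∀ a, IsIdempotentElem a → ∃ r : ℕ, τ a = r)
    (hnorm : ∑ h, τ (of ℂ H h) * τ (of ℂ H h⁻¹) = Fintype.card H) :
    ∃ i, ∀ h, W.chi i h = τ (of ℂ H h) := by
  choose m hm using fun i => hidem _ (isIdempotentElem_primitiveIdempotent (W := W) i)
  have hτ (h) : τ (of ℂ H h) = ∑ i, (m i : ℂ) * W.chi i h := by
    simp only [traceFunction_eq_sum (W := W) (traceFunction_of_classFunction hclass) (of ℂ H h),
      hm, tr_of]
  have hsq : (∑ i, (m i : ℂ) ^ 2) * Fintype.card H = Fintype.card H := by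
    rw [Finset.sum_mul]
    calc ∑ i, (m i : ℂ) ^ 2 * Fintype.card H
        = ∑ j, m j * ∑ h, (∑ i, (m i : ℂ) * W.chi i h) * W.chi j h⁻¹ := by
          simp only [sum_sum_mul_chi_mul_chi_inv, ← mul_assoc, sq]
      _ = ∑ h, τ (of ℂ H h) * τ (of ℂ H h⁻¹) := by
          simp only [hτ, Finset.mul_sum]
          rw [Finset.sum_comm]
          exact Finset.sum_congr rfl fun h _ => Finset.sum_congr rfl fun j _ => by
            rw [mul_left_comm]
      _ = Fintype.card H := hnorm
  have hsum : ∑ i, m i ^ 2 = 1 := by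
    have hcard : (Fintype.card H : ℂ) ≠ 0 := Nat.cast_ne_zero.2 Fintype.card_ne_zero
    exact_mod_cast mul_right_cancel₀ hcard (hsq.trans (one_mul _).symm)
  obtain ⟨i, hi, hne⟩ := exists_eq_one_of_sum_sq_eq_one hsum
  refine ⟨i, fun h => ?_⟩
  rw [hτ, Finset.sum_eq_single i (fun j _ hj => by simp [hne j hj]) (by simp), hi, Nat.cast_one,
    one_mul]

variable [Finite H]

theorem exists_chi_eq_one : ∃ j, ∀ h, W.chi j h = 1 := by
  have := Fintype.ofFinite H
  let ε := MonoidAlgebra.lift ℂ ℂ H 1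
  have hε (h) : ε (of ℂ H h) = 1 := by simp [ε]
  obtain ⟨j, hj⟩ := exists_chi_eq (W := W) (τ := ε.toLinearMap) (by simp [ε])
    (fun a ha => by
      rcases IsIdempotentElem.iff_eq_zero_or_one.1 (ha.map ε) with h | h
      · exact ⟨0, by simp [h]⟩
      · exact ⟨1, by simp [h]⟩)
    (by simp [ε])
  exact ⟨j, fun h => (hj h).trans (hε h)⟩

theorem exists_chi_comp_mulEquiv (φ : H ≃* H) (i : Fin W.n) :
    ∃ j, ∀ h, W.chi j h = W.chi i (φ h) := by
  have := Fintype.ofFinite H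
  let Φ := MonoidAlgebra.mapDomainAlgHom ℂ ℂ (φ : H →* H)
  have hΦ (h) : Φ (of ℂ H h) = of ℂ H (φ h) := by simp [Φ]
  obtain ⟨j, hj⟩ := exists_chi_eq (W := W) (τ := W.tr i ∘ₗ Φ.toLinearMap)
    (fun g h => by
      simp only [LinearMap.comp_apply, AlgHom.toLinearMap_apply, hΦ, tr_of, map_mul φ,
        chi_mul_comm])
    (fun a ha => ⟨_, tr_eq_rank (ha.map Φ)⟩)
    (by
      have hnorm := sum_chi_mul_chi_inv i i
      rw [if_pos rfl, ← φ.toEquiv.sum_comp] at hnorm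
      simpa only [LinearMap.comp_apply, AlgHom.toLinearMap_apply, hΦ, tr_of, map_inv φ,
        MulEquiv.toEquiv_eq_coe, MulEquiv.coe_toEquiv] using hnorm)
  exact ⟨j, fun h => by rw [hj, LinearMap.comp_apply, AlgHom.toLinearMap_apply, hΦ, tr_of]⟩

theorem exists_chi_inv (i : Fin W.n) : ∃ j, ∀ h, W.chi j h = W.chi i h⁻¹ := by
  have := Fintype.ofFinite H
  let Φ : MonoidAlgebra ℂ H →ₗ[ℂ] MonoidAlgebra ℂ H :=
    (MonoidAlgebra.basis H ℂ).constr ℂ fun h => of ℂ H h⁻¹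
  have hΦ (h) : Φ (of ℂ H h) = of ℂ H h⁻¹ := by
    simpa [Φ, MonoidAlgebra.basis] using
      (MonoidAlgebra.basis H ℂ).constr_basis ℂ (fun h => of ℂ H h⁻¹) h
  have hmul (a b) : Φ (a * b) = Φ b * Φ a := by
    have heq : (LinearMap.mul ℂ (MonoidAlgebra ℂ H)).compr₂ Φ =
        ((LinearMap.mul ℂ (MonoidAlgebra ℂ H)).compl₁₂ Φ Φ).flip := by
      ext g h : 4
      change Φ (of ℂ H g * of ℂ H h) = Φ (of ℂ H h) * Φ (of ℂ H g)
      rw [← map_mul (of ℂ H), hΦ, hΦ, hΦ, mul_inv_rev, map_mul]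
    exact LinearMap.congr_fun₂ heq a b
  obtain ⟨j, hj⟩ := exists_chi_eq (W := W) (τ := W.tr i ∘ₗ Φ)
    (fun g h => by simp only [LinearMap.comp_apply, hΦ, tr_of, mul_inv_rev, chi_mul_comm])
    (fun a ha => ⟨_, tr_eq_rank (a := Φ a) (by rw [IsIdempotentElem, ← hmul, ha.eq])⟩)
    (by
      have hnorm := sum_chi_mul_chi_inv i i
      rw [if_pos rfl, ← Equiv.sum_comp (Equiv.inv H)] at hnorm
      simpa only [LinearMap.comp_apply, hΦ, tr_of, Equiv.inv_apply] using hnorm)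
  exact ⟨j, fun h => by rw [hj, LinearMap.comp_apply, hΦ, tr_of]⟩

end IrreducibleCharacters

section ClassSums

theorem exists_rep_eq_smul_one (i : Fin W.n) {z : MonoidAlgebra ℂ H} (hz : ∀ a, a * z = z * a) :
    ∃ c : ℂ, W.rep i z = c • 1 := by
  have hcenter : W.rep i z ∈ Set.center _ := by
    rw [Semigroup.mem_center_iff]
    intro M
    obtain ⟨a, rfl⟩ := rep_surjective i M
    rw [← map_mul, ← map_mul, hz]
  rw [Matrix.center_eq_range] at hcenter
  obtain ⟨c, hc⟩ := hcenter
  exact ⟨c, by rw [← hc, Matrix.scalar_apply, Matrix.smul_one_eq_diagonal]⟩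

variable {K : Finset H}

theorem mul_sum_of_comm (hK : ∀ u ∈ K, ∀ g, g⁻¹ * u * g ∈ K) (a : MonoidAlgebra ℂ H) :
    a * ∑ u ∈ K, of ℂ H u = (∑ u ∈ K, of ℂ H u) * a := by
  have heq : LinearMap.mulRight ℂ (∑ u ∈ K, of ℂ H u) =
      LinearMap.mulLeft ℂ (∑ u ∈ K, of ℂ H u) := by
    ext g : 2
    change of ℂ H g * _ = _ * of ℂ H g
    simp only [Finset.mul_sum, Finset.sum_mul, ← map_mul]
    exact Finset.sum_bij' (fun u _ => g * u * g⁻¹) (fun u _ => g⁻¹ * u * g)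
      (fun u hu => by simpa using hK u hu g⁻¹) (fun u hu => hK u hu g)
      (fun u _ => by group) (fun u _ => by group) (fun u _ => by simp)
  exact LinearMap.congr_fun heq a

-- The class sum acts as a scalar in an irreducible representation, by Schur's lemma.
theorem degree_mul_sum_chi_mul {x : H} (hK : ∀ u ∈ K, ∀ g, g⁻¹ * u * g ∈ K)
    (hx : ∀ u ∈ K, ∃ g, u = g⁻¹ * x * g) (i : Fin W.n) :
    (W.degree i : ℂ) * ∑ u ∈ K, ∑ v ∈ K, W.chi i (u * v) = (K.card * W.chi i x) ^ 2 := by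
  set z : MonoidAlgebra ℂ H := ∑ u ∈ K, of ℂ H u with hz
  obtain ⟨c, hc⟩ := exists_rep_eq_smul_one i (mul_sum_of_comm hK)
  have hzz : ∑ u ∈ K, ∑ v ∈ K, W.chi i (u * v) = W.tr i (z * z) := by
    simp only [hz, Finset.sum_mul_sum, map_sum, chi, map_mul (of ℂ H)]
  have htrz : W.tr i z = K.card * W.chi i x := by
    rw [hz, map_sum, Finset.sum_congr rfl fun u hu => ?_, Finset.sum_const, nsmul_eq_mul]
    obtain ⟨g, rfl⟩ := hx u hu
    rw [tr_of, chi_conj']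
  rw [hzz, ← htrz, tr_apply, tr_apply, map_mul, hc]
  simp only [smul_mul_smul_comm, mul_one, Matrix.trace_smul, Matrix.trace_one, Fintype.card_fin,
    smul_eq_mul]
  ring

end ClassSums

end WedderburnDecomposition

section IsometryOrderFour

theorem inv_ne_self_of_orderOf_eq_four {G : Type*} [Group G] {v : G} (hv : orderOf v = 4) :
    v⁻¹ ≠ v := by
  intro h
  have hdvd : orderOf v ∣ 2 := orderOf_dvd_of_pow_eq_one (by rw [sq, ← inv_mul_cancel v, h])
  exact absurd (hv ▸ hdvd) (by decide)

theorem eq_or_eq_inv_of_mem_zpowers {G : Type*} [Group G] [Finite G] {g u v : G}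
    (hug : u ∈ Subgroup.zpowers g) (hvg : v ∈ Subgroup.zpowers g) (hu : orderOf u = 4)
    (hv : orderOf v = 4) : u = v ∨ u = v⁻¹ := by
  classical
  have := Fintype.ofFinite (Subgroup.zpowers g)
  lift u to Subgroup.zpowers g using hug
  lift v to Subgroup.zpowers g using hvg
  rw [Subgroup.orderOf_coe] at hu hv
  have hsub : {v, v⁻¹} ⊆ Finset.univ.filter fun a : Subgroup.zpowers g => orderOf a = 4 := by
    simp [Finset.insert_subset_iff, hv]
  have hcard : (Finset.univ.filter fun a : Subgroup.zpowers g => orderOf a = 4).card = 2 :=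
    IsCyclic.card_orderOf_eq_totient (hv ▸ orderOf_dvd_card)
  have heq := Finset.eq_of_subset_of_card_le hsub
    (by rw [hcard, Finset.card_pair (inv_ne_self_of_orderOf_eq_four hv).symm])
  have hmem : u ∈ ({v, v⁻¹} : Finset _) := by simp [heq, hu]
  rw [Finset.mem_insert, Finset.mem_singleton] at hmem
  exact hmem.imp (congrArg _) (congrArg _)

variable {G : Type*} [Group G]

namespace WedderburnDecomposition

/-- The multiplicity of the `i`-th irreducible character in the class function induced to `G` from
the restriction to `L` of a function `φ` on `G` vanishing outside `L`. -/
noncomputable def inducedCoeff [Fintype G] (W : WedderburnDecomposition G) (L : Subgroup G)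
    (φ : G → ℂ) (i : Fin W.n) : ℂ :=
  (Nat.card L : ℂ)⁻¹ * ∑ g, φ g⁻¹ * W.chi i g

variable {W : WedderburnDecomposition G}

theorem sum_inducedCoeff_mul_chi [Fintype G] (L : Subgroup G) (φ : G → ℂ) (y : G) :
    ∑ i, W.inducedCoeff L φ i * W.chi i y = (Nat.card L : ℂ)⁻¹ * ∑ h, φ (h * y * h⁻¹) := by
  classical
  simp only [inducedCoeff, mul_assoc, Finset.sum_mul]
  rw [← Finset.mul_sum, Finset.sum_comm]
  simp only [← Finset.mul_sum, sum_chi_mul_chi]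
  congr 1
  simp only [Finset.mul_sum]
  rw [Finset.sum_comm]
  refine Finset.sum_congr rfl fun h _ => ?_
  have hiff (g : G) : h⁻¹ * (g⁻¹ * h) = y ↔ h * (y⁻¹ * h⁻¹) = g := by
    rw [inv_mul_eq_iff_eq_mul, ← eq_mul_inv_iff_mul_eq, ← inv_inj, inv_inv, eq_comm]
    simp [mul_assoc]
  simp [mul_assoc, hiff]

end WedderburnDecomposition

variable {v w : G}

theorem conj_eq_or_eq_inv_of_ne_zero [Finite G] (hv : orderOf v = 4) {φ : G → ℂ}
    (hφ : ∀ g, φ g ≠ 0 → v ∈ Subgroup.zpowers g) {y h : G} (hvy : v ∈ Subgroup.zpowers y)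
    (hne : φ (h * y * h⁻¹) ≠ 0) : h * v * h⁻¹ = v ∨ h * v * h⁻¹ = v⁻¹ := by
  refine eq_or_eq_inv_of_mem_zpowers ?_ (hφ _ hne) ?_ hv
  · obtain ⟨k, rfl⟩ := hvy
    exact ⟨k, by simp⟩
  · rw [← hv]
    exact orderOf_injective (MulAut.conj h).toMonoidHom (MulAut.conj h).injective v

theorem sum_conj_eq_card_centralizer_mul [Fintype G] (hv : orderOf v = 4) (hw : w * v * w⁻¹ = v⁻¹)
    {φ : G → ℂ} (hφ : ∀ g, φ g ≠ 0 → v ∈ Subgroup.zpowers g)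
    (hφL : ∀ l ∈ Subgroup.centralizer {v}, ∀ g, φ (l * g * l⁻¹) = φ g) {y : G}
    (hvy : v ∈ Subgroup.zpowers y) :
    ∑ h, φ (h * y * h⁻¹) = Nat.card (Subgroup.centralizer {v}) * (φ y + φ (w * y * w⁻¹)) := by
  classical
  have hmem (l : G) : l ∈ Subgroup.centralizer {v} ↔ l * v * l⁻¹ = v := by
    rw [Subgroup.mem_centralizer_singleton_iff, mul_inv_eq_iff_eq_mul]
  have hmemw (h : G) : h * w⁻¹ ∈ Subgroup.centralizer {v} ↔ h * v * h⁻¹ = v⁻¹ := by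
    have hvw : w⁻¹ * v * w = v⁻¹ := by
      simpa [mul_assoc] using (congrArg (fun g => w⁻¹ * g⁻¹ * w) hw).symm
    have hmul : h * w⁻¹ * v * (h * w⁻¹)⁻¹ = (h * v * h⁻¹)⁻¹ := by
      calc h * w⁻¹ * v * (h * w⁻¹)⁻¹ = h * (w⁻¹ * v * w) * h⁻¹ := by group
        _ = (h * v * h⁻¹)⁻¹ := by rw [hvw]; group
    rw [hmem, hmul, inv_eq_iff_eq_inv]
  have hterm (h : G) : φ (h * y * h⁻¹) = (if h ∈ Subgroup.centralizer {v} then φ y else 0) +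
      if h * w⁻¹ ∈ Subgroup.centralizer {v} then φ (w * y * w⁻¹) else 0 := by
    by_cases h1 : h ∈ Subgroup.centralizer {v}
    · have h2 : h * w⁻¹ ∉ Subgroup.centralizer {v} := by
        rw [hmemw, (hmem h).1 h1]
        exact (inv_ne_self_of_orderOf_eq_four hv).symm
      rw [if_pos h1, if_neg h2, hφL h h1, add_zero]
    · by_cases h2 : h * w⁻¹ ∈ Subgroup.centralizer {v}
      · rw [if_neg h1, if_pos h2, zero_add, ← hφL _ h2 (w * y * w⁻¹)]
        simp [mul_assoc]
      · rw [if_neg h1, if_neg h2, add_zero]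
        by_contra hne
        rw [hmem] at h1
        rw [hmemw] at h2
        exact (conj_eq_or_eq_inv_of_ne_zero hv hφ hvy hne).elim h1 h2
  have hcount (c : ℂ) : ∑ h : G, (if h ∈ Subgroup.centralizer {v} then c else 0) =
      Nat.card (Subgroup.centralizer {v}) * c := by
    rw [← Finset.sum_filter, Finset.sum_const, nsmul_eq_mul, ← Fintype.card_subtype,
      Nat.card_eq_fintype_card]
  have hcountw (c : ℂ) : ∑ h : G, (if h * w⁻¹ ∈ Subgroup.centralizer {v} then c else 0) =
      Nat.card (Subgroup.centralizer {v}) * c :=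
    (Equiv.sum_comp (Equiv.mulRight w⁻¹) _).trans (hcount c)
  rw [Finset.sum_congr rfl fun h _ => hterm h, Finset.sum_add_distrib, hcount, hcountw, mul_add]

open WedderburnDecomposition in
theorem sum_inducedCoeff_mul_inducedCoeff [Fintype G] {W : WedderburnDecomposition G}
    (hv : orderOf v = 4) (hw : w * v * w⁻¹ = v⁻¹) {φ ψ : G → ℂ}
    (hφ : ∀ g, φ g ≠ 0 → v ∈ Subgroup.zpowers g)
    (hψ : ∀ g, ψ g ≠ 0 → v ∈ Subgroup.zpowers g)
    (hφL : ∀ l ∈ Subgroup.centralizer {v}, ∀ g, φ (l * g * l⁻¹) = φ g) :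
    ∑ i, W.inducedCoeff (Subgroup.centralizer {v}) φ i *
        W.inducedCoeff (Subgroup.centralizer {v}) ψ i =
      (Nat.card (Subgroup.centralizer {v}) : ℂ)⁻¹ *
        ∑ y, ψ y⁻¹ * (φ y + φ (w * y * w⁻¹)) := by
  set L := Subgroup.centralizer {v}
  have hL : (Nat.card L : ℂ) ≠ 0 := Nat.cast_ne_zero.2 Nat.card_pos.ne'
  calc ∑ i, W.inducedCoeff L φ i * W.inducedCoeff L ψ i
      = (Nat.card L : ℂ)⁻¹ * ∑ y, ψ y⁻¹ * ∑ i, W.inducedCoeff L φ i * W.chi i y := by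
        simp only [Finset.mul_sum]
        rw [Finset.sum_comm]
        refine Finset.sum_congr rfl fun i _ => ?_
        rw [inducedCoeff.eq_1 W L ψ, mul_left_comm, Finset.mul_sum, Finset.mul_sum]
        exact Finset.sum_congr rfl fun y _ => by ring
    _ = (Nat.card L : ℂ)⁻¹ * ∑ y, ψ y⁻¹ * (φ y + φ (w * y * w⁻¹)) := by
        congr 1
        refine Finset.sum_congr rfl fun y _ => ?_
        by_cases hy : ψ y⁻¹ = 0
        · simp [hy]
        have hvy : v ∈ Subgroup.zpowers y := by simpa using hψ _ hy
        rw [sum_inducedCoeff_mul_chi, sum_conj_eq_card_centralizer_mul hv hw hφ hφL hvy,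
          inv_mul_cancel_left₀ hL]

end IsometryOrderFour

section IntegerVectorsOfNormFour

theorem eq_zero_of_sq_sub_eq {a b m n : ℤ} (ha : Even a) (hb : Even b) (hm : m ≡ a - 1 [ZMOD 4])
    (hn : n ≡ b - 1 [ZMOD 4]) (h : (b * m - a * n) ^ 2 = a ^ 2 * n + b ^ 2 * m) :
    a = 0 ∧ b = 0 := by
  by_contra hab
  rw [← Int.gcd_eq_zero_iff] at hab
  obtain ⟨s, hs⟩ : 2 ∣ (Int.gcd a b : ℤ) := Int.dvd_coe_gcd ha.two_dvd hb.two_dvd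
  have hg : (Int.gcd a b : ℤ) ≠ 0 := Int.natCast_ne_zero.2 hab
  obtain ⟨a', b', hcop, ha', hb'⟩ := Int.exists_gcd_one (Nat.pos_of_ne_zero hab)
  generalize (Int.gcd a b : ℤ) = g at hs hg ha' hb'
  subst ha' hb'
  have hreduced : (b' * m - a' * n) ^ 2 = a' ^ 2 * n + b' ^ 2 * m :=
    mul_left_cancel₀ (pow_ne_zero 2 hg) (by linear_combination h)
  have hm4 : (m : ZMod 4) = 2 * (s * a') - 1 := by
    rw [(ZMod.intCast_eq_intCast_iff _ _ _).2 hm, hs]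
    push_cast
    ring
  have hn4 : (n : ZMod 4) = 2 * (s * b') - 1 := by
    rw [(ZMod.intCast_eq_intCast_iff _ _ _).2 hn, hs]
    push_cast
    ring
  have heven (c : ℤ) (hc : 2 * (c : ZMod 4) = 0) : 2 ∣ c := by
    have : ((2 * c : ℤ) : ZMod 4) = 0 := by exact_mod_cast hc
    rw [ZMod.intCast_zmod_eq_zero_iff_dvd] at this
    omega
  have hodd : ¬(2 * (a' : ZMod 4) = 0 ∧ 2 * (b' : ZMod 4) = 0) := fun ⟨h1, h2⟩ =>
    absurd (hcop ▸ Int.dvd_coe_gcd (heven a' h1) (heven b' h2)) (by decide)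
  have hmod := congrArg (Int.cast : ℤ → ZMod 4) hreduced
  push_cast at hmod
  rw [hm4, hn4] at hmod
  have hcheck : ∀ α β σ : ZMod 4, ¬(2 * α = 0 ∧ 2 * β = 0) →
      (β * (2 * (σ * α) - 1) - α * (2 * (σ * β) - 1)) ^ 2 ≠
        α ^ 2 * (2 * (σ * β) - 1) + β ^ 2 * (2 * (σ * α) - 1) := by
    decide
  exact hcheck _ _ _ hodd hmod

variable {ι : Type*} [Fintype ι]

theorem exists_finset_of_sum_sq_eq {c : ι → ℤ} {i₀ : ι} {N : ℕ} (hN : N ≤ 3) (hc : c i₀ = 1)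
    (hs : ∑ i, c i ^ 2 = N + 1) :
    ∃ P M : Finset ι, P.card + M.card = N ∧ (∀ i ∈ P, i ≠ i₀ ∧ c i = 1) ∧
      (∀ i ∈ M, i ≠ i₀ ∧ c i = -1) ∧ ∀ i, i ≠ i₀ → i ∉ P → i ∉ M → c i = 0 := by
  classical
  set R := Finset.univ.erase i₀
  have hR : ∑ i ∈ R, c i ^ 2 = N := by
    have := Finset.add_sum_erase Finset.univ (fun i => c i ^ 2) (Finset.mem_univ i₀)
    simp only [hs, hc] at this
    linarith
  have hval (i : ι) (hi : i ∈ R) : c i = 0 ∨ c i = 1 ∨ c i = -1 := by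
    have hle : c i ^ 2 ≤ N := hR ▸ Finset.single_le_sum (f := fun i => c i ^ 2)
      (fun _ _ => sq_nonneg _) hi
    have h1 : c i ≤ 1 := by nlinarith
    have h2 : -1 ≤ c i := by nlinarith
    omega
  refine ⟨R.filter (c · = 1), R.filter (c · = -1), ?_, by simp [R], by simp [R], ?_⟩
  · rw [Finset.card_filter, Finset.card_filter, ← Finset.sum_add_distrib]
    zify
    rw [← hR]
    refine Finset.sum_congr rfl fun i hi => ?_
    rcases hval i hi with h | h | h <;> simp [h]
  · intro i hi hP hM
    have hiR : i ∈ R := by simp [R, hi]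
    rw [Finset.mem_filter, not_and] at hP hM
    exact (hval i hiR).resolve_right (not_or.2 ⟨hP hiR, hM hiR⟩)

variable {k : Type*} [Field k]

theorem sum_intCast_mul_eq {c : ι → ℤ} {i₀ : ι} {P M : Finset ι} (hc : c i₀ = 1)
    (hP : ∀ i ∈ P, i ≠ i₀ ∧ c i = 1) (hM : ∀ i ∈ M, i ≠ i₀ ∧ c i = -1)
    (h0 : ∀ i, i ≠ i₀ → i ∉ P → i ∉ M → c i = 0) (F : ι → k) :
    ∑ i, (c i : k) * F i = F i₀ + ∑ i ∈ P, F i - ∑ i ∈ M, F i := by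
  classical
  have hdisj : Disjoint P M := Finset.disjoint_left.2 fun i hi hi' => by
    have := (hP i hi).2.symm.trans (hM i hi').2
    omega
  have hi₀ : i₀ ∉ P ∪ M := by
    rw [Finset.mem_union]
    exact fun h => h.elim (fun h => (hP _ h).1 rfl) fun h => (hM _ h).1 rfl
  have hsupp (i : ι) (hi : i ∉ insert i₀ (P ∪ M)) : (c i : k) * F i = 0 := by
    simp only [Finset.mem_insert, Finset.mem_union, not_or] at hi
    simp [h0 i hi.1 hi.2.1 hi.2.2]
  have hPsum : ∑ i ∈ P, (c i : k) * F i = ∑ i ∈ P, F i :=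
    Finset.sum_congr rfl fun i hi => by simp [(hP i hi).2]
  have hMsum : ∑ i ∈ M, (c i : k) * F i = -∑ i ∈ M, F i := by
    rw [← Finset.sum_neg_distrib]
    exact Finset.sum_congr rfl fun i hi => by simp [(hM i hi).2]
  rw [← Finset.sum_subset (Finset.subset_univ _) fun i _ => hsupp i, Finset.sum_insert hi₀,
    Finset.sum_union hdisj, hPsum, hMsum, hc]
  push_cast
  ring

variable [LinearOrder k] [IsStrictOrderedRing k] {c : ι → ℤ} {f b : ι → k} {i₀ : ι}

theorem exists_balanced_finset {N : ℕ} (hN : N ≤ 3) (hc : c i₀ = 1) (hs : ∑ i, c i ^ 2 = N + 1)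
    (hf : ∀ i, 0 < f i) (hf₀ : f i₀ = 1) (hb₀ : b i₀ = 0) (hb : ∀ i, i ≠ i₀ → 0 < b i)
    (hcf : ∑ i, (c i : k) * f i = 0) (hcb : ∑ i, (c i : k) * b i = 0)
    (hcbf : ∑ i, (c i : k) * (b i ^ 2 / f i) = 0) :
    ∃ P M : Finset ι, P.card + M.card = N ∧ P.Nonempty ∧ M.Nonempty ∧
      (∀ i ∈ P, i ≠ i₀ ∧ c i = 1) ∧ (∀ i ∈ M, i ≠ i₀ ∧ c i = -1) ∧
      (∀ i, i ≠ i₀ → i ∉ P → i ∉ M → c i = 0) ∧ 1 + ∑ i ∈ P, f i = ∑ i ∈ M, f i ∧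
      ∑ i ∈ P, b i = ∑ i ∈ M, b i ∧ ∑ i ∈ P, b i ^ 2 / f i = ∑ i ∈ M, b i ^ 2 / f i := by
  obtain ⟨P, M, hPM, hP, hM, h0⟩ := exists_finset_of_sum_sq_eq hN hc hs
  simp only [sum_intCast_mul_eq hc hP hM h0, hb₀, hf₀, ne_eq, OfNat.ofNat_ne_zero,
    not_false_eq_true, zero_pow, zero_div, zero_add, sub_eq_zero] at hcf hcb hcbf
  have hMne : M.Nonempty := by
    by_contra h
    rw [Finset.not_nonempty_iff_eq_empty.1 h, Finset.sum_empty] at hcf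
    linarith [Finset.sum_nonneg fun i (_ : i ∈ P) => (hf i).le]
  have hPne : P.Nonempty := by
    by_contra h
    rw [Finset.not_nonempty_iff_eq_empty.1 h, Finset.sum_empty] at hcb
    exact (Finset.sum_pos (fun i hi => hb i (hM i hi).1) hMne).ne hcb
  exact ⟨P, M, hPM, hPne, hMne, hP, hM, h0, hcf, hcb, hcbf⟩

theorem sum_sq_ne_three (hc : c i₀ = 1) (hf : ∀ i, 0 < f i) (hf₀ : f i₀ = 1) (hb₀ : b i₀ = 0)
    (hb : ∀ i, i ≠ i₀ → 0 < b i) (hcf : ∑ i, (c i : k) * f i = 0)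
    (hcb : ∑ i, (c i : k) * b i = 0) (hcbf : ∑ i, (c i : k) * (b i ^ 2 / f i) = 0) :
    ∑ i, c i ^ 2 ≠ 3 := by
  intro hs
  obtain ⟨P, M, hPM, hPne, hMne, hP, hM, -, hf_eq, hb_eq, hbf_eq⟩ :=
    exists_balanced_finset (N := 2) (by norm_num) hc hs hf hf₀ hb₀ hb hcf hcb hcbf
  have hP1 := hPne.card_pos
  have hM1 := hMne.card_pos
  obtain ⟨i, rfl⟩ := Finset.card_eq_one.1 (by omega : P.card = 1)
  obtain ⟨j, rfl⟩ := Finset.card_eq_one.1 (by omega : M.card = 1)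
  simp only [Finset.sum_singleton] at hf_eq hb_eq hbf_eq
  have hbi := hb i (hP i (by simp)).1
  rw [← hb_eq, div_eq_div_iff (hf i).ne' (hf j).ne'] at hbf_eq
  linarith [mul_left_cancel₀ (pow_pos hbi 2).ne' hbf_eq]

theorem sq_div_add_sq_div_ne {f₁ f₂ b₁ b₂ : k} (hf₁ : 0 < f₁) (hf₂ : 0 < f₂) (hb₁ : 0 < b₁) :
    b₁ ^ 2 / f₁ + b₂ ^ 2 / f₂ ≠ (b₁ + b₂) ^ 2 / (1 + (f₁ + f₂)) := by
  intro h
  rw [div_add_div _ _ hf₁.ne' hf₂.ne', div_eq_div_iff (by positivity) (by positivity)] at h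
  have hpos : 0 < b₁ ^ 2 * f₂ := by positivity
  nlinarith [sq_nonneg (b₂ * f₁ - b₁ * f₂), mul_nonneg (sq_nonneg b₂) hf₁.le]

theorem exists_of_sum_sq_eq_four (hc : c i₀ = 1) (hs : ∑ i, c i ^ 2 = 4) (hf : ∀ i, 0 < f i)
    (hf₀ : f i₀ = 1) (hb₀ : b i₀ = 0) (hb : ∀ i, i ≠ i₀ → 0 < b i)
    (hcf : ∑ i, (c i : k) * f i = 0) (hcb : ∑ i, (c i : k) * b i = 0)
    (hcbf : ∑ i, (c i : k) * (b i ^ 2 / f i) = 0) :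
    ∃ i j l, i ≠ j ∧ i ≠ i₀ ∧ j ≠ i₀ ∧ l ≠ i₀ ∧ c i = -1 ∧ c j = -1 ∧ c l = 1 ∧
      (∀ m, m ≠ i₀ → m ≠ i → m ≠ j → m ≠ l → c m = 0) ∧
      (b j * f i - b i * f j) ^ 2 = b i ^ 2 * f j + b j ^ 2 * f i := by
  classical
  obtain ⟨P, M, hPM, hPne, hMne, hP, hM, h0, hf_eq, hb_eq, hbf_eq⟩ :=
    exists_balanced_finset (N := 3) (by norm_num) hc hs hf hf₀ hb₀ hb hcf hcb hcbf
  have hP1 := hPne.card_pos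
  have hM1 := hMne.card_pos
  obtain ⟨hP2, hM2⟩ | ⟨hP2, hM2⟩ : (P.card = 2 ∧ M.card = 1) ∨ (P.card = 1 ∧ M.card = 2) := by
    omega
  · obtain ⟨i, j, hij, rfl⟩ := Finset.card_eq_two.1 hP2
    obtain ⟨l, rfl⟩ := Finset.card_eq_one.1 hM2
    simp only [Finset.sum_singleton, Finset.sum_pair hij] at hf_eq hb_eq hbf_eq
    rw [← hf_eq, ← hb_eq] at hbf_eq
    exact absurd hbf_eq (sq_div_add_sq_div_ne (hf i) (hf j) (hb i (hP i (by simp)).1))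
  · obtain ⟨l, rfl⟩ := Finset.card_eq_one.1 hP2
    obtain ⟨i, j, hij, rfl⟩ := Finset.card_eq_two.1 hM2
    simp only [Finset.sum_singleton, Finset.sum_pair hij] at hf_eq hb_eq hbf_eq
    have hMi := hM i (by simp)
    have hMj := hM j (by simp)
    have hPl := hP l (by simp)
    refine ⟨i, j, l, hij, hMi.1, hMj.1, hPl.1, hMi.2, hMj.2, hPl.2,
      fun m h1 h2 h3 h4 => h0 m h1 (by simpa using h4) (by simp [h2, h3]), ?_⟩
    rw [div_add_div _ _ (hf i).ne' (hf j).ne',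
      div_eq_div_iff (hf l).ne' (mul_pos (hf i) (hf j)).ne', hb_eq,
      eq_sub_of_add_eq' hf_eq] at hbf_eq
    linear_combination -hbf_eq

end IntegerVectorsOfNormFour

section InvolutionsAndOrderFour

variable {G : Type*} [Group G]

/-- For `v ^ 4 = 1` and `a ^ 4 = 1`, the idempotent of `ℂ[G]` projecting onto the eigenspace of `v`
for the eigenvalue `a⁻¹`. -/
noncomputable def eigenIdempotent (v : G) (a : ℂ) : MonoidAlgebra ℂ G :=
  (1 / 4 : ℂ) • ∑ n ∈ Finset.range 4, a ^ n • of ℂ G (v ^ n)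

variable {v w : G} {a b : ℂ}

theorem of_mul_eigenIdempotent (hv : v ^ 4 = 1) (ha : a ^ 4 = 1) :
    of ℂ G v * eigenIdempotent v a = a ^ 3 • eigenIdempotent v a := by
  have hshift : ∑ n ∈ Finset.range 4, a ^ (n + 1) • of ℂ G (v ^ (n + 1)) =
      ∑ n ∈ Finset.range 4, a ^ n • of ℂ G (v ^ n) := by
    have h := Finset.sum_range_succ' (fun n => a ^ n • of ℂ G (v ^ n)) 4
    rw [Finset.sum_range_succ, ha, hv, pow_zero, pow_zero] at h
    exact (add_right_cancel h).symm
  have heig : a • (of ℂ G v * eigenIdempotent v a) = eigenIdempotent v a := by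
    rw [eigenIdempotent, mul_smul_comm, smul_comm, Finset.mul_sum, Finset.smul_sum]
    simp only [mul_smul_comm, ← map_mul, ← pow_succ', smul_smul, hshift]
  rw [← heig, smul_smul, ← pow_succ, ha, one_smul, heig]

theorem eigenIdempotent_mul (hv : v ^ 4 = 1) (hb : b ^ 4 = 1) :
    eigenIdempotent v a * eigenIdempotent v b =
      ((1 / 4 : ℂ) * ∑ n ∈ Finset.range 4, (a * b ^ 3) ^ n) • eigenIdempotent v b := by
  have hpow (n : ℕ) : of ℂ G (v ^ n) * eigenIdempotent v b = (b ^ 3) ^ n • eigenIdempotent v b := by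
    induction n with
    | zero => rw [pow_zero, map_one, one_mul, pow_zero, one_smul]
    | succ n ih =>
      rw [pow_succ v, map_mul, mul_assoc, of_mul_eigenIdempotent hv hb, mul_smul_comm, ih,
        smul_smul, ← pow_succ']
  rw [eigenIdempotent.eq_1 v a, smul_mul_assoc, Finset.sum_mul, mul_smul, Finset.sum_smul]
  simp only [smul_mul_assoc, hpow, smul_smul, mul_pow]

theorem isIdempotentElem_eigenIdempotent (hv : v ^ 4 = 1) (ha : a ^ 4 = 1) :
    IsIdempotentElem (eigenIdempotent v a) := by
  rw [IsIdempotentElem, eigenIdempotent_mul hv ha, ← pow_succ', ha]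
  norm_num

theorem eigenIdempotent_mul_eq_zero (hv : v ^ 4 = 1) (hb : b ^ 4 = 1) (ha : a ^ 4 = 1)
    (hab : a * b ^ 3 ≠ 1) : eigenIdempotent v a * eigenIdempotent v b = 0 := by
  rw [eigenIdempotent_mul hv hb, geom_sum_eq hab, mul_pow, ha, ← pow_mul, mul_comm 3, pow_mul, hb]
  simp

theorem eigenIdempotent_one_sub_eigenIdempotent_neg_one (v : G) :
    eigenIdempotent v 1 - eigenIdempotent v (-1) = (1 / 2 : ℂ) • (of ℂ G v + of ℂ G (v ^ 3)) := by
  have h3 : (-1 : ℂ) ^ 3 = -1 := by norm_num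
  simp only [eigenIdempotent, Finset.sum_range_succ, Finset.sum_range_zero, pow_zero, pow_one,
    one_pow, neg_one_sq, h3]
  module

theorem eigenIdempotent_I_add_eigenIdempotent_neg_I (v : G) :
    eigenIdempotent v Complex.I + eigenIdempotent v (-Complex.I) =
      (1 / 2 : ℂ) • (1 - of ℂ G (v ^ 2)) := by
  simp only [eigenIdempotent, Finset.sum_range_succ, Finset.sum_range_zero, pow_zero, pow_one,
    map_one, neg_pow Complex.I, Complex.I_sq]
  module

open Complex in
theorem of_eq_prod_one_add_smul_eigenIdempotent (hv : v ^ 4 = 1) :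
    of ℂ G v = (1 + (-2 : ℂ) • eigenIdempotent v (-1)) *
      ((1 + (I - 1) • eigenIdempotent v (-I)) * (1 + (-I - 1) • eigenIdempotent v I)) := by
  have hmul (a b : ℂ) (ha : a ^ 4 = 1) (hb : b ^ 4 = 1) (hab : a * b ^ 3 ≠ 1) :
      eigenIdempotent v a * eigenIdempotent v b = 0 :=
    eigenIdempotent_mul_eq_zero hv hb ha hab
  have hI : (-I) ^ 4 = 1 := by rw [Even.neg_pow (by decide), I_pow_four]
  have hI3 : I ^ 3 = -I := I_pow_three
  have hne (c : ℂ) (hc : c.re ≠ 1) : c ≠ 1 := fun h => hc (by rw [h, one_re])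
  have h12 : eigenIdempotent v (-1) * eigenIdempotent v (-I) = 0 :=
    hmul _ _ (by norm_num) hI (hne _ (by simp [Odd.neg_pow (by decide : Odd 3), hI3]))
  have h13 : eigenIdempotent v (-1) * eigenIdempotent v I = 0 :=
    hmul _ _ (by norm_num) I_pow_four (hne _ (by simp [hI3]))
  have h23 : eigenIdempotent v (-I) * eigenIdempotent v I = 0 :=
    hmul _ _ hI I_pow_four (hne _ (by norm_num [hI3]))
  simp only [mul_add, add_mul, one_mul, mul_one, smul_mul_smul_comm, h12, h13, h23, smul_zero,
    add_zero]
  simp only [eigenIdempotent, Finset.sum_range_succ, Finset.sum_range_zero, pow_zero, pow_one,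
    map_one, neg_pow I, I_sq, hI3]
  match_scalars <;> ring_nf <;> norm_num [I_sq]

namespace WedderburnDecomposition

variable (W : WedderburnDecomposition G)

/-- The multiplicity of the eigenvalue `-1` of an involution `x` in the `i`-th irreducible
representation. -/
noncomputable def negOneMult (x : G) (i : Fin W.n) : ℕ :=
  (W.rep i ((1 / 2 : ℂ) • (1 - of ℂ G x))).rank

variable {W} {x : G}

theorem isIdempotentElem_half_one_sub (hx : x * x = 1) :
    IsIdempotentElem ((1 / 2 : ℂ) • (1 - of ℂ G x)) := by
  have hx' : of ℂ G x * of ℂ G x = 1 := by rw [← map_mul, hx, map_one]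
  simp only [IsIdempotentElem, smul_mul_smul_comm, mul_sub, sub_mul, one_mul, mul_one, hx']
  module

theorem chi_eq_degree_sub_two_mul_negOneMult (hx : x * x = 1) (i : Fin W.n) :
    W.chi i x = W.degree i - 2 * W.negOneMult x i := by
  rw [negOneMult, ← tr_eq_rank (isIdempotentElem_half_one_sub hx), map_smul, map_sub, tr_one,
    tr_of, smul_eq_mul]
  ring

theorem det_rep_of_eq_neg_one_pow (hx : x * x = 1) (i : Fin W.n) :
    (W.rep i (of ℂ G x)).det = (-1) ^ W.negOneMult x i := by
  have hof : of ℂ G x = 1 + (-2 : ℂ) • (1 / 2 : ℂ) • (1 - of ℂ G x) := by module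
  rw [hof, det_rep_one_add_smul (isIdempotentElem_half_one_sub hx)]
  norm_num [negOneMult]

theorem rep_of_eq_one_of_negOneMult_eq_zero {i : Fin W.n} (h : W.negOneMult x i = 0) :
    W.rep i (of ℂ G x) = 1 := by
  rw [negOneMult, Matrix.rank, Submodule.finrank_eq_zero, LinearMap.range_eq_bot] at h
  have hzero := Matrix.toLin'.map_eq_zero_iff.1 h
  rw [map_smul, map_sub, map_one, smul_eq_zero] at hzero
  exact (sub_eq_zero.1 (hzero.resolve_left (by norm_num))).symm

theorem tr_eigenIdempotent (i : Fin W.n) (v : G) (a : ℂ) :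
    W.tr i (eigenIdempotent v a) = (1 / 4) * ∑ n ∈ Finset.range 4, a ^ n * W.chi i (v ^ n) := by
  simp only [eigenIdempotent, map_smul, map_sum, tr_of, smul_eq_mul]

theorem chi_pow_three_eq (hv : v ^ 4 = 1) (hw : w * v * w⁻¹ = v⁻¹) (i : Fin W.n) :
    W.chi i (v ^ 3) = W.chi i v := by
  rw [← chi_conj i w v, hw, inv_eq_of_mul_eq_one_right (by rw [← pow_succ', hv])]

theorem negOneMult_mul_self (hv : v ^ 4 = 1) (hw : w * v * w⁻¹ = v⁻¹) (i : Fin W.n) :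
    (W.rep i (eigenIdempotent v Complex.I)).rank = (W.rep i (eigenIdempotent v (-Complex.I))).rank ∧
      W.negOneMult (v * v) i = 2 * (W.rep i (eigenIdempotent v Complex.I)).rank := by
  have hI : (-Complex.I) ^ 4 = 1 := by rw [Even.neg_pow (by decide), Complex.I_pow_four]
  have hvv : v * v * (v * v) = 1 := by rw [← hv, ← pow_two, ← pow_two, ← pow_mul]
  have hsum := congrArg (W.tr i) (eigenIdempotent_I_add_eigenIdempotent_neg_I v)
  have hrank : (W.rep i (eigenIdempotent v Complex.I)).rank =
      (W.rep i (eigenIdempotent v (-Complex.I))).rank := by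
    have : W.tr i (eigenIdempotent v Complex.I) = W.tr i (eigenIdempotent v (-Complex.I)) := by
      simp only [tr_eigenIdempotent, Finset.sum_range_succ, Finset.sum_range_zero, pow_one,
        chi_pow_three_eq hv hw, neg_pow Complex.I, Complex.I_pow_three]
      ring
    rw [tr_eq_rank (isIdempotentElem_eigenIdempotent hv Complex.I_pow_four),
      tr_eq_rank (isIdempotentElem_eigenIdempotent hv hI)] at this
    exact_mod_cast this
  refine ⟨hrank, ?_⟩
  rw [map_add, tr_eq_rank (isIdempotentElem_eigenIdempotent hv Complex.I_pow_four),
    tr_eq_rank (isIdempotentElem_eigenIdempotent hv hI), sq,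
    tr_eq_rank (isIdempotentElem_half_one_sub hvv), ← hrank, ← two_mul] at hsum
  exact_mod_cast hsum.symm

open Complex in
theorem det_rep_of_eq (hv : v ^ 4 = 1) (hw : w * v * w⁻¹ = v⁻¹) (i : Fin W.n) :
    (W.rep i (of ℂ G v)).det = (-1) ^ (W.rep i (eigenIdempotent v (-1))).rank := by
  have hI : (-I) ^ 4 = 1 := by rw [Even.neg_pow (by decide), I_pow_four]
  have hII : (1 + (I - 1)) * (1 + (-I - 1)) = 1 := by linear_combination -I_sq
  rw [of_eq_prod_one_add_smul_eigenIdempotent hv, map_mul, map_mul, Matrix.det_mul, Matrix.det_mul,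
    det_rep_one_add_smul (isIdempotentElem_eigenIdempotent hv (by norm_num)),
    det_rep_one_add_smul (isIdempotentElem_eigenIdempotent hv hI),
    det_rep_one_add_smul (isIdempotentElem_eigenIdempotent hv I_pow_four),
    (negOneMult_mul_self hv hw i).1, ← mul_pow, hII, one_pow, mul_one]
  norm_num

theorem exists_chi_eq_of_det_eq_one (hv : v ^ 4 = 1) (hw : w * v * w⁻¹ = v⁻¹) {i : Fin W.n}
    (hdet : (W.rep i (of ℂ G v)).det = 1) :
    ∃ q : ℤ, W.chi i v = W.degree i - W.negOneMult (v * v) i - 4 * q := by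
  rw [det_rep_of_eq hv hw, neg_one_pow_eq_one_iff_even (by norm_num)] at hdet
  obtain ⟨q, hq⟩ := hdet
  have hvv : v * v * (v * v) = 1 := by rw [← hv, ← pow_two, ← pow_two, ← pow_mul]
  have htr := tr_eigenIdempotent (W := W) i v (-1)
  rw [tr_eq_rank (isIdempotentElem_eigenIdempotent hv (by norm_num)), hq] at htr
  simp only [Finset.sum_range_succ, Finset.sum_range_zero, pow_zero, pow_one, chi_one, sq,
    chi_pow_three_eq hv hw, chi_eq_degree_sub_two_mul_negOneMult hvv] at htr
  refine ⟨q, ?_⟩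
  push_cast at htr ⊢
  linear_combination 2 * htr

end WedderburnDecomposition

end InvolutionsAndOrderFour

section TrivialCharacter

namespace WedderburnDecomposition

variable {G : Type*} [Group G] {W : WedderburnDecomposition G} {i₀ : Fin W.n}

theorem degree_eq_one_of_chi_eq_one (h₀ : ∀ g, W.chi i₀ g = 1) : W.degree i₀ = 1 := by
  have h := h₀ 1
  rw [chi_one] at h
  exact_mod_cast h

theorem negOneMult_eq_zero_of_chi_eq_one (h₀ : ∀ g, W.chi i₀ g = 1) {x : G} (hx : x * x = 1) :
    W.negOneMult x i₀ = 0 := by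
  have h := chi_eq_degree_sub_two_mul_negOneMult hx i₀
  rw [h₀, degree_eq_one_of_chi_eq_one h₀] at h
  have h' : (W.negOneMult x i₀ : ℂ) = 0 := by push_cast at h; linear_combination (1 / 2) * h
  exact_mod_cast h'

theorem eq_of_chi_eq_degree [Finite G] (h₀ : ∀ g, W.chi i₀ g = 1) {i : Fin W.n}
    (hi : ∀ g, W.chi i g = W.degree i) : i = i₀ := by
  have := Fintype.ofFinite G
  by_contra hne
  have horth := sum_chi_mul_chi_inv i i₀
  simp only [if_neg hne, hi, h₀, mul_one, Finset.sum_const, Finset.card_univ, nsmul_eq_mul]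
    at horth
  exact mul_ne_zero (Nat.cast_ne_zero.2 Fintype.card_ne_zero) (degree_cast_ne_zero i) horth

end WedderburnDecomposition

end TrivialCharacter

theorem eq_zero_of_pow_eq_one {G : Type*} [Group G] {v : G} (hv : orderOf v = 4) {φ : G → ℂ}
    (hφ : ∀ g, φ g ≠ 0 → v ∈ Subgroup.zpowers g) {y : G} {n : ℕ} (hy : y ^ n = 1)
    (hn : ¬ 4 ∣ n) : φ y = 0 := by
  by_contra h
  obtain ⟨k, rfl⟩ := hφ y h
  refine hn (hv ▸ orderOf_dvd_of_pow_eq_one ?_)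
  change (y ^ k) ^ n = 1
  rw [← zpow_natCast, ← zpow_mul, mul_comm, zpow_mul, zpow_natCast, hy, one_zpow]

theorem WedderburnDecomposition.sum_inducedCoeff_mul_chi_eq_zero {G : Type*} [Group G] [Fintype G]
    {W : WedderburnDecomposition G} (L : Subgroup G) {v : G} (hv : orderOf v = 4) {φ : G → ℂ}
    (hφ : ∀ g, φ g ≠ 0 → v ∈ Subgroup.zpowers g) {y : G} {n : ℕ} (hy : y ^ n = 1)
    (hn : ¬ 4 ∣ n) : ∑ i, W.inducedCoeff L φ i * W.chi i y = 0 := by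
  rw [sum_inducedCoeff_mul_chi, Finset.sum_eq_zero, mul_zero]
  intro h _
  exact eq_zero_of_pow_eq_one hv hφ (by rw [conj_pow, hy, mul_one, mul_inv_cancel]) hn

section InvertedRootClass

/-- `K` is a conjugacy class of `G`, with representative `x`, that generates `G` and in which any
two elements have a product of order dividing the odd number `p`; moreover `x` is the square of an
element `v` of order four which is inverted by `w`. The group `⟨v, w⟩` then involves a quaternion
group, and the point of the notion is to show that under suitable conditions it is contradictory. -/
structure InvertedRootClass {G : Type*} [Group G] (K : Finset G) (x v w : G) (p : ℕ) : Prop where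
  conj_mem : ∀ u ∈ K, ∀ g, g⁻¹ * u * g ∈ K
  exists_eq_conj : ∀ u ∈ K, ∃ g, u = g⁻¹ * x * g
  mem : x ∈ K
  closure_eq_top : Subgroup.closure (K : Set G) = ⊤
  odd : Odd p
  mul_pow_eq_one : ∀ u ∈ K, ∀ u' ∈ K, (u * u') ^ p = 1
  orderOf_eq_four : orderOf v = 4
  mul_self_eq : v * v = x
  conj_eq_inv : w * v * w⁻¹ = v⁻¹

namespace InvertedRootClass

variable {G : Type*} [Group G] {K : Finset G} {x v w : G} {p : ℕ}

theorem pow_four_eq_one (Q : InvertedRootClass K x v w p) : v ^ 4 = 1 :=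
  Q.orderOf_eq_four ▸ pow_orderOf_eq_one v

theorem mul_self_eq_one (Q : InvertedRootClass K x v w p) : x * x = 1 := by
  rw [← Q.mul_self_eq, ← Q.pow_four_eq_one, ← pow_two, ← pow_two, ← pow_mul]

theorem map_eq_one (Q : InvertedRootClass K x v w p) {M : Type*} [Monoid M] {f : G →* M}
    (hf : f x = 1) (g : G) : f g = 1 := by
  have hker : (⊤ : Subgroup G) ≤ f.ker := by
    rw [← Q.closure_eq_top, Subgroup.closure_le]
    intro u hu
    obtain ⟨g, rfl⟩ := Q.exists_eq_conj u hu
    rw [SetLike.mem_coe, MonoidHom.mem_ker, map_mul, map_mul, hf, mul_one, ← map_mul,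
      inv_mul_cancel, map_one]
  exact hker (Subgroup.mem_top g)

open WedderburnDecomposition

variable {W : WedderburnDecomposition G}

theorem even_negOneMult (Q : InvertedRootClass K x v w p) (i : Fin W.n) :
    Even (W.negOneMult x i) := by
  rw [← Q.mul_self_eq, (negOneMult_mul_self Q.pow_four_eq_one Q.conj_eq_inv i).2]
  exact even_two_mul _

theorem exists_chi_eq (Q : InvertedRootClass K x v w p) (i : Fin W.n) :
    ∃ q : ℤ, W.chi i v = W.degree i - W.negOneMult x i - 4 * q := by
  let det : G →* ℂ :=
    Matrix.detMonoidHom.comp ((MonoidHomClass.toMonoidHom (W.rep i)).comp (of ℂ G))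
  have hx : det x = 1 := (det_rep_of_eq_neg_one_pow Q.mul_self_eq_one i).trans
    (Q.even_negOneMult i).neg_one_pow
  rw [← Q.mul_self_eq]
  exact exists_chi_eq_of_det_eq_one Q.pow_four_eq_one Q.conj_eq_inv (Q.map_eq_one hx v)

theorem eq_of_negOneMult_eq_zero [Finite G] (Q : InvertedRootClass K x v w p) {i₀ : Fin W.n}
    (h₀ : ∀ g, W.chi i₀ g = 1) {i : Fin W.n} (hi : W.negOneMult x i = 0) : i = i₀ := by
  let ρ := (MonoidHomClass.toMonoidHom (W.rep i)).comp (of ℂ G)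
  refine eq_of_chi_eq_degree h₀ fun g => ?_
  have hg : W.rep i (of ℂ G g) = 1 :=
    Q.map_eq_one (f := ρ) (rep_of_eq_one_of_negOneMult_eq_zero hi) g
  rw [← tr_of, tr_apply, hg, Matrix.trace_one, Fintype.card_fin]

theorem negOneMult_pos [Finite G] (Q : InvertedRootClass K x v w p) {i₀ : Fin W.n}
    (h₀ : ∀ g, W.chi i₀ g = 1) (i : Fin W.n) (hi : i ≠ i₀) : 0 < W.negOneMult x i :=
  Nat.pos_of_ne_zero fun h => hi (Q.eq_of_negOneMult_eq_zero h₀ h)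

theorem card_sq_mul_eq_sum_chi_mul (Q : InvertedRootClass K x v w p) (i : Fin W.n) :
    (K.card : ℂ) ^ 2 * (W.degree i - 4 * W.negOneMult x i +
      4 * (W.negOneMult x i ^ 2 / W.degree i)) = ∑ u ∈ K, ∑ u' ∈ K, W.chi i (u * u') := by
  have hd := degree_cast_ne_zero (W := W) i
  apply mul_left_cancel₀ hd
  rw [degree_mul_sum_chi_mul Q.conj_mem Q.exists_eq_conj,
    chi_eq_degree_sub_two_mul_negOneMult Q.mul_self_eq_one]
  field_simp
  ring

section Relations

variable [Fintype G] (Q : InvertedRootClass K x v w p) (L : Subgroup G) {φ : G → ℂ}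
  (hφ : ∀ g, φ g ≠ 0 → v ∈ Subgroup.zpowers g)
include Q hφ

theorem sum_inducedCoeff_mul_degree : ∑ i, W.inducedCoeff L φ i * W.degree i = 0 := by
  simpa only [chi_one] using sum_inducedCoeff_mul_chi_eq_zero (W := W) L Q.orderOf_eq_four hφ
    (one_pow 1) (by norm_num)

theorem sum_inducedCoeff_mul_negOneMult :
    ∑ i, W.inducedCoeff L φ i * W.negOneMult x i = 0 := by
  have h := sum_inducedCoeff_mul_chi_eq_zero (W := W) L Q.orderOf_eq_four hφ
    (y := x) (n := 2) (by rw [sq, Q.mul_self_eq_one]) (by norm_num)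
  simp only [chi_eq_degree_sub_two_mul_negOneMult Q.mul_self_eq_one, mul_sub,
    mul_left_comm _ (2 : ℂ), Finset.sum_sub_distrib, Q.sum_inducedCoeff_mul_degree L hφ,
    ← Finset.mul_sum] at h
  linear_combination (-1 / 2) * h

-- The class sum of `K` acts by a scalar, so the square of its value is a sum of values at
-- elements `u * u'` of odd order, where the induced class function vanishes.
theorem sum_inducedCoeff_mul_negOneMult_sq_div :
    ∑ i, W.inducedCoeff L φ i * (W.negOneMult x i ^ 2 / W.degree i) = 0 := by
  have hK : (K.card : ℂ) ≠ 0 := Nat.cast_ne_zero.2 (Finset.card_ne_zero_of_mem Q.mem)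
  have hp : ¬ 4 ∣ p := by
    have := Nat.odd_iff.1 Q.odd
    omega
  have hzero : ∑ i, W.inducedCoeff L φ i * ((K.card : ℂ) ^ 2 * (W.degree i -
      4 * W.negOneMult x i + 4 * (W.negOneMult x i ^ 2 / W.degree i))) = 0 := by
    simp only [Q.card_sq_mul_eq_sum_chi_mul, Finset.mul_sum]
    rw [Finset.sum_comm]
    refine Finset.sum_eq_zero fun u hu => ?_
    rw [Finset.sum_comm]
    exact Finset.sum_eq_zero fun u' hu' => sum_inducedCoeff_mul_chi_eq_zero L Q.orderOf_eq_four hφ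
      (Q.mul_pow_eq_one u hu u' hu') hp
  have hsplit (i : Fin W.n) : W.inducedCoeff L φ i * ((K.card : ℂ) ^ 2 * (W.degree i -
      4 * W.negOneMult x i + 4 * (W.negOneMult x i ^ 2 / W.degree i))) =
      (K.card : ℂ) ^ 2 * (W.inducedCoeff L φ i * W.degree i -
        4 * (W.inducedCoeff L φ i * W.negOneMult x i) +
        4 * (W.inducedCoeff L φ i * (W.negOneMult x i ^ 2 / W.degree i))) := by ring
  simp only [hsplit, ← Finset.mul_sum, Finset.sum_add_distrib, Finset.sum_sub_distrib,
    Q.sum_inducedCoeff_mul_degree L hφ, Q.sum_inducedCoeff_mul_negOneMult L hφ] at hzero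
  linear_combination (1 / 4) * (mul_eq_zero.1 hzero).resolve_left (pow_ne_zero 2 hK)

theorem sum_intCast_mul_eq_zero {c : Fin W.n → ℤ} (hc : ∀ i, W.inducedCoeff L φ i = c i) :
    ∑ i, (c i : ℚ) * W.degree i = 0 ∧ ∑ i, (c i : ℚ) * W.negOneMult x i = 0 ∧
      ∑ i, (c i : ℚ) * (W.negOneMult x i ^ 2 / W.degree i) = 0 := by
  have hd := Q.sum_inducedCoeff_mul_degree (W := W) L hφ
  have hb := Q.sum_inducedCoeff_mul_negOneMult (W := W) L hφ
  have hbd := Q.sum_inducedCoeff_mul_negOneMult_sq_div (W := W) L hφ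
  simp only [hc] at hd hb hbd
  refine ⟨by exact_mod_cast hd, by exact_mod_cast hb, ?_⟩
  rw [← @Rat.cast_eq_zero ℂ]
  push_cast
  exact hbd

end Relations

end InvertedRootClass

end InvertedRootClass

section CentralizerCharacters

variable {G : Type*} [Group G]

theorem sum_extend_zero_inv_mul [Fintype G] {L : Subgroup G} [Fintype L] (F : L → ℂ) (f : G → ℂ) :
    ∑ g, Function.extend Subtype.val F 0 g⁻¹ * f g = ∑ l : L, F l⁻¹ * f l := by
  rw [← Equiv.sum_comp (Equiv.inv G), ← Equiv.sum_comp (Equiv.inv L)]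
  simp only [Equiv.inv_apply, inv_inv]
  refine (Fintype.sum_of_injective _ Subtype.val_injective _ _ (fun g hg => ?_) fun l => ?_).symm
  · rw [Function.extend_apply' _ _ _ fun ⟨l, hl⟩ => hg ⟨l, hl⟩, Pi.zero_apply, zero_mul]
  · rw [Subtype.val_injective.extend_apply, Subgroup.coe_inv]

theorem isIdempotentElem_sum_monoidHom {L : Subgroup G} [Fintype L] (μ : L →* ℂˣ) :
    IsIdempotentElem ((Nat.card L : ℂ)⁻¹ • ∑ l : L, (μ l⁻¹ : ℂ) • of ℂ G l) := by
  have hL : (Nat.card L : ℂ) ≠ 0 := Nat.cast_ne_zero.2 Nat.card_pos.ne'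
  have hmul (l : L) : ∑ k : L, ((μ l⁻¹ : ℂ) • of ℂ G l) * ((μ k⁻¹ : ℂ) • of ℂ G k) =
      ∑ k : L, (μ k⁻¹ : ℂ) • of ℂ G k := by
    rw [← Equiv.sum_comp (Equiv.mulLeft l) fun k : L => (μ k⁻¹ : ℂ) • of ℂ G k]
    refine Finset.sum_congr rfl fun k _ => ?_
    rw [smul_mul_smul_comm, Equiv.coe_mulLeft, Subgroup.coe_mul, map_mul, mul_inv_rev, map_mul,
      Units.val_mul, mul_comm (μ l⁻¹ : ℂ)]
  rw [IsIdempotentElem, smul_mul_smul_comm, Finset.sum_mul_sum]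
  simp only [hmul, Finset.sum_const, Finset.card_univ, ← Nat.card_eq_fintype_card]
  rw [← Nat.cast_smul_eq_nsmul ℂ, smul_smul, mul_assoc, inv_mul_cancel₀ hL, mul_one]

/-- The class function `1 - μ` on a subgroup, extended by zero to the whole group. -/
noncomputable def oneSubExtend {L : Subgroup G} (μ : L →* ℂˣ) : G → ℂ :=
  Function.extend Subtype.val (fun l => 1 - (μ l : ℂ)) 0

section OneSubExtend

variable {L : Subgroup G} {μ : L →* ℂˣ}

theorem oneSubExtend_coe (l : L) : oneSubExtend μ l = 1 - μ l :=
  Subtype.val_injective.extend_apply _ _ l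

theorem oneSubExtend_of_notMem {g : G} (hg : g ∉ L) : oneSubExtend μ g = 0 :=
  Function.extend_apply' _ _ _ fun ⟨l, hl⟩ => hg (hl ▸ l.2)

theorem oneSubExtend_conj {l : G} (hl : l ∈ L) (g : G) :
    oneSubExtend μ (l * g * l⁻¹) = oneSubExtend μ g := by
  lift l to L using hl
  by_cases hg : g ∈ L
  · lift g to L using hg
    rw [← Subgroup.coe_inv, ← Subgroup.coe_mul, ← Subgroup.coe_mul, oneSubExtend_coe,
      oneSubExtend_coe, map_mul, map_mul, map_inv, mul_inv_cancel_comm]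
  · rw [oneSubExtend_of_notMem hg, oneSubExtend_of_notMem fun h => hg ?_]
    simpa [mul_assoc] using L.mul_mem (L.mul_mem (L.inv_mem l.2) h) l.2

theorem mem_zpowers_of_oneSubExtend_ne_zero {v : G}
    (hμ : ∀ l, μ l ≠ 1 → v ∈ Subgroup.zpowers (l : G)) {g : G} (hg : oneSubExtend μ g ≠ 0) :
    v ∈ Subgroup.zpowers g := by
  lift g to L using not_imp_comm.1 oneSubExtend_of_notMem hg
  exact hμ g fun h => hg (by rw [oneSubExtend_coe, h, Units.val_one, sub_self])

end OneSubExtend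

theorem sum_units_val_eq_zero {L : Type*} [Group L] [Fintype L] {μ : L →* ℂˣ} (hμ : μ ≠ 1) :
    ∑ l, (μ l : ℂ) = 0 := by
  refine sum_hom_units_eq_zero ((Units.coeHom ℂ).comp μ) fun h => hμ ?_
  ext l
  exact DFunLike.congr_fun h l

variable {v w : G}

theorem map_conj_centralizer (hw : w * v * w⁻¹ = v⁻¹) :
    (Subgroup.centralizer {v}).map (MulAut.conj w).toMonoidHom = Subgroup.centralizer {v} := by
  ext g
  have h : g * v⁻¹ * g⁻¹ = v⁻¹ ↔ g * v * g⁻¹ = v := by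
    rw [← inv_inj, inv_inv]
    simp [mul_assoc]
  rw [Subgroup.mem_map_equiv, Subgroup.mem_centralizer_singleton_iff,
    Subgroup.mem_centralizer_singleton_iff, MulAut.conj_symm_apply, ← mul_inv_eq_iff_eq_mul,
    ← mul_inv_eq_iff_eq_mul, ← h, ← hw, ← (MulAut.conj w).injective.eq_iff]
  simp [mul_assoc]

/-- Conjugation by `w` on the centralizer of an element inverted by `w`. -/
noncomputable def conjCentralizer (hw : w * v * w⁻¹ = v⁻¹) :
    Subgroup.centralizer {v} ≃* Subgroup.centralizer {v} :=
  ((MulAut.conj w).subgroupMap _).trans (MulEquiv.subgroupCongr (map_conj_centralizer hw))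

theorem coe_conjCentralizer (hw : w * v * w⁻¹ = v⁻¹) (l : Subgroup.centralizer {v}) :
    (conjCentralizer hw l : G) = w * l * w⁻¹ := rfl

namespace WedderburnDecomposition

variable {W : WedderburnDecomposition G} [Fintype G]

theorem inducedCoeff_oneSubExtend {L : Subgroup G} [Fintype L] (μ : L →* ℂˣ) (i : Fin W.n) :
    W.inducedCoeff L (oneSubExtend μ) i =
      (Nat.card L : ℂ)⁻¹ * ∑ l : L, (1 - (μ l⁻¹ : ℂ)) * W.chi i l := by
  rw [inducedCoeff, oneSubExtend, sum_extend_zero_inv_mul]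

theorem exists_inducedCoeff_oneSubExtend_eq {L : Subgroup G} (μ : L →* ℂˣ) (i : Fin W.n) :
    ∃ c : ℤ, W.inducedCoeff L (oneSubExtend μ) i = c := by
  have := Fintype.ofFinite L
  have hrank (ν : L →* ℂˣ) :
      ∃ r : ℕ, (Nat.card L : ℂ)⁻¹ * ∑ l : L, (ν l⁻¹ : ℂ) * W.chi i l = r := by
    have h := tr_eq_rank (W := W) (i := i) (isIdempotentElem_sum_monoidHom ν)
    simp only [map_smul, map_sum, tr_of, smul_eq_mul] at h
    exact ⟨_, h⟩
  obtain ⟨r, hr⟩ := hrank 1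
  obtain ⟨s, hs⟩ := hrank μ
  refine ⟨r - s, ?_⟩
  push_cast
  rw [inducedCoeff_oneSubExtend, ← hr, ← hs, ← mul_sub, ← Finset.sum_sub_distrib]
  simp only [MonoidHom.one_apply, Units.val_one, sub_mul]

theorem inducedCoeff_oneSubExtend_of_chi_eq_one {L : Subgroup G} {μ : L →* ℂˣ} (hμ : μ ≠ 1)
    {i₀ : Fin W.n} (h₀ : ∀ g, W.chi i₀ g = 1) : W.inducedCoeff L (oneSubExtend μ) i₀ = 1 := by
  have := Fintype.ofFinite L
  have hsum : ∑ l : L, (μ l⁻¹ : ℂ) = 0 :=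
    (Equiv.sum_comp (Equiv.inv L) fun l => (μ l : ℂ)).trans (sum_units_val_eq_zero hμ)
  rw [inducedCoeff_oneSubExtend]
  simp only [h₀, mul_one, Finset.sum_sub_distrib, hsum, sub_zero, Finset.sum_const,
    Finset.card_univ, nsmul_eq_mul, ← Nat.card_eq_fintype_card]
  exact inv_mul_cancel₀ (Nat.cast_ne_zero.2 Nat.card_pos.ne')

theorem sum_inducedCoeff_oneSubExtend_sq (hv : orderOf v = 4) (hw : w * v * w⁻¹ = v⁻¹)
    {μ : Subgroup.centralizer {v} →* ℂˣ} (hμ : ∀ l, μ l ≠ 1 → v ∈ Subgroup.zpowers (l : G))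
    (hne : μ.comp (conjCentralizer hw).toMonoidHom ≠ μ) :
    ∑ i, W.inducedCoeff (Subgroup.centralizer {v}) (oneSubExtend μ) i ^ 2 = 3 := by
  have := Fintype.ofFinite (Subgroup.centralizer {v})
  have hL : (Nat.card (Subgroup.centralizer {v}) : ℂ) ≠ 0 := Nat.cast_ne_zero.2 Nat.card_pos.ne'
  have hκ (g : G) : oneSubExtend μ g ≠ 0 → v ∈ Subgroup.zpowers g :=
    mem_zpowers_of_oneSubExtend_ne_zero hμ
  have hμ1 : μ ≠ 1 := fun h => hne (by rw [h, MonoidHom.one_comp])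
  set μw := μ.comp (conjCentralizer hw).toMonoidHom
  have hμw1 : μw ≠ 1 := fun h => hμ1 <| MonoidHom.ext fun l => by
    simpa [μw] using DFunLike.congr_fun h ((conjCentralizer hw).symm l)
  have hμinv : μ⁻¹ ≠ 1 := fun h => hμ1 <|
    MonoidHom.ext fun l => inv_eq_one.1 (DFunLike.congr_fun h l)
  have hquot : μ⁻¹ * μw ≠ 1 := fun h => hne (inv_mul_eq_one.1 h).symm
  have hterm (l : Subgroup.centralizer {v}) :
      (1 - (μ l⁻¹ : ℂ)) * (oneSubExtend μ l + oneSubExtend μ (w * l * w⁻¹)) =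
        3 - μ l - 2 * (μ⁻¹ l : ℂˣ) - μw l + (μ⁻¹ * μw) l := by
    have hinv : ((μ l)⁻¹ : ℂˣ) * (μ l : ℂ) = 1 := (μ l).inv_mul
    rw [← coe_conjCentralizer hw, oneSubExtend_coe, oneSubExtend_coe, map_inv, MonoidHom.mul_apply,
      Units.val_mul, MonoidHom.inv_apply, show μ (conjCentralizer hw l) = μw l from rfl]
    linear_combination hinv
  simp only [sq, sum_inducedCoeff_mul_inducedCoeff hv hw hκ hκ fun _ => oneSubExtend_conj]
  rw [oneSubExtend, sum_extend_zero_inv_mul, ← oneSubExtend,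
    Finset.sum_congr rfl fun l _ => hterm l]
  simp only [Finset.sum_add_distrib, Finset.sum_sub_distrib, ← Finset.mul_sum,
    sum_units_val_eq_zero hμ1, sum_units_val_eq_zero hμinv,
    sum_units_val_eq_zero hμw1, sum_units_val_eq_zero hquot, Finset.sum_const, Finset.card_univ,
    nsmul_eq_mul, ← Nat.card_eq_fintype_card]
  field_simp
  ring

end WedderburnDecomposition

open WedderburnDecomposition in
theorem InvertedRootClass.map_conjCentralizer_eq [Finite G] {K : Finset G} {x : G} {p : ℕ}
    (Q : InvertedRootClass K x v w p) {μ : Subgroup.centralizer {v} →* ℂˣ}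
    (hμ : ∀ l, μ l ≠ 1 → v ∈ Subgroup.zpowers (l : G)) :
    μ.comp (conjCentralizer Q.conj_eq_inv).toMonoidHom = μ := by
  have := Fintype.ofFinite G
  obtain ⟨W⟩ := WedderburnDecomposition.nonempty (H := G)
  obtain ⟨i₀, h₀⟩ := exists_chi_eq_one (W := W)
  by_contra hne
  have hμ1 : μ ≠ 1 := fun h => hne (by rw [h, MonoidHom.one_comp])
  choose c hc using exists_inducedCoeff_oneSubExtend_eq (W := W) μ
  have hc₀ : c i₀ = 1 := by
    have h := hc i₀
    rw [inducedCoeff_oneSubExtend_of_chi_eq_one hμ1 h₀] at h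
    exact_mod_cast h.symm
  have hsq := sum_inducedCoeff_oneSubExtend_sq (W := W) Q.orderOf_eq_four Q.conj_eq_inv hμ hne
  simp only [hc] at hsq
  obtain ⟨hcd, hcb, hcbd⟩ := Q.sum_intCast_mul_eq_zero _
    (fun g hg => mem_zpowers_of_oneSubExtend_ne_zero hμ hg) hc
  refine sum_sq_ne_three (k := ℚ) hc₀ ?_ ?_ ?_ ?_ hcd hcb hcbd (by exact_mod_cast hsq)
  · exact fun i => Nat.cast_pos.2 (degree_pos i)
  · rw [degree_eq_one_of_chi_eq_one h₀, Nat.cast_one]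
  · rw [negOneMult_eq_zero_of_chi_eq_one h₀ Q.mul_self_eq_one, Nat.cast_zero]
  · exact fun i hi => Nat.cast_pos.2 (Q.negOneMult_pos h₀ i hi)

end CentralizerCharacters

section IntegerVectorsOfNormEight

variable {ι : Type*}

theorem eq_zero_or_sq_add_mul_add_sq_eq_one {r s : ℤ} (h : r ^ 2 + r * s + s ^ 2 ≤ 1) :
    r = 0 ∧ s = 0 ∨ r = 1 ∧ s = 0 ∨ r = -1 ∧ s = 0 ∨ r = 0 ∧ s = 1 ∨ r = 0 ∧ s = -1 ∨
      r = 1 ∧ s = -1 ∨ r = -1 ∧ s = 1 := by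
  have hr : r < 2 ∧ -2 < r := by constructor <;> nlinarith [sq_nonneg (r + 2 * s)]
  have hs : s < 2 ∧ -2 < s := by constructor <;> nlinarith [sq_nonneg (s + 2 * r)]
  obtain ⟨hr, hr'⟩ := hr
  obtain ⟨hs, hs'⟩ := hs
  interval_cases r <;> interval_cases s <;> simp_all

theorem eq_zero_of_sum_sq_le_eight [Fintype ι] {c f b : ι → ℤ} {i j k : ι} (hij : i ≠ j)
    (hik : i ≠ k) (hjk : j ≠ k) (hf : ∀ l, 0 < f l) (hbi : 0 < b i) (hbj : 0 < b j) (hbk : 0 < b k)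
    (hne : f i = f j → b i ≠ b j) {r s : ℤ} (hi : c i = 2 * r) (hj : c j = 2 * s)
    (hk : c k = 2 * (r + s)) (hsq : ∑ l, c l ^ 2 ≤ 8) (hcf : ∑ l, c l * f l = 0)
    (hcb : ∑ l, c l * b l = 0) : r = 0 ∧ s = 0 := by
  classical
  let T := ((Finset.univ.erase i).erase j).erase k
  have hsplit (F : ι → ℤ) : ∑ l, F l = F i + (F j + (F k + ∑ l ∈ T, F l)) := by
    rw [Finset.add_sum_erase _ F (by simp [hik.symm, hjk.symm]),
      Finset.add_sum_erase _ F (by simp [hij.symm]), Finset.add_sum_erase _ F (Finset.mem_univ i)]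
  have hT : 0 ≤ ∑ l ∈ T, c l ^ 2 := Finset.sum_nonneg fun _ _ => sq_nonneg _
  rw [hsplit, hi, hj, hk] at hsq hcf hcb
  have hform : r ^ 2 + r * s + s ^ 2 ≤ 1 := by linarith
  by_cases hrs : r = 0 ∧ s = 0
  · exact hrs
  have hpos : 1 ≤ r ^ 2 + r * s + s ^ 2 := by
    by_contra! h
    have hr : r ^ 2 = 0 := by nlinarith [sq_nonneg r, sq_nonneg (r + 2 * s)]
    have hs : s ^ 2 = 0 := by nlinarith [sq_nonneg s, sq_nonneg (s + 2 * r)]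
    exact hrs ⟨pow_eq_zero_iff two_ne_zero |>.1 hr, pow_eq_zero_iff two_ne_zero |>.1 hs⟩
  have hT₀ : ∑ l ∈ T, c l ^ 2 = 0 := by linarith
  have hc (l) (hl : l ∈ T) : c l = 0 := pow_eq_zero_iff two_ne_zero |>.1
    ((Finset.sum_eq_zero_iff_of_nonneg fun _ _ => sq_nonneg _).1 hT₀ l hl)
  rw [Finset.sum_eq_zero fun l hl => by rw [hc l hl, zero_mul]] at hcf hcb
  have := And.intro (hf i) (And.intro (hf j) (hf k))
  rcases eq_zero_or_sq_add_mul_add_sq_eq_one hform with h | h | h | h | h | h | h <;>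
    obtain ⟨rfl, rfl⟩ := h <;>
    first | exact ⟨rfl, rfl⟩ | omega

theorem fixed_of_support_subset {c f b : ι → ℤ} {π : ι → ι} {i₀ i j k : ι} (hci : c i = -1)
    (hcj : c j = -1) (hck : c k = 1) (hi : i ≠ i₀) (hj : j ≠ i₀) (hk : k ≠ i₀)
    (hc : ∀ l, l ≠ i₀ → l ≠ i → l ≠ j → l ≠ k → c l = 0) (hne : f i = f j → b i ≠ b j)
    (hb₀ : ∀ l, b l = 0 ↔ l = i₀) (hcπ : ∀ l, c (π l) = c l) (hfπ : ∀ l, f (π l) = f l)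
    (hbπ : ∀ l, b (π l) = b l) : π i = i ∧ π j = j ∧ π k = k := by
  have hπ₀ (l) (hl : l ≠ i₀) : π l ≠ i₀ := fun h => hl ((hb₀ l).1 (hbπ l ▸ (hb₀ _).2 h))
  have hmem (l) (hl : l ≠ i₀) (hcl : c l ≠ 0) : π l = i ∨ π l = j ∨ π l = k := by
    by_contra! h
    exact hcl (hcπ l ▸ hc (π l) (hπ₀ l hl) h.1 h.2.1 h.2.2)
  refine ⟨?_, ?_, ?_⟩
  · rcases hmem i hi (by omega) with h | h | h
    · exact h
    · exact absurd (by rw [← h, hbπ]) (hne (by rw [← h, hfπ]))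
    · have := hcπ i
      rw [h] at this
      omega
  · rcases hmem j hj (by omega) with h | h | h
    · exact absurd (by rw [← h, hbπ]) (hne (by rw [← h, hfπ]))
    · exact h
    · have := hcπ j
      rw [h] at this
      omega
  · have := hcπ k
    rcases hmem k hk (by omega) with h | h | h
    · rw [h] at this
      omega
    · rw [h] at this
      omega
    · exact h

theorem sum_mul_eq_of_support_subset [Fintype ι] {c d : ι → ℤ} {i₀ i j k : ι} (hij : i ≠ j)
    (hik : i ≠ k) (hjk : j ≠ k) (hi : i ≠ i₀) (hj : j ≠ i₀) (hk : k ≠ i₀) (hci : c i = -1)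
    (hcj : c j = -1) (hck : c k = 1) (hc : ∀ l, l ≠ i₀ → l ≠ i → l ≠ j → l ≠ k → c l = 0)
    (hd : d i₀ = 0) : ∑ l, c l * d l = d k - d i - d j := by
  classical
  rw [← Finset.sum_subset (Finset.subset_univ ({i₀, i, j, k} : Finset ι))]
  · rw [Finset.sum_insert (by simp [hi.symm, hj.symm, hk.symm]),
      Finset.sum_insert (by simp [hij, hik]), Finset.sum_insert (by simp [hjk]),
      Finset.sum_singleton, hci, hcj, hck, hd]
    ring
  · intro l _ hl
    simp only [Finset.mem_insert, Finset.mem_singleton, not_or] at hl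
    rw [hc l hl.1 hl.2.1 hl.2.2.1 hl.2.2.2, zero_mul]

end IntegerVectorsOfNormEight

section OddOrder

variable {H : Type*} [Group H]

theorem eq_one_of_conj_inv_eq (hodd : Odd (Nat.card H)) {h o : H} (ho : h⁻¹ * o⁻¹ * h = o) :
    o = 1 := by
  have hcop : (Nat.card H).Coprime 2 := Nat.coprime_two_right.2 hodd
  have hinv : h⁻¹ * o * h = o⁻¹ := by
    simpa [mul_assoc] using congrArg (·⁻¹) ho
  have hsq : Commute (h ^ 2) o := by
    have h2 : (h ^ 2)⁻¹ * (o * h ^ 2) = o :=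
      calc (h ^ 2)⁻¹ * (o * h ^ 2) = h⁻¹ * (h⁻¹ * o * h) * h := by
            simp only [sq, mul_inv_rev, mul_assoc]
        _ = o := by rw [hinv, ho]
    exact (inv_mul_eq_iff_eq_mul.1 h2).symm
  obtain ⟨m, hm⟩ := hodd
  have hh : h = (h ^ 2) ^ (m + 1) := by
    rw [← pow_mul, show 2 * (m + 1) = 2 * m + 1 + 1 by ring, pow_succ, ← hm, pow_card_eq_one',
      one_mul]
  have hcomm : Commute h o := hh ▸ hsq.pow_left _
  refine (powCoprime hcop).injective ?_
  rw [powCoprime_apply, powCoprime_apply, one_pow, sq]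
  nth_rw 1 [← ho]
  rw [hcomm.symm.inv_left.right_comm, inv_mul_cancel, one_mul, inv_mul_cancel]

namespace WedderburnDecomposition

-- Summing `χ(h)²` over `χ` and `h` counts the self-dual characters by row orthogonality and the
-- pairs `(h, k)` with `k⁻¹ * h⁻¹ * k = h` by column orthogonality.
theorem eq_of_chi_inv_eq_chi [Finite H] {W : WedderburnDecomposition H} (hodd : Odd (Nat.card H))
    {i₀ i : Fin W.n} (h₀ : ∀ h, W.chi i₀ h = 1) (hi : ∀ h, W.chi i h⁻¹ = W.chi i h) : i = i₀ := by
  classical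
  have := Fintype.ofFinite H
  choose δ hδ using exists_chi_inv (W := W)
  have hrow (j : Fin W.n) :
      ∑ h, W.chi j h * W.chi j h = if j = δ j then (Fintype.card H : ℂ) else 0 := by
    simp only [← sum_chi_mul_chi_inv, hδ, inv_inv]
  have hcol : ∑ h : H, ∑ k : H, (if k⁻¹ * h⁻¹ * k = h then 1 else 0 : ℂ) = Fintype.card H := by
    rw [Finset.sum_eq_single 1]
    · simp
    · exact fun h _ hh => Finset.sum_eq_zero fun k _ =>
        if_neg fun e => hh (eq_one_of_conj_inv_eq hodd e)
    · simp
  simp only [← sum_chi_mul_chi (W := W)] at hcol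
  rw [Finset.sum_comm, Finset.sum_congr rfl fun j _ => hrow j, ← Finset.sum_filter,
    Finset.sum_const, nsmul_eq_mul,
    mul_eq_right₀ (Nat.cast_ne_zero.2 Fintype.card_ne_zero)] at hcol
  have hcard : (Finset.univ.filter fun j => j = δ j).card = 1 := by exact_mod_cast hcol
  refine Finset.card_le_one.1 hcard.le _ ?_ _ ?_ <;>
    refine Finset.mem_filter.2 ⟨Finset.mem_univ _, chi_injective (funext fun h => ?_)⟩
  · rw [hδ, hi]
  · rw [hδ, h₀, h₀]

end WedderburnDecomposition

end OddOrder

section CosetExtend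

variable {G : Type*} [Group G] {O : Subgroup G} {v w : G}

theorem commute_zpow_of_le_centralizer (hO : O ≤ Subgroup.centralizer {v}) (k : ℤ) (o : O) :
    Commute (v ^ k) (o : G) :=
  Commute.zpow_left (Subgroup.mem_centralizer_singleton_iff.1 (hO o.2)).symm k

theorem four_dvd_of_zpow_pow_eq_one (hv : orderOf v = 4) {k : ℤ} {n : ℕ} (hn : Odd n)
    (hk : (v ^ k) ^ n = 1) : 4 ∣ k := by
  rw [← zpow_natCast, ← zpow_mul, ← orderOf_dvd_iff_zpow_eq_one, hv] at hk
  refine IsCoprime.dvd_of_dvd_mul_right ?_ hk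
  exact Nat.isCoprime_iff_coprime.2 (Nat.Coprime.pow_left 2 (Nat.coprime_two_left.2 hn))

theorem coe_pow_natCard_eq_one (o : O) : (o : G) ^ Nat.card O = 1 := by
  rw [← Subgroup.coe_pow, pow_card_eq_one', Subgroup.coe_one]

theorem zpow_units_mul_injective (hv : orderOf v = 4) (hodd : Odd (Nat.card O)) :
    Function.Injective fun a : ℤˣ × O => v ^ (a.1 : ℤ) * a.2 := by
  rintro ⟨s, o⟩ ⟨s', o'⟩ h
  have hmem : v ^ ((s : ℤ) - s') ∈ O := by
    have h' : v ^ (s : ℤ) = v ^ (s' : ℤ) * o' * (o : G)⁻¹ := eq_mul_inv_of_mul_eq h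
    rw [sub_eq_neg_add, zpow_add, zpow_neg, h', mul_assoc, inv_mul_cancel_left]
    exact O.mul_mem o'.2 (O.inv_mem o.2)
  have hs : s = s' := by
    have := four_dvd_of_zpow_pow_eq_one hv hodd (coe_pow_natCard_eq_one ⟨_, hmem⟩)
    rcases Int.units_eq_one_or s with rfl | rfl <;> rcases Int.units_eq_one_or s' with rfl | rfl
    all_goals first | rfl | norm_num at this
  subst hs
  exact Prod.ext rfl (Subtype.ext (mul_left_cancel h))

/-- The function on `G` with value `2 * F o` at `v * o` and at `v⁻¹ * o` for `o ∈ O`, and zero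
elsewhere. When `⟨v⟩` is cyclic of order four and `⟨v⟩ × O` is a subgroup, it is the product of
`F` with `1 - μ`, where `μ` is the linear character of `⟨v⟩` of order two. -/
noncomputable def cosetExtend (v : G) (F : O → ℂ) : G → ℂ :=
  Function.extend (fun a : ℤˣ × O => v ^ (a.1 : ℤ) * a.2) (fun a => 2 * F a.2) 0

theorem cosetExtend_zpow_mul (hv : orderOf v = 4) (hodd : Odd (Nat.card O)) (F : O → ℂ) (s : ℤˣ)
    (o : O) : cosetExtend v F (v ^ (s : ℤ) * o) = 2 * F o :=
  (zpow_units_mul_injective hv hodd).extend_apply _ _ (s, o)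

theorem exists_eq_of_cosetExtend_ne_zero {F : O → ℂ} {g : G} (hg : cosetExtend v F g ≠ 0) :
    ∃ (s : ℤˣ) (o : O), v ^ (s : ℤ) * o = g := by
  by_contra! h
  exact hg (Function.extend_apply' _ _ _ fun ⟨a, ha⟩ => h a.1 a.2 ha)

theorem cosetExtend_conj (hv : orderOf v = 4) (hodd : Odd (Nat.card O)) (F : O → ℂ) {l : G}
    {α : O ≃ O} (hα : ∀ o, (α o : G) = l * o * l⁻¹) {σ : ℤˣ} (hl : l * v * l⁻¹ = v ^ (σ : ℤ))
    (g : G) : cosetExtend v F (l * g * l⁻¹) = cosetExtend v (F ∘ α) g := by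
  have hconj (s : ℤˣ) (o : O) :
      l * (v ^ (s : ℤ) * o) * l⁻¹ = v ^ ((σ * s : ℤˣ) : ℤ) * α o := by
    rw [← MulAut.conj_apply, map_mul, map_zpow, MulAut.conj_apply, MulAut.conj_apply, hl, hα,
      ← zpow_mul, Units.val_mul]
  by_cases hg : ∃ (s : ℤˣ) (o : O), v ^ (s : ℤ) * o = g
  · obtain ⟨s, o, rfl⟩ := hg
    rw [hconj, cosetExtend_zpow_mul hv hodd, cosetExtend_zpow_mul hv hodd, Function.comp_apply]
  · rw [not_imp_comm.1 exists_eq_of_cosetExtend_ne_zero hg]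
    refine not_imp_comm.1 exists_eq_of_cosetExtend_ne_zero fun ⟨s, o, h⟩ => hg ⟨σ * s, α.symm o, ?_⟩
    refine (MulAut.conj l).injective ?_
    rw [MulAut.conj_apply, MulAut.conj_apply, hconj, ← h, ← mul_assoc, Int.units_mul_self, one_mul,
      Equiv.apply_symm_apply]

theorem sum_cosetExtend_inv_mul [Fintype G] [Fintype O] (hO : O ≤ Subgroup.centralizer {v})
    (hv : orderOf v = 4) (hodd : Odd (Nat.card O)) (F : O → ℂ) (f : G → ℂ) :
    ∑ g, cosetExtend v F g⁻¹ * f g = ∑ o : O, 2 * F o⁻¹ * (f (v * o) + f (v⁻¹ * o)) := by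
  have hinv (s : ℤˣ) (o : O) : (v ^ (s : ℤ) * (o : G))⁻¹ = v ^ ((-s : ℤˣ) : ℤ) * (o⁻¹ : O) := by
    rw [(commute_zpow_of_le_centralizer hO _ o).mul_inv, Units.val_neg, zpow_neg, Subgroup.coe_inv]
  rw [← Fintype.sum_of_injective _ (zpow_units_mul_injective hv hodd)
    (fun a => 2 * F a.2⁻¹ * f (v ^ (a.1 : ℤ) * a.2)), Fintype.sum_prod_type, Finset.sum_comm]
  · refine Finset.sum_congr rfl fun o _ => ?_
    rw [show (Finset.univ : Finset ℤˣ) = {1, -1} from rfl, Finset.sum_pair (by decide)]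
    simp only [Units.val_one, zpow_one, Units.val_neg, zpow_neg, mul_add]
  · intro g hg
    rw [not_imp_comm.1 exists_eq_of_cosetExtend_ne_zero, zero_mul]
    rintro ⟨s, o, h⟩
    exact hg ⟨(-s, o⁻¹), (hinv s o).symm.trans (by rw [h, inv_inv])⟩
  · rintro ⟨s, o⟩
    rw [hinv, cosetExtend_zpow_mul hv hodd]

theorem mem_zpowers_of_cosetExtend_ne_zero (hO : O ≤ Subgroup.centralizer {v})
    (hv : orderOf v = 4) (hodd : Odd (Nat.card O)) {F : O → ℂ} {g : G}
    (hg : cosetExtend v F g ≠ 0) : v ∈ Subgroup.zpowers g := by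
  obtain ⟨s, o, rfl⟩ := exists_eq_of_cosetExtend_ne_zero hg
  obtain ⟨m, hm⟩ := hodd
  refine ⟨s * (Nat.card O : ℤ) ^ 2, ?_⟩
  have ho : (o : G) ^ (s * (Nat.card O : ℤ) ^ 2) = 1 := by
    rw [sq, mul_left_comm, zpow_mul, zpow_natCast, coe_pow_natCard_eq_one, one_zpow]
  change (v ^ (s : ℤ) * (o : G)) ^ (s * (Nat.card O : ℤ) ^ 2) = v
  rw [(commute_zpow_of_le_centralizer hO s o).mul_zpow, ho, mul_one, ← zpow_mul, ← mul_assoc,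
    ← Units.val_mul, Int.units_mul_self, Units.val_one, one_mul, hm]
  nth_rw 2 [← zpow_one v]
  rw [zpow_eq_zpow_iff_modEq, hv]
  refine (Int.modEq_iff_dvd.2 ⟨m ^ 2 + m, ?_⟩).symm
  push_cast
  ring

end CosetExtend

section OddComplement

variable {G : Type*} [Group G] {O : Subgroup G} {v w : G}

theorem exists_eq_zpow_mul [Finite G] (hO : O ≤ Subgroup.centralizer {v}) (hv : orderOf v = 4)
    (hodd : Odd (Nat.card O)) (hcard : Nat.card (Subgroup.centralizer {v}) = 4 * Nat.card O)
    {g : G} (hg : g ∈ Subgroup.centralizer {v}) : ∃ (k : ℤ) (o : O), g = v ^ k * o := by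
  have hV : Subgroup.zpowers v ≤ Subgroup.centralizer {v} := by
    rw [Subgroup.zpowers_le, Subgroup.mem_centralizer_singleton_iff]
  have hcV : Nat.card ((Subgroup.zpowers v).subgroupOf (Subgroup.centralizer {v})) = 4 := by
    rw [Nat.card_congr (Subgroup.subgroupOfEquivOfLe hV).toEquiv, Nat.card_zpowers, hv]
  have hcO : Nat.card (O.subgroupOf (Subgroup.centralizer {v})) = Nat.card O :=
    Nat.card_congr (Subgroup.subgroupOfEquivOfLe hO).toEquiv
  have hcompl := Subgroup.isComplement'_of_coprime
    (H := (Subgroup.zpowers v).subgroupOf (Subgroup.centralizer {v}))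
    (K := O.subgroupOf (Subgroup.centralizer {v})) (by rw [hcV, hcO, hcard])
    (by rw [hcV, hcO]
        exact Nat.Coprime.pow_left 2 (Nat.coprime_two_left.2 hodd))
  obtain ⟨⟨⟨⟨a, ha⟩, haV⟩, ⟨⟨o, ho⟩, hoO⟩⟩, h, -⟩ := hcompl.existsUnique ⟨g, hg⟩
  obtain ⟨k, rfl⟩ := Subgroup.mem_subgroupOf.1 haV
  exact ⟨k, ⟨o, hoO⟩, (congrArg Subtype.val h).symm⟩

theorem mem_iff_pow_card_eq_one [Finite G] (hO : O ≤ Subgroup.centralizer {v})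
    (hv : orderOf v = 4) (hodd : Odd (Nat.card O))
    (hcard : Nat.card (Subgroup.centralizer {v}) = 4 * Nat.card O) {g : G} :
    g ∈ O ↔ g ∈ Subgroup.centralizer {v} ∧ g ^ Nat.card O = 1 := by
  refine ⟨fun h => ⟨hO h, coe_pow_natCard_eq_one ⟨g, h⟩⟩, fun ⟨hg, h⟩ => ?_⟩
  obtain ⟨k, o, rfl⟩ := exists_eq_zpow_mul hO hv hodd hcard hg
  rw [(commute_zpow_of_le_centralizer hO k o).mul_pow, coe_pow_natCard_eq_one, mul_one] at h
  rw [orderOf_dvd_iff_zpow_eq_one.1 (hv ▸ four_dvd_of_zpow_pow_eq_one hv hodd h), one_mul]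
  exact o.2

end OddComplement

section OddComplementCoefficients

variable {G : Type*} [Group G] {O : Subgroup G} {v w : G}

theorem commute_mapDomain_of (hO : O ≤ Subgroup.centralizer {v}) (a : MonoidAlgebra ℂ O) :
    Commute (MonoidAlgebra.mapDomainAlgHom ℂ ℂ O.subtype a) (of ℂ G v) := by
  induction a using MonoidAlgebra.induction_on with
  | of o =>
    simpa using ((commute_zpow_of_le_centralizer hO 1 o).symm.map (of ℂ G))
  | add a b ha hb => simpa only [map_add] using ha.add_left hb
  | smul r a ha => simpa only [map_smul] using ha.smul_left r

theorem commute_mapDomain_eigenIdempotent (hO : O ≤ Subgroup.centralizer {v})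
    (a : MonoidAlgebra ℂ O) (c : ℂ) :
    Commute (MonoidAlgebra.mapDomainAlgHom ℂ ℂ O.subtype a) (eigenIdempotent v c) := by
  refine (Commute.sum_right _ _ _ fun n _ => Commute.smul_right ?_ _).smul_right _
  rw [map_pow]
  exact (commute_mapDomain_of hO a).pow_right n

namespace WedderburnDecomposition

variable {W : WedderburnDecomposition G}

/-- The linear functional `a ↦ tr (a * (v + v³) / 2)` on the group algebra of a subgroup, where
the trace is taken in the `i`-th irreducible representation of the whole group. -/
noncomputable def cosetTr (W : WedderburnDecomposition G) (O : Subgroup G) (v : G) (i : Fin W.n) :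
    MonoidAlgebra ℂ O →ₗ[ℂ] ℂ :=
  W.tr i ∘ₗ LinearMap.mulRight ℂ (eigenIdempotent v 1 - eigenIdempotent v (-1)) ∘ₗ
    (MonoidAlgebra.mapDomainAlgHom ℂ ℂ O.subtype).toLinearMap

theorem cosetTr_apply (i : Fin W.n) (a : MonoidAlgebra ℂ O) :
    W.cosetTr O v i a = W.tr i (MonoidAlgebra.mapDomainAlgHom ℂ ℂ O.subtype a *
      (eigenIdempotent v 1 - eigenIdempotent v (-1))) := rfl

theorem cosetTr_of (hv : v ^ 4 = 1) (i : Fin W.n) (o : O) :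
    W.cosetTr O v i (of ℂ O o) = (W.chi i (v * o) + W.chi i (v⁻¹ * o)) / 2 := by
  have hinv : v ^ 3 = v⁻¹ := eq_inv_of_mul_eq_one_left (by rw [← pow_succ, hv])
  have hmap : MonoidAlgebra.mapDomainAlgHom ℂ ℂ O.subtype (of ℂ O o) = of ℂ G (o : G) := by simp
  rw [cosetTr_apply, hmap, eigenIdempotent_one_sub_eigenIdempotent_neg_one, hinv, mul_smul_comm,
    mul_add, ← map_mul, ← map_mul, map_smul, map_add, tr_of, tr_of, chi_mul_comm,
    chi_mul_comm i _ v⁻¹, smul_eq_mul]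
  ring

theorem cosetTr_mul_comm (hO : O ≤ Subgroup.centralizer {v}) (i : Fin W.n)
    (a b : MonoidAlgebra ℂ O) : W.cosetTr O v i (a * b) = W.cosetTr O v i (b * a) := by
  have hcomm (c : MonoidAlgebra ℂ O) : Commute (MonoidAlgebra.mapDomainAlgHom ℂ ℂ O.subtype c)
      (eigenIdempotent v 1 - eigenIdempotent v (-1)) :=
    (commute_mapDomain_eigenIdempotent hO c 1).sub_right
      (commute_mapDomain_eigenIdempotent hO c (-1))
  have hmul := map_mul (MonoidAlgebra.mapDomainAlgHom ℂ ℂ O.subtype)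
  rw [cosetTr_apply, cosetTr_apply, hmul, hmul, mul_assoc, (hcomm b).eq, ← mul_assoc,
    tr_mul_comm, ← mul_assoc]

theorem exists_cosetTr_eq (hO : O ≤ Subgroup.centralizer {v}) (hv : v ^ 4 = 1) (i : Fin W.n)
    {a : MonoidAlgebra ℂ O} (ha : IsIdempotentElem a) : ∃ c : ℤ, W.cosetTr O v i a = c := by
  have hrank (c : ℂ) (hc : c ^ 4 = 1) : ∃ r : ℕ, W.tr i
      (MonoidAlgebra.mapDomainAlgHom ℂ ℂ O.subtype a * eigenIdempotent v c) = r :=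
    ⟨_, tr_eq_rank <| (ha.map (MonoidAlgebra.mapDomainAlgHom ℂ ℂ O.subtype)).mul_of_commute
      (commute_mapDomain_eigenIdempotent hO a c) (isIdempotentElem_eigenIdempotent hv hc)⟩
  obtain ⟨r, hr⟩ := hrank 1 (by norm_num)
  obtain ⟨s, hs⟩ := hrank (-1) (by norm_num)
  exact ⟨r - s, by rw [cosetTr_apply, mul_sub, map_sub, hr, hs]; push_cast; rfl⟩

section Coefficients

variable [Fintype G] {WO : WedderburnDecomposition O}
  (hO : O ≤ Subgroup.centralizer {v}) (hv : orderOf v = 4) (hodd : Odd (Nat.card O))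
  (hcard : Nat.card (Subgroup.centralizer {v}) = 4 * Nat.card O)
include hO hv hodd hcard

theorem inducedCoeff_cosetExtend [Fintype O] (F : O → ℂ) (i : Fin W.n) :
    W.inducedCoeff (Subgroup.centralizer {v}) (cosetExtend v F) i =
      (Nat.card O : ℂ)⁻¹ * ∑ o : O, (W.chi i (v * o) + W.chi i (v⁻¹ * o)) / 2 * F o⁻¹ := by
  rw [inducedCoeff, sum_cosetExtend_inv_mul hO hv hodd, hcard, Nat.cast_mul, mul_inv,
    mul_comm (_ : ℂ)⁻¹, mul_assoc, Finset.mul_sum]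
  congr 1
  refine Finset.sum_congr rfl fun o _ => ?_
  push_cast
  ring

theorem inducedCoeff_cosetExtend_chi (ξ : Fin WO.n) (i : Fin W.n) :
    W.inducedCoeff (Subgroup.centralizer {v}) (cosetExtend v (WO.chi ξ)) i =
      W.cosetTr O v i (WO.primitiveIdempotent ξ) := by
  have := Fintype.ofFinite O
  have hv4 : v ^ 4 = 1 := hv ▸ pow_orderOf_eq_one v
  rw [inducedCoeff_cosetExtend hO hv hodd hcard, inv_mul_eq_iff_eq_mul₀
    (Nat.cast_ne_zero.2 Nat.card_pos.ne'), mul_comm, Nat.card_eq_fintype_card,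
    ← sum_sum_mul_chi_mul_chi_inv (W := WO) (fun η => W.cosetTr O v i (WO.primitiveIdempotent η))]
  refine Finset.sum_congr rfl fun o _ => ?_
  rw [← cosetTr_of hv4, traceFunction_eq_sum (W := WO) (cosetTr_mul_comm hO i)]
  simp only [tr_of]

theorem exists_inducedCoeff_cosetExtend_chi_eq (ξ : Fin WO.n) (i : Fin W.n) :
    ∃ c : ℤ, W.inducedCoeff (Subgroup.centralizer {v}) (cosetExtend v (WO.chi ξ)) i = c := by
  rw [inducedCoeff_cosetExtend_chi hO hv hodd hcard]
  exact exists_cosetTr_eq hO (hv ▸ pow_orderOf_eq_one v) i (isIdempotentElem_primitiveIdempotent ξ)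

theorem sum_inducedCoeff_cosetExtend_mul_degree (i : Fin W.n) :
    ∑ ξ, W.inducedCoeff (Subgroup.centralizer {v}) (cosetExtend v (WO.chi ξ)) i * WO.degree ξ =
      (W.chi i v + W.chi i v⁻¹) / 2 := by
  have h := cosetTr_of (W := W) (O := O) (hv ▸ pow_orderOf_eq_one v) i 1
  rw [Subgroup.coe_one, mul_one, mul_one, traceFunction_eq_sum (W := WO) (cosetTr_mul_comm hO i)]
    at h
  simpa only [tr_of, chi_one, inducedCoeff_cosetExtend_chi hO hv hodd hcard] using h

theorem inducedCoeff_cosetExtend_chi_of_chi_eq_one {i₀ : Fin W.n}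
    (hi₀ : ∀ g, W.chi i₀ g = 1) {ξ₀ : Fin WO.n} (hξ₀ : ∀ o, WO.chi ξ₀ o = 1) (ξ : Fin WO.n) :
    W.inducedCoeff (Subgroup.centralizer {v}) (cosetExtend v (WO.chi ξ)) i₀ =
      if ξ₀ = ξ then 1 else 0 := by
  have := Fintype.ofFinite O
  have h := sum_chi_mul_chi_inv (W := WO) ξ₀ ξ
  simp only [hξ₀, one_mul] at h
  rw [inducedCoeff_cosetExtend hO hv hodd hcard, inv_mul_eq_iff_eq_mul₀
    (Nat.cast_ne_zero.2 Nat.card_pos.ne'), mul_ite, mul_one, mul_zero, Nat.card_eq_fintype_card,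
    ← h]
  exact Finset.sum_congr rfl fun o _ => by rw [hi₀, hi₀]; ring

theorem inducedCoeff_cosetExtend_chi_dual {π : Fin W.n → Fin W.n}
    (hπ : ∀ i g, W.chi (π i) g = W.chi i g⁻¹) {δ : Fin WO.n → Fin WO.n}
    (hδ : ∀ ξ o, WO.chi (δ ξ) o = WO.chi ξ o⁻¹) (ξ : Fin WO.n) (i : Fin W.n) :
    W.inducedCoeff (Subgroup.centralizer {v}) (cosetExtend v (WO.chi ξ)) (π i) =
      W.inducedCoeff (Subgroup.centralizer {v}) (cosetExtend v (WO.chi (δ ξ))) i := by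
  have := Fintype.ofFinite O
  rw [inducedCoeff_cosetExtend hO hv hodd hcard, inducedCoeff_cosetExtend hO hv hodd hcard,
    ← Equiv.sum_comp (Equiv.inv O)]
  congr 1
  refine Finset.sum_congr rfl fun o _ => ?_
  have hcomm := commute_zpow_of_le_centralizer hO 1 o
  rw [zpow_one] at hcomm
  rw [Equiv.inv_apply, hπ, hπ, hδ, Subgroup.coe_inv, ← hcomm.mul_inv, inv_inv, inv_inv,
    mul_inv_rev, inv_inv, hcomm.inv_left.symm.eq, add_comm]

omit [Fintype G] in
theorem cosetExtend_chi_conj_of_mem_centralizer [Finite G] (ξ : Fin WO.n) {l : G}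
    (hl : l ∈ Subgroup.centralizer {v}) (g : G) :
    cosetExtend v (WO.chi ξ) (l * g * l⁻¹) = cosetExtend v (WO.chi ξ) g := by
  obtain ⟨k, o, rfl⟩ := exists_eq_zpow_mul hO hv hodd hcard hl
  have hα (u : O) : (MulAut.conj o u : G) = v ^ k * o * u * (v ^ k * o)⁻¹ := by
    have h := (commute_zpow_of_le_centralizer hO k (MulAut.conj o u)).eq
    rw [← mul_inv_eq_iff_eq_mul.2 h, MulAut.conj_apply]
    simp [mul_assoc]
  rw [cosetExtend_conj hv hodd _ (α := (MulAut.conj o).toEquiv) hα (σ := 1)]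
  · congr 1
    exact funext fun u => chi_conj ξ o u
  · rw [Units.val_one, zpow_one, mul_inv_eq_iff_eq_mul]
    exact Subgroup.mem_centralizer_singleton_iff.1 hl

theorem sum_inducedCoeff_cosetExtend_chi_mul (hw : w * v * w⁻¹ = v⁻¹)
    {α : O ≃* O} (hα : ∀ o, (α o : G) = w * o * w⁻¹) {ε : Fin WO.n → Fin WO.n}
    (hε : ∀ ξ o, WO.chi (ε ξ) o = WO.chi ξ (α o)) (ξ η : Fin WO.n) :
    ∑ i, W.inducedCoeff (Subgroup.centralizer {v}) (cosetExtend v (WO.chi ξ)) i *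
        W.inducedCoeff (Subgroup.centralizer {v}) (cosetExtend v (WO.chi η)) i =
      (if ξ = η then 2 else 0) + (if ε ξ = η then 2 else 0) := by
  have := Fintype.ofFinite O
  have hsupp (ζ : Fin WO.n) (g : G) :
      cosetExtend v (WO.chi ζ) g ≠ 0 → v ∈ Subgroup.zpowers g :=
    mem_zpowers_of_cosetExtend_ne_zero hO hv hodd
  have hconj (y : G) :
      cosetExtend v (WO.chi ξ) (w * y * w⁻¹) = cosetExtend v (WO.chi (ε ξ)) y := by
    rw [cosetExtend_conj hv hodd _ (α := α.toEquiv) hα (σ := -1) (by simpa using hw)]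
    congr 1
    exact funext fun o => (hε ξ o).symm
  have hinner (ζ : Fin WO.n) : ∑ y, cosetExtend v (WO.chi η) y⁻¹ * cosetExtend v (WO.chi ζ) y =
      (Nat.card (Subgroup.centralizer {v}) : ℂ) * if ζ = η then 2 else 0 := by
    have hval (o : O) : 2 * WO.chi η o⁻¹ * (cosetExtend v (WO.chi ζ) (v * o) +
        cosetExtend v (WO.chi ζ) (v⁻¹ * o)) = 8 * (WO.chi ζ o * WO.chi η o⁻¹) := by
      have h₁ := cosetExtend_zpow_mul hv hodd (WO.chi ζ) 1 o
      have h₂ := cosetExtend_zpow_mul hv hodd (WO.chi ζ) (-1) o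
      rw [Units.val_one, zpow_one] at h₁
      rw [Units.val_neg, Units.val_one, zpow_neg_one] at h₂
      rw [h₁, h₂]
      ring
    rw [sum_cosetExtend_inv_mul hO hv hodd, Finset.sum_congr rfl fun o _ => hval o,
      ← Finset.mul_sum, sum_chi_mul_chi_inv, hcard, Nat.card_eq_fintype_card]
    split_ifs
    · push_cast
      ring
    · simp
  rw [sum_inducedCoeff_mul_inducedCoeff hv hw (hsupp ξ) (hsupp η) fun _ hl =>
    cosetExtend_chi_conj_of_mem_centralizer hO hv hodd hcard ξ hl]
  simp only [hconj, mul_add, Finset.sum_add_distrib, hinner]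
  rw [inv_mul_cancel_left₀ (Nat.cast_ne_zero.2 Nat.card_pos.ne'),
    inv_mul_cancel_left₀ (Nat.cast_ne_zero.2 Nat.card_pos.ne')]

end Coefficients

end WedderburnDecomposition

end OddComplementCoefficients

section IntegerGramMatrices

variable {ι κ : Type*} [Fintype ι] [DecidableEq κ] {c : κ → ι → ℤ} {ε δ : κ → κ}

theorem sum_add_sq_le_eight (hε : Function.Injective ε)
    (hc : ∀ ξ η, ∑ l, c ξ l * c η l = (if ξ = η then 2 else 0) + if ε ξ = η then 2 else 0)
    {ξ η : κ} (hne : ξ ≠ η) : ∑ l, (c ξ l + c η l) ^ 2 ≤ 8 := by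
  have hexpand (l : ι) :
      (c ξ l + c η l) ^ 2 = c ξ l * c ξ l + 2 * (c ξ l * c η l) + c η l * c η l := by ring
  simp only [hexpand, Finset.sum_add_distrib, ← Finset.mul_sum, hc, if_pos, if_neg hne, zero_add]
  have h₁ : ε ξ = η → ε ξ ≠ ξ := fun h h' => hne (h'.symm.trans h)
  have h₂ : ε ξ = η → ε η ≠ η := fun h h' => hne (hε (h.trans h'.symm))
  split_ifs <;> first | exact absurd ‹_› (h₁ ‹_›) | exact absurd ‹_› (h₂ ‹_›) | norm_num

theorem eq_zero_of_support_subset {f b d d' c₀ : ι → ℤ} {π : ι → ι} {i₀ i j k : ι} (hij : i ≠ j)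
    (hi : i ≠ i₀) (hj : j ≠ i₀) (hk : k ≠ i₀) (hci : c₀ i = -1) (hcj : c₀ j = -1)
    (hck : c₀ k = 1) (hc₀ : ∀ l, l ≠ i₀ → l ≠ i → l ≠ j → l ≠ k → c₀ l = 0) (hf : ∀ l, 0 < f l)
    (hb : ∀ l, l ≠ i₀ → 0 < b l) (hne : f i = f j → b i ≠ b j)
    (hπ : π i = i ∧ π j = j ∧ π k = k) (hdπ : ∀ l, d (π l) = d' l) (hd₀ : d i₀ = 0)
    (hcd : ∑ l, c₀ l * d l = 0) (hsq : ∑ l, (d l + d' l) ^ 2 ≤ 8) (hdf : ∑ l, d l * f l = 0)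
    (hdf' : ∑ l, d' l * f l = 0) (hdb : ∑ l, d l * b l = 0) (hdb' : ∑ l, d' l * b l = 0) :
    d i = 0 ∧ d j = 0 := by
  have hik : i ≠ k := by rintro rfl; omega
  have hjk : j ≠ k := by rintro rfl; omega
  rw [sum_mul_eq_of_support_subset hij hik hjk hi hj hk hci hcj hck hc₀ hd₀] at hcd
  refine eq_zero_of_sum_sq_le_eight (c := fun l => d l + d' l) hij hik hjk hf (hb i hi)
    (hb j hj) (hb k hk) hne ?_ ?_ ?_ hsq ?_ ?_
  · rw [← hdπ, hπ.1, two_mul]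
  · rw [← hdπ, hπ.2.1, two_mul]
  · rw [← hdπ, hπ.2.2]
    omega
  · simp only [add_mul, Finset.sum_add_distrib, hdf, hdf', add_zero]
  · simp only [add_mul, Finset.sum_add_distrib, hdb, hdb', add_zero]

theorem exists_eq_neg_one_of_sum_mul_eq {f b : ι → ℤ} {π : ι → ι} {i₀ : ι} {ξ₀ : κ}
    (hε : Function.Injective ε) (hε₀ : ε ξ₀ = ξ₀) (hδ : ∀ ξ, δ ξ = ξ ↔ ξ = ξ₀)
    (hcπ : ∀ ξ l, c ξ (π l) = c (δ ξ) l) (hfπ : ∀ l, f (π l) = f l) (hbπ : ∀ l, b (π l) = b l)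
    (hf : ∀ l, 0 < f l) (hf₀ : f i₀ = 1) (hb₀ : b i₀ = 0) (hb : ∀ l, l ≠ i₀ → 0 < b l)
    (hc : ∀ ξ η, ∑ l, c ξ l * c η l = (if ξ = η then 2 else 0) + if ε ξ = η then 2 else 0)
    (hc₀ : ∀ ξ, c ξ i₀ = if ξ₀ = ξ then 1 else 0) (hcf : ∀ ξ, ∑ l, (c ξ l : ℚ) * f l = 0)
    (hcb : ∀ ξ, ∑ l, (c ξ l : ℚ) * b l = 0)
    (hcbf : ∀ ξ, ∑ l, (c ξ l : ℚ) * (b l ^ 2 / f l) = 0) :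
    ∃ i j, i ≠ i₀ ∧ (∀ ξ, c ξ i = if ξ = ξ₀ then -1 else 0) ∧
      (∀ ξ, c ξ j = if ξ = ξ₀ then -1 else 0) ∧
      (b j * f i - b i * f j) ^ 2 = b i ^ 2 * f j + b j ^ 2 * f i := by
  obtain ⟨i, j, k, hij, hi, hj, hk, hci, hcj, hck, hsupp, heq⟩ :=
    exists_of_sum_sq_eq_four (k := ℚ) (c := c ξ₀) (f := fun l => f l) (b := fun l => b l)
      (by rw [hc₀, if_pos rfl]) (by simp only [sq, hc, if_pos, hε₀]; norm_num)
      (fun l => Int.cast_pos.2 (hf l)) (by rw [hf₀, Int.cast_one]) (by rw [hb₀, Int.cast_zero])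
      (fun l hl => Int.cast_pos.2 (hb l hl)) (hcf ξ₀) (hcb ξ₀) (hcbf ξ₀)
  replace heq : (b j * f i - b i * f j) ^ 2 = b i ^ 2 * f j + b j ^ 2 * f i := by
    exact_mod_cast heq
  have hne (h : f i = f j) : b i ≠ b j := fun h' => by
    rw [h, h', sub_self] at heq
    have := mul_pos (pow_pos (hb j hj) 2) (hf j)
    omega
  have hbl (l) : b l = 0 ↔ l = i₀ :=
    ⟨fun h => by_contra fun hl => (hb l hl).ne' h, fun h => h ▸ hb₀⟩
  have hfix := fixed_of_support_subset hci hcj hck hi hj hk hsupp hne hbl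
    (fun l => by rw [hcπ, (hδ ξ₀).2 rfl]) hfπ hbπ
  have hzero (ξ) (hξ : ξ ≠ ξ₀) : c ξ i = 0 ∧ c ξ j = 0 :=
    eq_zero_of_support_subset hij hi hj hk hci hcj hck hsupp hf hb hne hfix (hcπ ξ)
      (by rw [hc₀, if_neg hξ.symm])
      (by rw [hc, hε₀, if_neg hξ.symm, add_zero])
      (sum_add_sq_le_eight hε hc fun h => hξ ((hδ ξ).1 h.symm))
      (by exact_mod_cast hcf ξ) (by exact_mod_cast hcf (δ ξ))
      (by exact_mod_cast hcb ξ) (by exact_mod_cast hcb (δ ξ))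
  refine ⟨i, j, hi, fun ξ => ?_, fun ξ => ?_, heq⟩ <;> split_ifs with h
  exacts [h ▸ hci, (hzero ξ h).1, h ▸ hcj, (hzero ξ h).2]

end IntegerGramMatrices

section OddOrderCharacters

namespace WedderburnDecomposition

variable {H : Type*} [Group H] [Finite H] {W : WedderburnDecomposition H}

theorem injective_of_chi_comp {φ : H ≃* H} {ε : Fin W.n → Fin W.n}
    (hε : ∀ i h, W.chi (ε i) h = W.chi i (φ h)) : Function.Injective ε := fun i j hij =>
  chi_injective (funext fun h => by rw [← φ.apply_symm_apply h, ← hε, ← hε, hij])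

theorem chi_inv_index_eq_iff (hodd : Odd (Nat.card H)) {i₀ : Fin W.n}
    (h₀ : ∀ h, W.chi i₀ h = 1) {δ : Fin W.n → Fin W.n} (hδ : ∀ i h, W.chi (δ i) h = W.chi i h⁻¹)
    (i : Fin W.n) : δ i = i ↔ i = i₀ := by
  refine ⟨fun h => eq_of_chi_inv_eq_chi hodd h₀ fun g => by rw [← hδ, h], ?_⟩
  rintro rfl
  exact chi_injective (funext fun g => by rw [hδ, h₀, h₀])

end WedderburnDecomposition

end OddOrderCharacters

section CentralizerWithOddComplement

variable {G : Type*} [Group G] [Finite G] {O : Subgroup G} {v w : G}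

theorem exists_mulEquiv_conj (hO : O ≤ Subgroup.centralizer {v}) (hv : orderOf v = 4)
    (hodd : Odd (Nat.card O)) (hcard : Nat.card (Subgroup.centralizer {v}) = 4 * Nat.card O)
    (hw : w * v * w⁻¹ = v⁻¹) : ∃ α : O ≃* O, ∀ o, (α o : G) = w * o * w⁻¹ := by
  have hmap : O.map (MulAut.conj w).toMonoidHom ≤ O := by
    rintro _ ⟨o, ho, rfl⟩
    rw [mem_iff_pow_card_eq_one hO hv hodd hcard, ← map_conj_centralizer hw, ← map_pow,
      ((mem_iff_pow_card_eq_one hO hv hodd hcard).1 ho).2, map_one]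
    exact ⟨Subgroup.mem_map_of_mem _ (hO ho), rfl⟩
  have heq : O.map (MulAut.conj w).toMonoidHom = O :=
    Subgroup.eq_of_le_of_card_ge hmap (Subgroup.card_map_of_injective (MulAut.conj w).injective).ge
  exact ⟨(O.equivMapOfInjective _ (MulAut.conj w).injective).trans (MulEquiv.subgroupCongr heq),
    fun o => rfl⟩

open WedderburnDecomposition

variable {W : WedderburnDecomposition G} {K : Finset G} {x : G} {p : ℕ}

omit [Finite G] in
theorem WedderburnDecomposition.degree_eq_of_chi_eq_chi_inv {i j : Fin W.n}
    (hij : ∀ g, W.chi j g = W.chi i g⁻¹) : W.degree j = W.degree i := by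
  exact_mod_cast (by rw [← chi_one, hij, inv_one, chi_one] : (W.degree j : ℂ) = W.degree i)

omit [Finite G] in
theorem WedderburnDecomposition.negOneMult_eq_of_chi_eq_chi_inv (hx : x * x = 1) {i j : Fin W.n}
    (hij : ∀ g, W.chi j g = W.chi i g⁻¹) : W.negOneMult x j = W.negOneMult x i := by
  have h := hij x
  rw [inv_eq_of_mul_eq_one_left hx, chi_eq_degree_sub_two_mul_negOneMult hx,
    chi_eq_degree_sub_two_mul_negOneMult hx, degree_eq_of_chi_eq_chi_inv hij] at h
  exact_mod_cast mul_left_cancel₀ two_ne_zero (sub_right_injective h)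

omit [Finite G] in
theorem WedderburnDecomposition.chi_eq_neg_one_of_inducedCoeff_eq [Fintype G]
    (hO : O ≤ Subgroup.centralizer {v}) (hv : orderOf v = 4) (hodd : Odd (Nat.card O))
    (hcard : Nat.card (Subgroup.centralizer {v}) = 4 * Nat.card O) (hw : w * v * w⁻¹ = v⁻¹)
    {WO : WedderburnDecomposition O} {ξ₀ : Fin WO.n} (hξ₀ : ∀ o, WO.chi ξ₀ o = 1) {i : Fin W.n}
    (hi : ∀ ξ, W.inducedCoeff (Subgroup.centralizer {v}) (cosetExtend v (WO.chi ξ)) i =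
      if ξ = ξ₀ then -1 else 0) : W.chi i v = -1 := by
  have h := sum_inducedCoeff_cosetExtend_mul_degree (W := W) (WO := WO) hO hv hodd hcard i
  simp only [hi, ite_mul, zero_mul, Finset.sum_ite_eq', Finset.mem_univ, if_pos,
    degree_eq_one_of_chi_eq_one hξ₀, ← hw, chi_conj, Nat.cast_one] at h
  linear_combination -h

theorem InvertedRootClass.exists_chi_eq_neg_one (Q : InvertedRootClass K x v w p)
    (hO : O ≤ Subgroup.centralizer {v}) (hodd : Odd (Nat.card O))
    (hcard : Nat.card (Subgroup.centralizer {v}) = 4 * Nat.card O) {i₀ : Fin W.n}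
    (h₀ : ∀ g, W.chi i₀ g = 1) : ∃ i j, i ≠ i₀ ∧ W.chi i v = -1 ∧ W.chi j v = -1 ∧
      ((W.negOneMult x j : ℤ) * W.degree i - W.negOneMult x i * W.degree j) ^ 2 =
        W.negOneMult x i ^ 2 * W.degree j + W.negOneMult x j ^ 2 * W.degree i := by
  have := Fintype.ofFinite G
  have hv := Q.orderOf_eq_four
  have hw := Q.conj_eq_inv
  obtain ⟨WO⟩ := WedderburnDecomposition.nonempty (H := O)
  obtain ⟨ξ₀, hξ₀⟩ := exists_chi_eq_one (W := WO)
  obtain ⟨α, hα⟩ := exists_mulEquiv_conj hO hv hodd hcard hw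
  choose ε hε using exists_chi_comp_mulEquiv (W := WO) α
  choose δ hδ using exists_chi_inv (W := WO)
  choose π hπ using exists_chi_inv (W := W)
  choose c hc using exists_inducedCoeff_cosetExtend_chi_eq (W := W) (WO := WO) hO hv hodd hcard
  have hrel (ξ) := Q.sum_intCast_mul_eq_zero _
    (fun _ => mem_zpowers_of_cosetExtend_ne_zero hO hv hodd) (hc ξ)
  have hcπ (ξ l) : c ξ (π l) = c (δ ξ) l := by
    exact_mod_cast (hc ξ (π l)).symm.trans
      ((inducedCoeff_cosetExtend_chi_dual hO hv hodd hcard hπ hδ ξ l).trans (hc (δ ξ) l))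
  have hgram (ξ η) :
      ∑ l, c ξ l * c η l = (if ξ = η then 2 else 0) + if ε ξ = η then 2 else 0 := by
    have h := sum_inducedCoeff_cosetExtend_chi_mul (W := W) hO hv hodd hcard hw hα hε ξ η
    simp only [hc] at h
    exact_mod_cast h
  have hc₀ (ξ) : c ξ i₀ = if ξ₀ = ξ then 1 else 0 := by
    exact_mod_cast (hc ξ i₀).symm.trans
      (inducedCoeff_cosetExtend_chi_of_chi_eq_one hO hv hodd hcard h₀ hξ₀ ξ)
  have hχ (l) (hl : ∀ ξ, c ξ l = if ξ = ξ₀ then -1 else 0) : W.chi l v = -1 :=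
    chi_eq_neg_one_of_inducedCoeff_eq hO hv hodd hcard hw hξ₀ fun ξ => by
      rw [hc, hl]
      push_cast
      rfl
  obtain ⟨i, j, hi, hci, hcj, heq⟩ := exists_eq_neg_one_of_sum_mul_eq (f := fun l => W.degree l)
    (b := fun l => W.negOneMult x l) (injective_of_chi_comp hε)
    (chi_injective (funext fun o => by rw [hε, hξ₀, hξ₀]))
    (chi_inv_index_eq_iff hodd hξ₀ hδ) hcπ
    (fun l => by rw [degree_eq_of_chi_eq_chi_inv (hπ l)])
    (fun l => by rw [negOneMult_eq_of_chi_eq_chi_inv Q.mul_self_eq_one (hπ l)])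
    (fun l => Nat.cast_pos.2 (degree_pos l))
    (by rw [degree_eq_one_of_chi_eq_one h₀, Nat.cast_one])
    (by rw [negOneMult_eq_zero_of_chi_eq_one h₀ Q.mul_self_eq_one, Nat.cast_zero])
    (fun l hl => Nat.cast_pos.2 (Q.negOneMult_pos h₀ l hl)) hgram hc₀
    (fun ξ => (hrel ξ).1) (fun ξ => (hrel ξ).2.1) (fun ξ => (hrel ξ).2.2)
  exact ⟨i, j, hi, hχ i hci, hχ j hcj, heq⟩

theorem InvertedRootClass.card_centralizer_ne (Q : InvertedRootClass K x v w p)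
    (hO : O ≤ Subgroup.centralizer {v}) (hodd : Odd (Nat.card O)) :
    Nat.card (Subgroup.centralizer {v}) ≠ 4 * Nat.card O := by
  intro hcard
  obtain ⟨W⟩ := WedderburnDecomposition.nonempty (H := G)
  obtain ⟨i₀, h₀⟩ := WedderburnDecomposition.exists_chi_eq_one (W := W)
  obtain ⟨i, j, hi, hvi, hvj, heq⟩ := Q.exists_chi_eq_neg_one hO hodd hcard h₀
  have hmod (l) (hl : W.chi l v = -1) :
      (W.degree l : ℤ) ≡ W.negOneMult x l - 1 [ZMOD 4] := by
    obtain ⟨q, hq⟩ := Q.exists_chi_eq (W := W) l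
    rw [hl] at hq
    have hq' : (-1 : ℤ) = W.degree l - W.negOneMult x l - 4 * q := by exact_mod_cast hq
    exact (Int.modEq_iff_dvd.2 ⟨-q, by linarith⟩)
  have hz := eq_zero_of_sq_sub_eq ((Int.even_coe_nat _).2 (Q.even_negOneMult i))
    ((Int.even_coe_nat _).2 (Q.even_negOneMult j)) (hmod i hvi) (hmod j hvj) heq
  exact (Q.negOneMult_pos h₀ i hi).ne' (Nat.cast_eq_zero.1 hz.1)

end CentralizerWithOddComplement

section Normalizers

variable {G : Type*} [Group G]

theorem exists_mem_normalizer_pow_mem [Finite G] {p : ℕ} [Fact p.Prime] {H R : Subgroup G}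
    (hR : IsPGroup p R) (hlt : H < R) :
    ∃ w ∈ R, w ∉ H ∧ w ∈ Subgroup.normalizer (H : Set G) ∧ w ^ p ∈ H := by
  classical
  have := hR.isNilpotent
  have hlt' := Group.normalizerCondition_of_isNilpotent (H.subgroupOf R)
    (lt_top_iff_ne_top.2 fun h => hlt.not_ge (Subgroup.subgroupOf_eq_top.1 h))
  rw [← Subgroup.subgroupOf_normalizer_eq hlt.le] at hlt'
  obtain ⟨g, hgN, hgH⟩ := SetLike.exists_of_lt hlt'
  have hpow : ∃ m : ℕ, (g : G) ^ p ^ m ∈ H := by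
    obtain ⟨m, hm⟩ := hR g
    exact ⟨m, by rw [← SubgroupClass.coe_pow, hm]; exact H.one_mem⟩
  obtain ⟨m, hm⟩ : ∃ m, Nat.find hpow = m + 1 := Nat.exists_eq_succ_of_ne_zero fun h =>
    hgH (by simpa [h, Subgroup.mem_subgroupOf] using Nat.find_spec hpow)
  refine ⟨g ^ p ^ m, R.pow_mem g.2 _, Nat.find_min hpow (by omega),
    pow_mem (Subgroup.mem_subgroupOf.1 hgN) _, ?_⟩
  rw [← pow_mul, ← pow_succ, ← hm]
  exact Nat.find_spec hpow

theorem conj_zpow_eq {g t : G} {j : ℤ} (h : g * t * g⁻¹ = t ^ j) (k : ℤ) :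
    g * t ^ k * g⁻¹ = t ^ (j * k) := by
  rw [← conj_zpow, h, zpow_mul]

end Normalizers

section LoneInvolutions

/-- `x` is an involution that commutes with no other involution. If `G` is finite, this says that
`x` is the only involution of each Sylow 2-subgroup containing it, so that these subgroups are
cyclic or generalized quaternion. -/
structure IsLoneInvolution {G : Type*} [Group G] (x : G) : Prop where
  mul_self_eq_one : x * x = 1
  ne_one : x ≠ 1
  eq_one_or_eq : ∀ z, z * z = 1 → z * x = x * z → z = 1 ∨ z = x

theorem exists_two_pow_dvd_mul_add {j : ℤ} (hj : j % 4 = 1) (m : ℤ) (N : ℕ) :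
    ∃ i : ℤ, 2 ^ N ∣ j * i + 2 * m + i := by
  obtain ⟨u, rfl⟩ : ∃ u : ℤ, j = 2 * (2 * u + 1) - 1 := ⟨(j - 1) / 4, by omega⟩
  obtain ⟨a, c, hac⟩ : IsCoprime (2 * u + 1) ((2 : ℤ) ^ N) :=
    IsCoprime.pow_right ⟨1, -u, by ring⟩
  exact ⟨-m * a, 2 * m * c, by linear_combination -(2 * m) * hac⟩

namespace IsLoneInvolution

variable {G : Type*} [Group G] {x t g : G} {n : ℕ} {j : ℤ}

theorem orderOf_eq (hx : IsLoneInvolution x) (ht : t ^ 2 ^ n = x) : orderOf t = 2 ^ (n + 1) := by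
  refine orderOf_eq_prime_pow (ht ▸ hx.ne_one) ?_
  rw [pow_succ, pow_mul, ht, pow_two, hx.mul_self_eq_one]

theorem zpow_eq_one_iff (hx : IsLoneInvolution x) (ht : t ^ 2 ^ n = x) (k : ℤ) :
    t ^ k = 1 ↔ (2 ^ (n + 1) : ℤ) ∣ k := by
  rw [← orderOf_dvd_iff_zpow_eq_one, hx.orderOf_eq ht, Nat.cast_pow, Nat.cast_ofNat]

theorem odd_of_conj_eq_zpow (hx : IsLoneInvolution x) (ht : t ^ 2 ^ n = x)
    (hj : g * t * g⁻¹ = t ^ j) : j % 2 = 1 := by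
  by_contra h
  refine hx.ne_one ((conj_eq_one_iff (a := g)).1 ?_)
  have hconj := conj_zpow_eq hj (2 ^ n : ℕ)
  rw [zpow_natCast, ht] at hconj
  obtain ⟨k, rfl⟩ : (2 : ℤ) ∣ j := by omega
  rw [hconj, hx.zpow_eq_one_iff ht]
  exact ⟨k, by push_cast; ring⟩

theorem conj_eq_self (hx : IsLoneInvolution x) (ht : t ^ 2 ^ n = x) (hj : g * t * g⁻¹ = t ^ j) :
    g * x * g⁻¹ = x := by
  have hconj := conj_zpow_eq hj (2 ^ n : ℕ)
  obtain ⟨k, hk⟩ : ∃ k, j = 2 * k + 1 := ⟨j / 2, by have := hx.odd_of_conj_eq_zpow ht hj; omega⟩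
  rw [zpow_natCast, ht] at hconj
  rw [hconj, ← ht, ← zpow_natCast, ← mul_inv_eq_one, ← zpow_neg, ← zpow_add,
    hx.zpow_eq_one_iff ht]
  exact ⟨k, by rw [hk]; push_cast; ring⟩

/-- The coset `g⟨t⟩` contains an involution commuting with `x`. -/
theorem mem_zpowers_of_conj_eq_zpow (hx : IsLoneInvolution x) (ht : t ^ 2 ^ n = x)
    (hg : g ^ 2 ^ (n + 1) = 1) (hgg : g ^ 2 ∈ Subgroup.zpowers t) (hj : g * t * g⁻¹ = t ^ j)
    (hj4 : j % 4 = 1) : g ∈ Subgroup.zpowers t := by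
  obtain ⟨l, hl⟩ := Subgroup.mem_zpowers_iff.1 hgg
  obtain ⟨m, rfl⟩ : (2 : ℤ) ∣ l := by
    rw [pow_succ', pow_mul, ← hl, ← zpow_natCast, ← zpow_mul, hx.zpow_eq_one_iff ht, pow_succ',
      Nat.cast_pow, Nat.cast_ofNat] at hg
    exact Int.dvd_of_mul_dvd_mul_right (by positivity) hg
  obtain ⟨i, hi⟩ := exists_two_pow_dvd_mul_add hj4 m (n + 1)
  have hsq : g * t ^ i * (g * t ^ i) = 1 :=
    calc g * t ^ i * (g * t ^ i) = (g * t ^ i * g⁻¹) * g ^ 2 * t ^ i := by group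
      _ = t ^ (j * i + 2 * m + i) := by rw [conj_zpow_eq hj, ← hl, zpow_add, zpow_add]
      _ = 1 := (hx.zpow_eq_one_iff ht _).2 hi
  have hgx : Commute g x := mul_inv_eq_iff_eq_mul.1 (hx.conj_eq_self ht hj)
  have htx : Commute (t ^ i) x := ht ▸ ((Commute.refl t).zpow_left i).pow_right _
  refine (Subgroup.mul_mem_cancel_right _ (Subgroup.zpow_mem_zpowers t i)).1 ?_
  rcases hx.eq_one_or_eq _ hsq (hgx.mul_left htx) with h | h
  · exact h ▸ one_mem _
  · rw [h, ← ht]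
    exact Subgroup.npow_mem_zpowers _ _

theorem exists_conj_eq_zpow [Finite G] (hx : IsLoneInvolution x) (ht : t ^ 2 ^ n = x)
    {R : Subgroup G} (hR : IsPGroup 2 R) (hmax : ∀ g ∈ R, g ^ 2 ^ (n + 1) = 1)
    (hlt : Subgroup.zpowers t < R) :
    0 < n ∧ ∃ w ∈ R, ∃ j : ℤ, w * t * w⁻¹ = t ^ j ∧ j % 4 = 3 := by
  have : Fact (Nat.Prime 2) := ⟨Nat.prime_two⟩
  obtain ⟨w, hwR, hwt, hwN, hww⟩ := exists_mem_normalizer_pow_mem hR hlt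
  obtain ⟨j, hj⟩ := (Subgroup.mem_normalizer_iff.1 hwN t).1 (Subgroup.mem_zpowers t)
  have hne : ∀ i : ℤ, w * t * w⁻¹ = t ^ i → i % 4 ≠ 1 := fun i hi hi4 =>
    hwt (hx.mem_zpowers_of_conj_eq_zpow ht (hmax w hwR) hww hi hi4)
  have hodd := hx.odd_of_conj_eq_zpow ht hj.symm
  have hj4 := hne j hj.symm
  refine ⟨Nat.pos_of_ne_zero ?_, w, hwR, j, hj.symm, by omega⟩
  rintro rfl
  refine hne 1 ?_ rfl
  rw [← hj, ← mul_inv_eq_one, ← zpow_neg]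
  simp only
  rw [← zpow_add, hx.zpow_eq_one_iff ht]
  omega

/-- A larger 2-subgroup would induce on `⟨t⟩` an automorphism moving the elements of order four. -/
theorem eq_zpowers_of_le_centralizer [Finite G] (hx : IsLoneInvolution x) (ht : t ^ 2 ^ (n + 1) = x)
    {R : Subgroup G} (hR : IsPGroup 2 R) (hmax : ∀ g ∈ R, g ^ 2 ^ (n + 2) = 1)
    (hle : Subgroup.zpowers t ≤ R) (hRL : R ≤ Subgroup.centralizer {t ^ 2 ^ n}) :
    Subgroup.zpowers t = R := by
  by_contra hne
  obtain ⟨-, w, hwR, j, hj, hj4⟩ := hx.exists_conj_eq_zpow ht hR hmax (hle.lt_of_ne hne)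
  have hconj := conj_zpow_eq hj (2 ^ n : ℕ)
  rw [zpow_natCast, Subgroup.mem_centralizer_singleton_iff.1 (hRL hwR), mul_inv_cancel_right,
    ← zpow_natCast, ← mul_inv_eq_one, ← zpow_neg, ← zpow_add, hx.zpow_eq_one_iff ht] at hconj
  have hdvd : (2 ^ n * 4 : ℤ) ∣ 2 ^ n * (1 - j) := by
    convert hconj using 1 <;> push_cast <;> ring
  have := Int.dvd_of_mul_dvd_mul_left (by positivity) hdvd
  omega

end IsLoneInvolution

end LoneInvolutions

section SylowConjugation

variable {G : Type*} [Group G] {p : ℕ} [Fact p.Prime]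

theorem isPGroup_zpowers [Finite G] {g : G} {m : ℕ} (hg : g ^ p ^ m = 1) :
    IsPGroup p (Subgroup.zpowers g) := by
  obtain ⟨a, -, ha⟩ := (Nat.dvd_prime_pow Fact.out).1 (orderOf_dvd_of_pow_eq_one hg)
  exact IsPGroup.of_card (by rw [Nat.card_zpowers, ha])

theorem exists_conj_le_sylow [Finite G] (P : Sylow p G) {R : Subgroup G} (hR : IsPGroup p R) :
    ∃ c : G, ∀ g ∈ R, c * g * c⁻¹ ∈ P := by
  obtain ⟨S, hRS⟩ := hR.exists_le_sylow
  obtain ⟨c, rfl⟩ := MulAction.exists_smul_eq G S P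
  exact ⟨c, fun g hg => Subgroup.smul_mem_pointwise_smul _ (MulAut.conj c) _ (hRS hg)⟩

end SylowConjugation

section CyclicSylow

variable {L : Type*} [Group L] {P : Sylow 2 L} {s : L} {n : ℕ}

theorem mem_zpowers_of_orderOf_eq_four [Finite L] (hs : orderOf s = 2 ^ (n + 2)) {y : L}
    (hy : orderOf y = 4) (hys : y ∈ Subgroup.zpowers s) : s ^ 2 ^ n ∈ Subgroup.zpowers y := by
  obtain ⟨a, rfl⟩ := Subgroup.mem_zpowers_iff.1 hys
  obtain ⟨b, rfl⟩ : ((2 ^ n : ℕ) : ℤ) ∣ a := by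
    have h : (s ^ a) ^ 4 = 1 := orderOf_dvd_iff_pow_eq_one.1 hy.dvd
    rw [← zpow_natCast, ← zpow_mul, ← orderOf_dvd_iff_zpow_eq_one, hs, pow_add] at h
    push_cast at h ⊢
    exact Int.dvd_of_mul_dvd_mul_right (by norm_num) h
  have hle : Subgroup.zpowers (s ^ ((2 ^ n : ℕ) * b : ℤ)) ≤ Subgroup.zpowers (s ^ 2 ^ n) := by
    rw [Subgroup.zpowers_le, zpow_mul, zpow_natCast]
    exact Subgroup.zpow_mem_zpowers _ b
  rw [Subgroup.eq_of_le_of_card_ge hle]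
  · exact Subgroup.mem_zpowers _
  · rw [Nat.card_zpowers, Nat.card_zpowers, hy, orderOf_pow_of_dvd (by positivity)
      (by rw [hs]; exact pow_dvd_pow _ (by omega)), hs, pow_add, Nat.mul_div_cancel_left _
      (by positivity)]
    norm_num

theorem mem_zpowers_of_four_dvd_orderOf [Finite L] (hP : (P : Subgroup L) = Subgroup.zpowers s)
    (hs : orderOf s = 2 ^ (n + 2)) (hcentral : s ^ 2 ^ n ∈ Subgroup.center L) {l : L}
    (hl : 4 ∣ orderOf l) : s ^ 2 ^ n ∈ Subgroup.zpowers l := by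
  have : Fact (Nat.Prime 2) := ⟨Nat.prime_two⟩
  obtain ⟨k, hk⟩ := hl
  have hk4 : orderOf (l ^ k) = 4 := by
    rw [orderOf_pow_of_dvd (fun h => (orderOf_pos l).ne' (by rw [hk, h])) ⟨4, by rw [hk, mul_comm]⟩,
      hk, Nat.mul_div_cancel _ (Nat.pos_of_ne_zero fun h => (orderOf_pos l).ne' (by rw [hk, h]))]
  obtain ⟨c, hc⟩ := exists_conj_le_sylow P (isPGroup_zpowers (p := 2) (g := l ^ k) (m := 2)
    (orderOf_dvd_iff_pow_eq_one.1 hk4.dvd))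
  have hcl : c * l ^ k * c⁻¹ ∈ Subgroup.zpowers s := by
    rw [← hP]
    exact hc _ (Subgroup.mem_zpowers _)
  obtain ⟨b, hb⟩ := Subgroup.mem_zpowers_iff.1
    (mem_zpowers_of_orderOf_eq_four hs
      ((SemiconjBy.orderOf_eq c (SemiconjBy.conj_mk c _)).symm.trans hk4) hcl)
  have hlb : (l ^ k) ^ b = s ^ 2 ^ n := by
    rw [conj_zpow, mul_inv_eq_iff_eq_mul, ← Subgroup.mem_center_iff.1 hcentral c] at hb
    exact mul_left_cancel hb
  exact hlb ▸ Subgroup.zpow_mem _ (Subgroup.npow_mem_zpowers _ _) _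

theorem minFac_card_eq_two {P : Subgroup L} (h : 2 ∣ Nat.card P) :
    (Nat.card L).minFac = 2 :=
  (Nat.minFac_eq_two_iff _).2 (h.trans P.card_subgroup_dvd_card)

end CyclicSylow

section QuaternionSylow

theorem four_dvd_orderOf {H : Type*} [Group H] (hH : IsPGroup 2 H) {g : H} (hg : g ^ 2 ≠ 1) :
    4 ∣ orderOf g := by
  obtain ⟨m, hm⟩ := hH g
  obtain ⟨a, -, ha⟩ := (Nat.dvd_prime_pow Nat.prime_two).1 (orderOf_dvd_of_pow_eq_one hm)
  rw [ne_eq, ← orderOf_dvd_iff_pow_eq_one, ha] at hg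
  rw [ha]
  refine (show 4 = 2 ^ 2 from rfl) ▸ pow_dvd_pow 2 ?_
  by_contra h
  exact hg (pow_dvd_pow 2 (by omega : a ≤ 1))

theorem IsLoneInvolution.exists_sylow_centralizer_eq_zpowers {G : Type*} [Group G] [Finite G]
    {x t : G} {n : ℕ} (hx : IsLoneInvolution x) (ht : t ^ 2 ^ (n + 1) = x)
    (hmax : ∀ R : Subgroup G, IsPGroup 2 R → ∀ g ∈ R, g ^ 2 ^ (n + 2) = 1) :
    ∃ (s : Subgroup.centralizer {t ^ 2 ^ n}) (P : Sylow 2 (Subgroup.centralizer {t ^ 2 ^ n})),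
      (s : G) = t ∧ (P : Subgroup (Subgroup.centralizer {t ^ 2 ^ n})) = Subgroup.zpowers s := by
  have : Fact (Nat.Prime 2) := ⟨Nat.prime_two⟩
  let s : Subgroup.centralizer {t ^ 2 ^ n} := ⟨t, Subgroup.mem_centralizer_singleton_iff.2
    ((Commute.refl t).pow_right _).eq⟩
  have hs : s ^ 2 ^ (n + 2) = 1 := Subtype.ext (hx.orderOf_eq ht ▸ pow_orderOf_eq_one t)
  obtain ⟨P, hP⟩ := (isPGroup_zpowers hs).exists_le_sylow
  refine ⟨s, P, rfl, ?_⟩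
  have hR := P.isPGroup'.map (Subgroup.subtype _)
  have hmap : (Subgroup.zpowers s).map (Subgroup.subtype _) = Subgroup.zpowers t :=
    MonoidHom.map_zpowers _ s
  refine (Subgroup.map_injective (Subgroup.subtype_injective _) ?_).symm
  rw [hmap]
  exact hx.eq_zpowers_of_le_centralizer ht hR (hmax _ hR) (hmap ▸ Subgroup.map_mono hP)
    (Subgroup.map_subtype_le _)

theorem eq_zero_of_pow_zpow_eq_one {H : Type*} [Group H] {s : H} {m n : ℕ} {j : ℤ}
    (hs : orderOf s = 2 ^ (n + 2)) (hm : ¬ 2 ∣ m) (hj : j % 4 = 3)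
    (h : (s ^ m) ^ (2 * (j - 1)) = 1) : n = 0 := by
  rw [← zpow_natCast, ← zpow_mul, ← orderOf_dvd_iff_zpow_eq_one, hs] at h
  have hcop : IsCoprime ((2 ^ (n + 2) : ℕ) : ℤ) (m : ℤ) :=
    Nat.isCoprime_iff_coprime.2 (((Nat.Prime.coprime_iff_not_dvd Nat.prime_two).2 hm).pow_left _)
  have hdvd := hcop.dvd_of_dvd_mul_left h
  by_contra hn
  have h8 : (8 : ℤ) ∣ ((2 ^ (n + 2) : ℕ) : ℤ) := by
    exact_mod_cast pow_dvd_pow 2 (by omega : 3 ≤ n + 2)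
  have := h8.trans hdvd
  omega

namespace InvertedRootClass

variable {G : Type*} [Group G] [Finite G] {K : Finset G} {x v w : G} {p n : ℕ} {j : ℤ}
  {s : Subgroup.centralizer {v}} {P : Sylow 2 (Subgroup.centralizer {v})}

theorem mem_zpowers_of_sq_ne_one
    (hP : (P : Subgroup (Subgroup.centralizer {v})) = Subgroup.zpowers s)
    (hs : orderOf s = 2 ^ (n + 2)) (hv : (s : G) ^ 2 ^ n = v) {H : Type*} [Group H]
    (hH : IsPGroup 2 H) (τ : Subgroup.centralizer {v} →* H) {l : Subgroup.centralizer {v}}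
    (hl : τ l ^ 2 ≠ 1) : v ∈ Subgroup.zpowers (l : G) := by
  have hcentral : s ^ 2 ^ n ∈ Subgroup.center (Subgroup.centralizer {v}) := by
    refine Subgroup.mem_center_iff.2 fun g => Subtype.ext ?_
    simpa [hv] using Subgroup.mem_centralizer_singleton_iff.1 g.2
  obtain ⟨b, hb⟩ := Subgroup.mem_zpowers_iff.1 (mem_zpowers_of_four_dvd_orderOf hP hs hcentral
    ((four_dvd_orderOf hH hl).trans (orderOf_map_dvd τ l)))
  exact Subgroup.mem_zpowers_iff.2 ⟨b, by simpa [hv] using congrArg Subtype.val hb⟩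

/-- The square of any linear character of the transfer into `⟨s⟩` is invariant under `w`, and
`τ s` generates `⟨s⟩`. -/
theorem eq_zero_of_conj_eq_zpow (Q : InvertedRootClass K x v w p)
    (hP : (P : Subgroup (Subgroup.centralizer {v})) = Subgroup.zpowers s)
    (hs : orderOf s = 2 ^ (n + 2)) (hv : (s : G) ^ 2 ^ n = v) (hj : w * s * w⁻¹ = (s : G) ^ j)
    (hj4 : j % 4 = 3) : n = 0 := by
  have : Fact (Nat.Prime 2) := ⟨Nat.prime_two⟩
  have hcyc : IsCyclic P := by
    rw [hP]
    infer_instance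
  have hP2 : 2 ∣ Nat.card (P : Subgroup (Subgroup.centralizer {v})) := by
    rw [hP, Nat.card_zpowers, hs]
    exact dvd_pow_self 2 (by omega)
  let _ : CommGroup P := IsCyclic.commGroup
  have hNC := hcyc.normalizer_le_centralizer (minFac_card_eq_two hP2)
  set τ := MonoidHom.transferSylow P hNC
  have hsP : s ∈ P := by
    change s ∈ (P : Subgroup (Subgroup.centralizer {v}))
    exact hP ▸ Subgroup.mem_zpowers s
  have hconj : conjCentralizer Q.conj_eq_inv s = s ^ j := Subtype.ext (by
    rw [coe_conjCentralizer, hj, SubgroupClass.coe_zpow])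
  have hτ : τ s ^ (2 * (j - 1)) = 1 := by
    by_contra hne
    obtain ⟨φ, hφ⟩ := CommGroup.exists_apply_ne_one_of_hasEnoughRootsOfUnity P ℂ hne
    have hμ := DFunLike.congr_fun (Q.map_conjCentralizer_eq (μ := (φ.comp τ) ^ 2) fun l hl =>
      mem_zpowers_of_sq_ne_one hP hs hv P.isPGroup' τ fun h => hl (by
        simp [← map_pow, h])) s
    refine hφ ?_
    simp only [MonoidHom.comp_apply, MulEquiv.coe_toMonoidHom, hconj, MonoidHom.pow_apply,
      map_zpow] at hμ
    rw [zpow_mul, zpow_sub_one, map_mul, map_inv, map_zpow, zpow_ofNat, map_pow]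
    exact mul_inv_eq_one.2 hμ
  rw [MonoidHom.transferSylow_eq_pow P hNC s hsP] at hτ
  replace hτ : (s ^ (P : Subgroup (Subgroup.centralizer {v})).index) ^ (2 * (j - 1)) = 1 :=
    congrArg Subtype.val hτ
  exact eq_zero_of_pow_zpow_eq_one hs P.not_dvd_index hj4 hτ

theorem card_ne_four_of_isCyclic (Q : InvertedRootClass K x v w p) (hP : IsCyclic P) :
    Nat.card P ≠ 4 := by
  intro h4
  have : Fact (Nat.Prime 2) := ⟨Nat.prime_two⟩
  have hmin : (Nat.card (Subgroup.centralizer {v})).minFac = 2 :=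
    minFac_card_eq_two (P := (P : Subgroup _)) (h4 ▸ ⟨2, rfl⟩)
  set N := (MonoidHom.transferSylow P (hP.normalizer_le_centralizer hmin)).ker
  have hcard : Nat.card (N.map (Subgroup.subtype _)) = Nat.card N :=
    Subgroup.card_map_of_injective (Subgroup.subtype_injective _)
  refine Q.card_centralizer_ne (O := N.map (Subgroup.subtype _)) (Subgroup.map_subtype_le _) ?_ ?_
  · rw [hcard, ← Nat.not_even_iff_odd, even_iff_two_dvd]
    exact MonoidHom.not_dvd_card_ker_transferSylow P _
  · rw [hcard, ← h4, mul_comm]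
    exact (hP.isComplement' hmin).card_mul_card.symm

/-- `⟨t⟩` is a Sylow 2-subgroup of the centralizer of `t ^ 2 ^ n`. -/
theorem emod_four_ne_three {t : G} (Q : InvertedRootClass K x (t ^ 2 ^ n) w p)
    (hx : IsLoneInvolution x) (ht : t ^ 2 ^ (n + 1) = x)
    (hmax : ∀ R : Subgroup G, IsPGroup 2 R → ∀ g ∈ R, g ^ 2 ^ (n + 2) = 1)
    (hj : w * t * w⁻¹ = t ^ j) : j % 4 ≠ 3 := by
  intro hj4
  obtain ⟨s, P, hst, hP⟩ := hx.exists_sylow_centralizer_eq_zpowers ht hmax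
  have hs : orderOf s = 2 ^ (n + 2) := by
    rw [← Subgroup.orderOf_coe, hst, hx.orderOf_eq ht]
  obtain rfl := Q.eq_zero_of_conj_eq_zpow hP hs (by rw [hst]) (by rw [hst]; exact hj) hj4
  have hcard : Nat.card (P : Subgroup (Subgroup.centralizer {t ^ 2 ^ 0})) = 4 := by
    rw [hP, Nat.card_zpowers, hs]
    norm_num
  refine Q.card_ne_four_of_isCyclic (P := P) ?_ hcard
  rw [hP]
  infer_instance

end InvertedRootClass

end QuaternionSylow

section ReflectionSets

/-- A conjugation-closed set of elements of square one whose pairwise products have trivial `p`-th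
power, modelled on the reflections of the dihedral group of order `2 * p`. -/
structure IsReflectionSet {G : Type*} [Group G] (p : ℕ) (K : Set G) : Prop where
  conj_mem : ∀ u ∈ K, ∀ g : G, g * u * g⁻¹ ∈ K
  mul_self_eq_one : ∀ u ∈ K, u * u = 1
  mul_pow_eq_one : ∀ u ∈ K, ∀ v ∈ K, (u * v) ^ p = 1

/-- In a reflection set with `p` odd, the unique element of the set conjugating `u` to `v`. -/
def conjugator {G : Type*} [Group G] (p : ℕ) (u v : G) : G := u * (u * v) ^ ((p + 1) / 2)

theorem conj_conjugator {G : Type*} [Group G] (p : ℕ) (g u v : G) :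
    g * conjugator p u v * g⁻¹ = conjugator p (g * u * g⁻¹) (g * v * g⁻¹) := by
  simp only [conjugator, ← MulAut.conj_apply, map_mul, map_pow]

namespace IsReflectionSet

variable {G : Type*} [Group G] {p : ℕ} {K : Set G} {x u v m : G}

theorem inv_eq (h : IsReflectionSet p K) (hu : u ∈ K) : u⁻¹ = u :=
  inv_eq_of_mul_eq_one_left (h.mul_self_eq_one u hu)

theorem mul_mul_self (h : IsReflectionSet p K) (hu : u ∈ K) (g : G) : u * (u * g) = g := by
  rw [← mul_assoc, h.mul_self_eq_one u hu, one_mul]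

theorem mul_left_eq_one_iff (h : IsReflectionSet p K) (hv : v ∈ K) : u * v = 1 ↔ u = v := by
  rw [mul_eq_one_iff_eq_inv, h.inv_eq hv]

theorem eq_conjugator (h : IsReflectionSet p K) (hp : Odd p) (hu : u ∈ K) (hm : m ∈ K)
    (hmuv : m * u * m = v) : m = conjugator p u v := by
  have hsq : u * v = (u * m) ^ 2 := by rw [pow_two, ← hmuv]; group
  rw [conjugator, hsq, ← pow_mul, Nat.mul_div_cancel' hp.add_one.two_dvd, pow_succ,
    h.mul_pow_eq_one u hu m hm, one_mul, h.mul_mul_self hu]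

theorem mul_pow_mem (h : IsReflectionSet p K) (hp : Odd p) (hu : u ∈ K) (hv : v ∈ K) (k : ℕ) :
    u * (u * v) ^ k ∈ K := by
  wlog hk : Even k generalizing k
  · have := this (k + p) ((Nat.not_even_iff_odd.1 hk).add_odd hp)
    rwa [pow_add, h.mul_pow_eq_one u hu v hv, mul_one] at this
  obtain ⟨i, rfl⟩ := hk
  have hinv : u * (u * v) ^ i * u⁻¹ = ((u * v) ^ i)⁻¹ := by
    rw [← conj_pow, h.mul_mul_self hu, ← inv_pow, mul_inv_rev, h.inv_eq hu, h.inv_eq hv]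
  convert h.conj_mem u hu ((u * v) ^ i)⁻¹ using 1
  rw [inv_inv, ← hinv, inv_mul_cancel_right, pow_add, mul_assoc]

theorem conjugator_mem (h : IsReflectionSet p K) (hp : Odd p) (hu : u ∈ K) (hv : v ∈ K) :
    conjugator p u v ∈ K :=
  h.mul_pow_mem hp hu hv _

theorem conjugator_mul_mul (h : IsReflectionSet p K) (hp : Odd p) (hu : u ∈ K) (hv : v ∈ K) :
    conjugator p u v * u * conjugator p u v = v := by
  rw [conjugator, ← mul_assoc, mul_assoc _ u u, h.mul_self_eq_one u hu, mul_one, mul_assoc,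
    ← pow_add, ← two_mul, Nat.mul_div_cancel' hp.add_one.two_dvd, pow_succ,
    h.mul_pow_eq_one u hu v hv, one_mul, h.mul_mul_self hu]

theorem conjugator_conj_eq (h : IsReflectionSet p K) (hp : Odd p) (hu : u ∈ K) (hv : v ∈ K) :
    conjugator p u v * u * (conjugator p u v)⁻¹ = v := by
  rw [h.inv_eq (h.conjugator_mem hp hu hv), h.conjugator_mul_mul hp hu hv]

theorem conjugator_comm (h : IsReflectionSet p K) (hp : Odd p) (hu : u ∈ K) (hv : v ∈ K) :
    conjugator p u v = conjugator p v u := by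
  have hm := h.conjugator_mem hp hu hv
  refine h.eq_conjugator hp hv hm ?_
  calc conjugator p u v * v * conjugator p u v
      = conjugator p u v * (conjugator p u v * u * conjugator p u v) * conjugator p u v := by
        rw [h.conjugator_mul_mul hp hu hv]
    _ = u := by
        simp only [mul_assoc, h.mul_self_eq_one _ hm, mul_one, h.mul_mul_self hm]

/-- The conjugation action on a reflection set. -/
@[reducible] def conjAction (h : IsReflectionSet p K) : MulAction G K where
  smul g u := ⟨g * u * g⁻¹, h.conj_mem u u.2 g⟩
  one_smul u := Subtype.ext (by change 1 * (u : G) * 1⁻¹ = u; simp)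
  mul_smul a b u := Subtype.ext (by
    change a * b * (u : G) * (a * b)⁻¹ = a * (b * u * b⁻¹) * a⁻¹
    group)

theorem stabilizer_conjAction (h : IsReflectionSet p K) (u : K) :
    letI := h.conjAction
    MulAction.stabilizer G u = Subgroup.centralizer {(u : G)} := by
  let _ := h.conjAction
  ext g
  rw [MulAction.mem_stabilizer_iff, Subgroup.mem_centralizer_singleton_iff, Subtype.ext_iff]
  change g * u * g⁻¹ = u ↔ _
  rw [mul_inv_eq_iff_eq_mul]

theorem isPretransitive_closure_mul (h : IsReflectionSet p K) (hp : Odd p) :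
    letI := h.conjAction
    MulAction.IsPretransitive (Subgroup.closure (K * K)) K := by
  let _ := h.conjAction
  refine ⟨fun u v => ⟨⟨conjugator p (u : G) v * u, Subgroup.subset_closure
    (Set.mul_mem_mul (h.conjugator_mem hp u.2 v.2) u.2)⟩, Subtype.ext ?_⟩⟩
  change conjugator p (u : G) v * u * u * (conjugator p (u : G) v * u)⁻¹ = v
  rw [mul_inv_rev, ← mul_assoc, mul_inv_cancel_right, h.conjugator_conj_eq hp u.2 v.2]

theorem isPretransitive (h : IsReflectionSet p K) (hp : Odd p) :
    letI := h.conjAction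
    MulAction.IsPretransitive G K := by
  let _ := h.conjAction
  exact ⟨fun u v => ⟨_, Subtype.ext (h.conjugator_conj_eq hp u.2 v.2)⟩⟩

theorem ncard_eq_index_centralizer (h : IsReflectionSet p K) (hp : Odd p) (hu : u ∈ K) :
    K.ncard = (Subgroup.centralizer {u}).index := by
  let _ := h.conjAction
  have := h.isPretransitive hp
  rw [← h.stabilizer_conjAction ⟨u, hu⟩, MulAction.index_stabilizer_of_transitive,
    Nat.card_coe_set_eq]

theorem exists_ncard_eq_pow [Finite G] [Fact p.Prime] (h : IsReflectionSet p K) (hp : Odd p)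
    (hK : K.Nonempty) (hpK : IsPGroup p (Subgroup.closure (K * K))) : ∃ n, K.ncard = p ^ n := by
  let _ := h.conjAction
  have := h.isPretransitive_closure_mul hp
  obtain ⟨x, hx⟩ := hK
  obtain ⟨n, hn⟩ := hpK.card_orbit (α := K) ⟨x, hx⟩
  exact ⟨n, by rwa [MulAction.orbit_eq_univ, Nat.card_univ, Nat.card_coe_set_eq] at hn⟩

theorem preimage_subtype (h : IsReflectionSet p K) (H : Subgroup G) :
    IsReflectionSet p (H.subtype ⁻¹' K) where
  conj_mem u hu g := h.conj_mem u hu g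
  mul_self_eq_one u hu := Subtype.ext (h.mul_self_eq_one u hu)
  mul_pow_eq_one u hu v hv := Subtype.ext (h.mul_pow_eq_one u hu v hv)

theorem image (h : IsReflectionSet p K) {Q : Type*} [Group Q] {φ : G →* Q}
    (hφ : Function.Surjective φ) : IsReflectionSet p (φ '' K) where
  conj_mem := by
    rintro _ ⟨u, hu, rfl⟩ g
    obtain ⟨g, rfl⟩ := hφ g
    exact ⟨_, h.conj_mem u hu g, by simp⟩
  mul_self_eq_one := by
    rintro _ ⟨u, hu, rfl⟩
    rw [← map_mul, h.mul_self_eq_one u hu, map_one]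
  mul_pow_eq_one := by
    rintro _ ⟨u, hu, rfl⟩ _ ⟨v, hv, rfl⟩
    rw [← map_mul, ← map_pow, h.mul_pow_eq_one u hu v hv, map_one]

theorem ncard_image (h : IsReflectionSet p K) {Q : Type*} [Group Q] {φ : G →* Q}
    (hφ : ∀ g ∈ φ.ker, g ^ p = 1 → g = 1) : (φ '' K).ncard = K.ncard := by
  refine Set.InjOn.ncard_image fun u hu v hv huv => (h.mul_left_eq_one_iff hv).1 ?_
  refine hφ _ ?_ (h.mul_pow_eq_one u hu v hv)
  rw [MonoidHom.mem_ker, map_mul, huv, ← map_mul, h.mul_self_eq_one v hv, map_one]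

end IsReflectionSet

/-- The products of pairs from any reflection set of `G` generate a `p`-group; for odd primes `p`
this is proved for all finite groups by induction on the order. -/
def ProductsGeneratePGroup (p : ℕ) (G : Type*) [Group G] : Prop :=
  ∀ K : Set G, IsReflectionSet p K → IsPGroup p (Subgroup.closure (K * K))

namespace IsReflectionSet

variable {G : Type*} [Group G] {p : ℕ} {K : Set G}

theorem isPGroup_closure_inter (h : IsReflectionSet p K) {H : Subgroup G}
    (hH : ProductsGeneratePGroup p H) : IsPGroup p (Subgroup.closure ((K ∩ H) * (K ∩ H))) := by
  have hmap := (hH _ (h.preimage_subtype H)).map H.subtype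
  rwa [MonoidHom.map_closure, Set.image_mul, Set.image_preimage_eq_inter_range,
    ← MonoidHom.coe_range, H.range_subtype] at hmap

theorem exists_ncard_inter_eq_pow [Finite G] [Fact p.Prime] (h : IsReflectionSet p K)
    (hp : Odd p) {H : Subgroup G} (hH : ProductsGeneratePGroup p H) (hKH : (K ∩ H).Nonempty) :
    ∃ n, (K ∩ H).ncard = p ^ n := by
  obtain ⟨x, hx, hxH⟩ := hKH
  obtain ⟨n, hn⟩ := (h.preimage_subtype H).exists_ncard_eq_pow hp ⟨⟨x, hxH⟩, hx⟩
    (hH _ (h.preimage_subtype H))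
  refine ⟨n, ?_⟩
  rwa [← Set.ncard_image_of_injective _ H.subtype_injective, Set.image_preimage_eq_inter_range,
    ← MonoidHom.coe_range, H.range_subtype] at hn

theorem isPGroup_closure_mul_of_surjective (h : IsReflectionSet p K) {Q : Type*} [Group Q]
    {φ : G →* Q} (hφ : Function.Surjective φ) (hQ : ProductsGeneratePGroup p Q)
    (hker : IsPGroup p φ.ker) : IsPGroup p (Subgroup.closure (K * K)) := by
  refine ((hQ _ (h.image hφ)).comap_of_ker_isPGroup φ hker).to_le ?_
  rw [← Subgroup.map_le_iff_le_comap, MonoidHom.map_closure, Set.image_mul]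

end IsReflectionSet

end ReflectionSets

section NormalizerOfCyclicSubgroup

namespace IsLoneInvolution

variable {G : Type*} [Group G] {x : G}

theorem conj (hx : IsLoneInvolution x) (g : G) : IsLoneInvolution (g * x * g⁻¹) where
  mul_self_eq_one := by
    rw [← pow_two, conj_pow, pow_two, hx.mul_self_eq_one, mul_one, mul_inv_cancel]
  ne_one h := hx.ne_one (conj_eq_one_iff.1 h)
  eq_one_or_eq z hz hzx := by
    have hsq : g⁻¹ * z * g * (g⁻¹ * z * g) = 1 := by
      rw [show g⁻¹ * z * g * (g⁻¹ * z * g) = g⁻¹ * (z * z) * g by group, hz, mul_one,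
        inv_mul_cancel]
    refine (hx.eq_one_or_eq (g⁻¹ * z * g) hsq ?_).imp (fun h => ?_) fun h => ?_
    · calc g⁻¹ * z * g * x = g⁻¹ * (z * (g * x * g⁻¹)) * g := by group
        _ = x * (g⁻¹ * z * g) := by rw [hzx]; group
    · rwa [mul_assoc, inv_mul_eq_one, eq_comm, mul_eq_right] at h
    · rw [← h]
      group

variable [Finite G]

theorem eq_of_isPGroup (hx : IsLoneInvolution x) {S : Subgroup G} (hS : IsPGroup 2 S) (hxS : x ∈ S)
    {y : G} (hyS : y ∈ S) (hyy : y * y = 1) (hy : y ≠ 1) : y = x := by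
  have : Fact (Nat.Prime 2) := ⟨Nat.prime_two⟩
  have : Nontrivial S := ⟨⟨x, hxS⟩, 1, fun h => hx.ne_one (congrArg Subtype.val h)⟩
  have hnt : Nontrivial (Subgroup.center S) := hS.center_nontrivial
  have hcenter : 2 ∣ Nat.card (Subgroup.center S) :=
    (hS.to_subgroup _).nontrivial_iff_card.1 hnt |>.elim fun k hk => hk.2 ▸ dvd_pow_self 2 hk.1.ne'
  obtain ⟨z, hz⟩ := exists_prime_orderOf_dvd_card' (G := Subgroup.center S) 2 hcenter
  have hcomm : ∀ g ∈ S, (z : S) * g = g * (z : S) := fun g hg =>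
    (congrArg Subtype.val (Subgroup.mem_center_iff.1 z.2 ⟨g, hg⟩)).symm
  have hzx : ((z : S) : G) = x := by
    refine (hx.eq_one_or_eq _ ?_ (hcomm x hxS)).resolve_left fun h => ?_
    · have hzz : z * z = 1 := by rw [← pow_two, ← hz, pow_orderOf_eq_one]
      exact congrArg (fun a : Subgroup.center S => ((a : S) : G)) hzz
    · rw [show z = 1 from Subtype.ext (Subtype.ext h), orderOf_one] at hz
      omega
  refine (hx.eq_one_or_eq y hyy ?_).resolve_left hy
  rw [← hzx, hcomm y hyS]

theorem exists_conj_eq (hx : IsLoneInvolution x) {y : G} (hyy : y * y = 1) (hy : y ≠ 1) :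
    ∃ g, g * x * g⁻¹ = y := by
  have : Fact (Nat.Prime 2) := ⟨Nat.prime_two⟩
  have hpow : ∀ g : G, g * g = 1 → IsPGroup 2 (Subgroup.zpowers g) := fun g hg =>
    isPGroup_zpowers (m := 1) (by rw [pow_one, pow_two, hg])
  obtain ⟨S, hS⟩ := (hpow y hyy).exists_le_sylow
  obtain ⟨g, hg⟩ := exists_conj_le_sylow S (hpow x hx.mul_self_eq_one)
  exact ⟨g, ((hx.conj g).eq_of_isPGroup S.isPGroup' (hg x (Subgroup.mem_zpowers x))
    (hS (Subgroup.mem_zpowers y)) hyy hy).symm⟩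

theorem exists_pow_eq (hx : IsLoneInvolution x) :
    ∃ (n : ℕ) (t : G), t ^ 2 ^ n = x ∧
      ∀ R : Subgroup G, IsPGroup 2 R → ∀ g ∈ R, g ^ 2 ^ (n + 1) = 1 := by
  classical
  have hex : ∃ m, ∀ R : Subgroup G, IsPGroup 2 R → ∀ g ∈ R, g ^ 2 ^ m = 1 := by
    refine ⟨Nat.card G, fun R hR g hg => ?_⟩
    obtain ⟨k, hk⟩ := hR ⟨g, hg⟩
    obtain ⟨a, -, ha⟩ := (Nat.dvd_prime_pow Nat.prime_two).1
      (orderOf_dvd_of_pow_eq_one (congrArg Subtype.val hk))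
    rw [← orderOf_dvd_iff_pow_eq_one, ha]
    exact pow_dvd_pow 2 (a.lt_two_pow_self.le.trans (ha ▸ orderOf_le_card))
  have : Fact (Nat.Prime 2) := ⟨Nat.prime_two⟩
  obtain ⟨n, hn⟩ : ∃ n, Nat.find hex = n + 1 := Nat.exists_eq_succ_of_ne_zero fun h0 =>
    hx.ne_one (by
      have := Nat.find_spec hex _ (isPGroup_zpowers (p := 2) (g := x) (m := 1)
        (by rw [pow_one, pow_two, hx.mul_self_eq_one])) x (Subgroup.mem_zpowers x)
      rwa [h0, pow_zero, pow_one] at this)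
  have hspec := hn ▸ Nat.find_spec hex
  have hmin := Nat.find_min hex (hn ▸ Nat.lt_succ_self n : n < Nat.find hex)
  push Not at hmin
  obtain ⟨R, hR, g, hg, hg1⟩ := hmin
  obtain ⟨c, hc⟩ := hx.exists_conj_eq (y := g ^ 2 ^ n)
    (by rw [← pow_two, ← pow_mul, ← pow_succ, hspec R hR g hg]) hg1
  refine ⟨n, c⁻¹ * g * c⁻¹⁻¹, ?_, hspec⟩
  rw [conj_pow, ← hc]
  group

end IsLoneInvolution

/-- Otherwise some element of a Sylow 2-subgroup inverts an element of order four whose square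
is `x`. -/
theorem IsReflectionSet.isCyclic_sylow {G : Type*} [Group G] [Finite G] {p : ℕ} {K : Set G} {x : G}
    (h : IsReflectionSet p K) (hp : Odd p) (hgen : Subgroup.closure K = ⊤) (hxK : x ∈ K)
    (hx : IsLoneInvolution x) (S : Sylow 2 G) : IsCyclic S := by
  have : Fact (Nat.Prime 2) := ⟨Nat.prime_two⟩
  obtain ⟨n, t, ht, hmax⟩ := hx.exists_pow_eq
  obtain ⟨R, hR⟩ := (isPGroup_zpowers (p := 2)
    (hx.orderOf_eq ht ▸ pow_orderOf_eq_one t)).exists_le_sylow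
  by_cases hRt : Subgroup.zpowers t = R
  · have : IsCyclic R := by
      rw [← hRt]
      infer_instance
    exact isCyclic_of_surjective (R.equiv S) (R.equiv S).surjective
  obtain ⟨hn, w, -, j, hj, hj4⟩ :=
    hx.exists_conj_eq_zpow ht R.isPGroup' (hmax _ R.isPGroup') (hR.lt_of_ne hRt)
  obtain ⟨m, rfl⟩ := Nat.exists_eq_add_of_lt hn
  rw [zero_add] at ht hmax
  have hinv : w * t ^ 2 ^ m * w⁻¹ = (t ^ 2 ^ m)⁻¹ := by
    rw [← zpow_natCast, conj_zpow_eq hj, ← mul_eq_one_iff_eq_inv, ← zpow_add,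
      hx.zpow_eq_one_iff ht]
    obtain ⟨i, hi⟩ : (4 : ℤ) ∣ j + 1 := by omega
    exact ⟨i, by push_cast; linear_combination 2 ^ m * hi⟩
  have hsq : (t ^ 2 ^ m) ^ 2 = x := by rw [← pow_mul, ← pow_succ, ht]
  have hK := K.toFinite
  have Q : InvertedRootClass hK.toFinset x (t ^ 2 ^ m) w p :=
    { conj_mem u hu g := by
        rw [hK.mem_toFinset] at hu ⊢
        simpa using h.conj_mem u hu g⁻¹
      exists_eq_conj u hu :=
        ⟨(conjugator p x u)⁻¹, by
          rw [inv_inv, h.conjugator_conj_eq hp hxK (hK.mem_toFinset.1 hu)]⟩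
      mem := hK.mem_toFinset.2 hxK
      closure_eq_top := by rw [hK.coe_toFinset, hgen]
      odd := hp
      mul_pow_eq_one u hu v hv :=
        h.mul_pow_eq_one u (hK.mem_toFinset.1 hu) v (hK.mem_toFinset.1 hv)
      orderOf_eq_four := orderOf_eq_prime_pow (p := 2) (n := 1)
        (by rw [pow_one, hsq]; exact hx.ne_one)
        (by rw [pow_succ, pow_one, pow_mul, hsq, pow_two, hx.mul_self_eq_one])
      mul_self_eq := by rw [← pow_two, hsq]
      conj_eq_inv := hinv }
  exact absurd hj4 (Q.emod_four_ne_three hx ht hmax hj)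

end NormalizerOfCyclicSubgroup

section PrimePowerClass

universe u

theorem natCard_lt_of_ne_top {G : Type*} [Group G] [Finite G] {H : Subgroup G} (hH : H ≠ ⊤) :
    Nat.card H < Nat.card G :=
  H.card_le_card_group.lt_of_ne fun h => hH (H.eq_top_of_card_eq h)

theorem natCard_quotient_lt_of_ne_bot {G : Type*} [Group G] [Finite G] {H : Subgroup G}
    (hH : H ≠ ⊥) : Nat.card (G ⧸ H) < Nat.card G := by
  rw [H.card_eq_card_quotient_mul_card_subgroup]
  exact lt_mul_of_one_lt_right Nat.card_pos (H.one_lt_card_iff_ne_bot.2 hH)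

theorem isPretransitive_of_coprime_index {G α : Type*} [Group G] [Finite α] [MulAction G α]
    [MulAction.IsPretransitive G α] {P : Subgroup G} (hP : (Nat.card α).Coprime P.index) :
    MulAction.IsPretransitive P α := by
  suffices horbit : ∀ a : α, MulAction.orbit P a = Set.univ from
    ⟨fun a c => MulAction.mem_orbit_iff.1 (horbit a ▸ Set.mem_univ c)⟩
  intro a
  have hstab : MulAction.stabilizer P a = (MulAction.stabilizer G a).subgroupOf P := rfl
  have hdvd : Nat.card α ∣ (MulAction.orbit P a).ncard * P.index := by
    rw [← MulAction.index_stabilizer, hstab, ← MulAction.index_stabilizer_of_transitive G a,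
      ← Subgroup.relIndex, ← Subgroup.inf_relIndex_right,
      Subgroup.relIndex_mul_index inf_le_right]
    exact Subgroup.index_dvd_of_le inf_le_left
  refine Set.eq_of_subset_of_ncard_le (Set.subset_univ _) ?_
  rw [Set.ncard_univ]
  exact Nat.le_of_dvd ((Set.ncard_pos (Set.toFinite _)).2 (MulAction.nonempty_orbit a))
    (hP.dvd_of_dvd_mul_right hdvd)

theorem closure_inter_mul_inter_le {G : Type*} [Group G] (K : Set G) (H : Subgroup G) :
    Subgroup.closure ((K ∩ H) * (K ∩ H)) ≤ H := by
  rw [Subgroup.closure_le]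
  rintro _ ⟨u, hu, w, hw, rfl⟩
  exact H.mul_mem hu.2 hw.2

namespace IsReflectionSet

variable {G : Type*} [Group G] {p : ℕ} {K : Set G} {x v : G} {P : Subgroup G}

theorem le_normalizer_closure_inter (h : IsReflectionSet p K) (H : Subgroup G) :
    H ≤ Subgroup.normalizer (Subgroup.closure ((K ∩ H) * (K ∩ H)) : Set G) := by
  refine (Subgroup.le_set_normalizer_iff.2 ?_).trans (Subgroup.normalizer_le_normalizer_closure _)
  have hconj : ∀ g ∈ H, ∀ u ∈ K ∩ H, g * u * g⁻¹ ∈ K ∩ H := fun g hg u hu =>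
    ⟨h.conj_mem u hu.1 g, H.mul_mem (H.mul_mem hg hu.2) (H.inv_mem hg)⟩
  rintro g hg _ ⟨u, hu, w, hw, rfl⟩
  exact ⟨_, hconj g hg u hu, _, hconj g hg w hw, conj_mul⟩

theorem mem_normalizer_zpowers_mul [Finite G] (h : IsReflectionSet p K) (hx : x ∈ K) (hv : v ∈ K) :
    x ∈ Subgroup.normalizer (Subgroup.zpowers (x * v) : Set G) := by
  refine Subgroup.mem_normalizer_fintype ?_
  rintro _ ⟨n, rfl⟩
  refine ⟨-n, ?_⟩
  have hinv : x * (x * v) * x⁻¹ = (x * v)⁻¹ := by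
    rw [h.mul_mul_self hx, mul_inv_rev, h.inv_eq hv]
  simp only [← conj_zpow, hinv, inv_zpow, zpow_neg]

theorem closure_inter_normalizer_le (h : IsReflectionSet p K)
    (hP : Maximal (fun Q : Subgroup G => IsPGroup p Q ∧ x ∈ Subgroup.normalizer (Q : Set G)) P)
    (hN : ProductsGeneratePGroup p (Subgroup.normalizer (P : Set G))) :
    Subgroup.closure ((K ∩ Subgroup.normalizer (P : Set G)) *
      (K ∩ Subgroup.normalizer (P : Set G))) ≤ P := by
  refine le_sup_left.trans (hP.le_of_ge ⟨?_, ?_⟩ le_sup_right)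
  · exact (h.isPGroup_closure_inter hN).to_sup_of_normal_right' hP.prop.1
      (closure_inter_mul_inter_le K _)
  · exact Subgroup.normalizer_inf_normalizer_le_normalizer_sup _ _
      ⟨h.le_normalizer_closure_inter _ hP.prop.2, hP.prop.2⟩

theorem not_dvd_index_of_maximal [Finite G] [Fact p.Prime] (h : IsReflectionSet p K) (hx : x ∈ K)
    (hP : Maximal (fun Q : Subgroup G => IsPGroup p Q ∧ x ∈ Subgroup.normalizer (Q : Set G)) P)
    (hN : ProductsGeneratePGroup p (Subgroup.normalizer (P : Set G))) : ¬ p ∣ P.index := by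
  obtain ⟨S, hS⟩ := hP.prop.1.exists_le_sylow
  obtain hPS | hPS := hS.eq_or_lt
  · rw [hPS]
    exact S.not_dvd_index
  obtain ⟨w, hwS, hwP, hwN, -⟩ := exists_mem_normalizer_pow_mem S.isPGroup' hPS
  have hPQ : P ≤ (S : Subgroup G) ⊓ Subgroup.normalizer (P : Set G) :=
    le_inf hS Subgroup.le_normalizer
  refine absurd (hP.le_of_ge ⟨S.isPGroup'.to_le inf_le_left, ?_⟩ hPQ ⟨hwS, hwN⟩) hwP
  refine Subgroup.mem_normalizer_fintype fun n hn => ?_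
  have hxN := hP.prop.2
  have hmem : x * (n * x * n⁻¹) ∈ P :=
    h.closure_inter_normalizer_le hP hN (Subgroup.subset_closure (Set.mul_mem_mul ⟨hx, hxN⟩
      ⟨h.conj_mem x hx n, mul_mem (mul_mem hn.2 hxN) (inv_mem hn.2)⟩))
  rw [show x * n * x⁻¹ = x * (n * x * n⁻¹) * n by rw [h.inv_eq hx]; group]
  exact mul_mem (hPQ hmem) hn

theorem closure_mul_le [Finite G] [Fact p.Prime] (h : IsReflectionSet p K) (hp : Odd p)
    (hx : x ∈ K) (hxP : x ∈ Subgroup.normalizer (P : Set G)) {b : ℕ} (hK : K.ncard = p ^ b)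
    (hP : ¬ p ∣ P.index) : Subgroup.closure (K * K) ≤ P := by
  let _ := h.conjAction
  have := h.isPretransitive hp
  have htrans : MulAction.IsPretransitive P K := isPretransitive_of_coprime_index (by
    rw [Nat.card_coe_set_eq, hK]
    exact Nat.Coprime.pow_left b ((Nat.Prime.coprime_iff_not_dvd Fact.out).2 hP))
  have hmem : ∀ u ∈ K, x * u ∈ P := by
    intro u hu
    obtain ⟨g, hg⟩ := htrans.exists_smul_eq ⟨x, hx⟩ ⟨u, hu⟩
    have hgu : (g : G) * x * (g : G)⁻¹ = u := congrArg Subtype.val hg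
    rw [← hgu, show x * (g * x * (g : G)⁻¹) = x * g * x * (g : G)⁻¹ by group]
    refine P.mul_mem ?_ (P.inv_mem g.2)
    simpa only [h.inv_eq hx] using (Subgroup.mem_normalizer_iff.1 hxP g).1 g.2
  rw [Subgroup.closure_le]
  rintro _ ⟨u, hu, w, hw, rfl⟩
  have huw : u * w = (x * u)⁻¹ * (x * w) := by
    rw [mul_inv_rev, h.inv_eq hu]
    group
  change u * w ∈ P
  exact huw ▸ P.mul_mem (P.inv_mem (hmem u hu)) (hmem w hw)

theorem isPGroup_closure_mul_of_ncard_eq_pow {G : Type u} [Group G] [Finite G] [Fact p.Prime]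
    {K : Set G} (h : IsReflectionSet p K) (hp : Odd p) (hK : ¬ K.Subsingleton) {b : ℕ}
    (hb : K.ncard = p ^ b)
    (ih : ∀ (H : Type u) [Group H] [Finite H], Nat.card H < Nat.card G →
      ProductsGeneratePGroup p H) :
    IsPGroup p (Subgroup.closure (K * K)) := by
  obtain ⟨x, hx, v, hv, hxv⟩ := Set.not_subsingleton_iff.1 hK
  obtain ⟨P, hle, hP⟩ := (Set.toFinite {Q : Subgroup G | IsPGroup p Q ∧
    x ∈ Subgroup.normalizer (Q : Set G)}).exists_le_maximal
      ⟨isPGroup_zpowers (m := 1) (by rw [pow_one, h.mul_pow_eq_one x hx v hv]),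
        h.mem_normalizer_zpowers_mul hx hv⟩
  by_cases hN : Subgroup.normalizer (P : Set G) = ⊤
  · have := Subgroup.normalizer_eq_top_iff.1 hN
    have hbot : P ≠ ⊥ := by
      rintro rfl
      rw [le_bot_iff, Subgroup.zpowers_eq_bot, h.mul_left_eq_one_iff hv] at hle
      exact hxv hle
    exact h.isPGroup_closure_mul_of_surjective (QuotientGroup.mk'_surjective P)
      (ih _ (natCard_quotient_lt_of_ne_bot hbot)) (by rw [QuotientGroup.ker_mk']; exact hP.prop.1)
  · exact hP.prop.1.to_le (h.closure_mul_le hp hx hP.prop.2 hb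
      (h.not_dvd_index_of_maximal hx hP (ih _ (natCard_lt_of_ne_top hN))))

end IsReflectionSet

end PrimePowerClass

section CommutingInvolution

universe u

theorem normal_zpowers_of_mem_center {G : Type*} [Group G] {z : G} (hz : z ∈ Subgroup.center G) :
    (Subgroup.zpowers z).Normal := by
  refine ⟨fun g hg a => ?_⟩
  have hgz : g ∈ Subgroup.center G := Subgroup.zpowers_le.2 hz hg
  rwa [Subgroup.mem_center_iff.1 hgz a, mul_inv_cancel_right]

namespace IsReflectionSet

variable {G : Type u} [Group G] {p : ℕ} {K : Set G} {u w x z : G}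

theorem conjugator_mem_centralizer (h : IsReflectionSet p K) (hp : Odd p) (hzz : z * z = 1)
    (hu : u ∈ K) :
    conjugator p u (z * u * z⁻¹) ∈ Subgroup.centralizer {z} := by
  rw [Subgroup.mem_centralizer_singleton_iff, ← mul_inv_eq_iff_eq_mul.trans eq_comm,
    conj_conjugator, h.conjugator_comm hp hu (h.conj_mem u hu z)]
  congr 1
  calc _ = z * z * u * (z * z)⁻¹ := by group
    _ = u := by rw [hzz]; group

theorem conjugator_eq_iff (h : IsReflectionSet p K) (hp : Odd p) (hu : u ∈ K) (hw : w ∈ K) :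
    conjugator p u (z * u * z⁻¹) = w ↔ u ∈ Subgroup.centralizer {w * z} := by
  have hiff : u ∈ Subgroup.centralizer {w * z} ↔ w * u * w = z * u * z⁻¹ := by
    rw [Subgroup.mem_centralizer_singleton_iff, eq_mul_inv_iff_mul_eq]
    constructor
    · intro huw
      rw [mul_assoc, mul_assoc, huw, mul_assoc, h.mul_mul_self hw]
    · intro huw
      rw [mul_assoc w z u, ← huw, mul_assoc, mul_assoc, h.mul_mul_self hw]
  rw [hiff]
  refine ⟨?_, fun hwu => (h.eq_conjugator hp hu hw hwu).symm⟩
  rintro rfl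
  exact h.conjugator_mul_mul hp hu (h.conj_mem u hu z)

theorem ncard_inter_centralizer_conj (h : IsReflectionSet p K) (g y : G) :
    (K ∩ Subgroup.centralizer {g * y * g⁻¹}).ncard = (K ∩ Subgroup.centralizer {y}).ncard := by
  rw [← Set.ncard_image_of_injective (K ∩ Subgroup.centralizer {y}) (MulAut.conj g).injective]
  congr 1
  ext u
  constructor
  · rintro ⟨hu, hug⟩
    refine ⟨g⁻¹ * u * g, ⟨by simpa using h.conj_mem u hu g⁻¹, ?_⟩, by simp [mul_assoc]⟩
    simp only [SetLike.mem_coe, Subgroup.mem_centralizer_singleton_iff] at hug ⊢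
    calc g⁻¹ * u * g * y = g⁻¹ * (u * (g * y * g⁻¹)) * g := by group
      _ = y * (g⁻¹ * u * g) := by rw [hug]; group
  · rintro ⟨v, ⟨hv, hvy⟩, rfl⟩
    refine ⟨h.conj_mem v hv g, ?_⟩
    simp only [SetLike.mem_coe, Subgroup.mem_centralizer_singleton_iff, MulAut.conj_apply] at hvy ⊢
    rw [conj_mul, hvy, conj_mul]

theorem ncard_inter_centralizer_mul (h : IsReflectionSet p K) (hp : Odd p) (hx : x ∈ K)
    (hxz : x ∈ Subgroup.centralizer {z}) (hw : w ∈ K) (hwz : w ∈ Subgroup.centralizer {z}) :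
    (K ∩ Subgroup.centralizer {w * z}).ncard = (K ∩ Subgroup.centralizer {x * z}).ncard := by
  have hcz : conjugator p x w ∈ Subgroup.centralizer {z} :=
    mul_mem hxz (pow_mem (mul_mem hxz hwz) _)
  rw [← h.ncard_inter_centralizer_conj (conjugator p x w) (x * z)]
  rw [Subgroup.mem_centralizer_singleton_iff] at hcz
  rw [conj_mul.symm, h.conjugator_conj_eq hp hx hw, hcz, mul_inv_cancel_right]

/-- Counting `u ∈ K` by the element of `K` that conjugates `u` to `z * u * z⁻¹`. -/
theorem ncard_eq_mul [Finite G] (h : IsReflectionSet p K) (hp : Odd p) (hx : x ∈ K)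
    (hzz : z * z = 1) (hxz : x ∈ Subgroup.centralizer {z}) :
    K.ncard = (K ∩ Subgroup.centralizer {z}).ncard * (K ∩ Subgroup.centralizer {x * z}).ncard := by
  classical
  have hK := K.toFinite
  have hKz := (K ∩ Subgroup.centralizer {z}).toFinite
  rw [Set.ncard_eq_toFinset_card K hK, Set.ncard_eq_toFinset_card _ hKz]
  refine (Finset.card_eq_sum_card_fiberwise (f := fun u => conjugator p u (z * u * z⁻¹))
    (t := hKz.toFinset) fun u hu => ?_).trans (Finset.sum_const_nat fun w hw => ?_)
  · rw [Finset.mem_coe, hK.mem_toFinset] at hu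
    rw [Finset.mem_coe, hKz.mem_toFinset]
    exact ⟨h.conjugator_mem hp hu (h.conj_mem u hu z), h.conjugator_mem_centralizer hp hzz hu⟩
  · obtain ⟨hwK, hwz⟩ := hKz.mem_toFinset.1 hw
    rw [← h.ncard_inter_centralizer_mul hp hx hxz hwK hwz, ← Set.ncard_coe_finset]
    congr 1
    ext u
    simp only [Finset.coe_filter, hK.mem_toFinset, Set.mem_ofPred_eq, Set.mem_inter_iff,
      SetLike.mem_coe]
    exact and_congr_right fun hu => h.conjugator_eq_iff hp hu hwK

variable [Finite G] [Fact p.Prime]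

theorem exists_ncard_eq_pow_of_mem_center (h : IsReflectionSet p K) (hp : Odd p) (hK : K.Nonempty)
    (hzz : z * z = 1) (hz : z ≠ 1) (hzG : z ∈ Subgroup.center G)
    (ih : ∀ (H : Type u) [Group H] [Finite H], Nat.card H < Nat.card G →
      ProductsGeneratePGroup p H) :
    ∃ n, K.ncard = p ^ n := by
  have := normal_zpowers_of_mem_center hzG
  have hπ := h.image (QuotientGroup.mk'_surjective (Subgroup.zpowers z))
  have hbot : Subgroup.zpowers z ≠ ⊥ := fun hbot => hz (Subgroup.zpowers_eq_bot.1 hbot)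
  rw [← h.ncard_image (φ := QuotientGroup.mk' (Subgroup.zpowers z))]
  · exact hπ.exists_ncard_eq_pow hp (hK.image _) (ih _ (natCard_quotient_lt_of_ne_bot hbot) _ hπ)
  rw [QuotientGroup.ker_mk']
  rintro _ ⟨n, rfl⟩ hn
  have hsq : (z ^ n) ^ 2 = 1 := by
    rw [← zpow_natCast, zpow_comm, zpow_natCast, pow_two, hzz, one_zpow]
  exact orderOf_eq_one_iff.1 (Nat.eq_one_of_dvd_coprimes (Nat.coprime_two_left.2 hp)
    (orderOf_dvd_of_pow_eq_one hsq) (orderOf_dvd_of_pow_eq_one hn))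

theorem exists_ncard_inter_centralizer_eq_pow (h : IsReflectionSet p K) (hp : Odd p) (hx : x ∈ K)
    (hzz : z * z = 1) (hz : z ≠ 1) (hxz : x ∈ Subgroup.centralizer {z})
    (ih : ∀ (H : Type u) [Group H] [Finite H], Nat.card H < Nat.card G →
      ProductsGeneratePGroup p H) :
    ∃ n, (K ∩ Subgroup.centralizer {z}).ncard = p ^ n := by
  by_cases htop : Subgroup.centralizer {z} = ⊤
  · rw [htop, Subgroup.coe_top, Set.inter_univ]
    refine h.exists_ncard_eq_pow_of_mem_center hp ⟨x, hx⟩ hzz hz ?_ ih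
    rwa [Subgroup.centralizer_eq_top_iff_subset, Set.singleton_subset_iff] at htop
  · exact h.exists_ncard_inter_eq_pow hp (ih _ (natCard_lt_of_ne_top htop)) ⟨x, hx, hxz⟩

theorem exists_ncard_eq_pow_of_commute (h : IsReflectionSet p K) (hp : Odd p) (hx : x ∈ K)
    (hzz : z * z = 1) (hz : z ≠ 1) (hzx : z ≠ x) (hcomm : Commute z x)
    (ih : ∀ (H : Type u) [Group H] [Finite H], Nat.card H < Nat.card G →
      ProductsGeneratePGroup p H) :
    ∃ n, K.ncard = p ^ n := by
  have hxz : x ∈ Subgroup.centralizer {z} := Subgroup.mem_centralizer_singleton_iff.2 hcomm.eq.symm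
  have hxxz : x ∈ Subgroup.centralizer {x * z} :=
    Subgroup.mem_centralizer_singleton_iff.2 (((Commute.refl x).mul_right hcomm.symm).eq)
  have hsq : x * z * (x * z) = 1 := by
    rw [hcomm.mul_mul_mul_comm, h.mul_self_eq_one x hx, hzz, one_mul]
  have hne : x * z ≠ 1 := fun heq => hzx (by rw [← h.mul_mul_self hx z, heq, mul_one])
  obtain ⟨a, ha⟩ := h.exists_ncard_inter_centralizer_eq_pow hp hx hzz hz hxz ih
  obtain ⟨b, hb⟩ := h.exists_ncard_inter_centralizer_eq_pow hp hx hsq hne hxxz ih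
  exact ⟨a + b, by rw [h.ncard_eq_mul hp hx hzz hxz, ha, hb, pow_add]⟩

end IsReflectionSet

end CommutingInvolution

section NormalComplement

variable {G : Type*} [Group G] {p : ℕ}

/-- The normal complement of the Sylow subgroup has index prime to `r`, so the Frattini argument
applies to its Sylow `r`-subgroups. -/
theorem exists_minFac_dvd_card_normalizer [Finite G] {q r : ℕ} [Fact q.Prime] [Fact r.Prime]
    (hq : (Nat.card G).minFac = q) (S : Sylow q G) [IsCyclic S] (hqr : q ≠ r) :
    ∃ R : Subgroup G, IsPGroup r R ∧ ¬ r ∣ R.index ∧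
      q ∣ Nat.card (Subgroup.normalizer (R : Set G)) := by
  have hqS : q ∣ Nat.card S := by
    rw [S.card_eq_multiplicity]
    exact dvd_pow_self q ((Fact.out : q.Prime).factorization_pos_of_dvd Nat.card_pos.ne'
      (hq ▸ Nat.minFac_dvd _)).ne'
  have hNC := IsCyclic.normalizer_le_centralizer hq (inferInstance : IsCyclic S)
  have hindex : (MonoidHom.transferSylow S hNC).ker.index = Nat.card S :=
    (MonoidHom.ker_transferSylow_isComplement' S hNC).symm.index_eq_card
  set N := (MonoidHom.transferSylow S hNC).ker
  obtain ⟨R⟩ : Nonempty (Sylow r N) := inferInstance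
  refine ⟨(R : Subgroup N).map N.subtype, R.isPGroup'.map _, ?_, ?_⟩
  · rw [Subgroup.index_map_subtype, hindex, (Fact.out : r.Prime).dvd_mul, S.card_eq_multiplicity]
    exact not_or.2 ⟨R.not_dvd_index, fun hr => hqr ((Nat.prime_dvd_prime_iff_eq Fact.out
      Fact.out).1 ((Fact.out : r.Prime).dvd_of_dvd_pow hr)).symm⟩
  · have hrel := Subgroup.relIndex_sup_right
      (Subgroup.normalizer (((R : Subgroup N).map N.subtype : Subgroup G) : Set G)) N
    rw [Sylow.normalizer_sup_eq_top R, Subgroup.relIndex_top_right, hindex] at hrel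
    exact hqS.trans (hrel ▸ Subgroup.relIndex_dvd_card _ _)

theorem exists_involution_mem [Finite G] {H : Subgroup G} (hH : 2 ∣ Nat.card H) :
    ∃ y ∈ H, y * y = 1 ∧ y ≠ 1 := by
  have : Fact (Nat.Prime 2) := ⟨Nat.prime_two⟩
  obtain ⟨y, hy⟩ := exists_prime_orderOf_dvd_card' (G := H) 2 hH
  rw [← Subgroup.orderOf_coe] at hy
  refine ⟨y, y.2, by rw [← pow_two, ← hy, pow_orderOf_eq_one], fun hy1 => ?_⟩
  rw [hy1, orderOf_one] at hy
  omega

namespace IsReflectionSet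

variable {K : Set G} {x y : G}

theorem le_centralizer_of_mem_normalizer [Fact p.Prime] (h : IsReflectionSet p K) (hy : y ∈ K)
    {r : ℕ} [Fact r.Prime] (hrp : r ≠ p) {R : Subgroup G} (hR : IsPGroup r R)
    (hyR : y ∈ Subgroup.normalizer (R : Set G)) : R ≤ Subgroup.centralizer {y} := by
  intro g hg
  have hmem : y * g * y⁻¹ * g⁻¹ ∈ R :=
    R.mul_mem ((Subgroup.mem_normalizer_iff.1 hyR g).1 hg) (R.inv_mem hg)
  obtain ⟨n, hn⟩ := hR ⟨_, hmem⟩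
  have hpow : (y * g * y⁻¹ * g⁻¹) ^ p = 1 := by
    rw [h.inv_eq hy, mul_assoc y, mul_assoc y]
    exact h.mul_pow_eq_one y hy _ (h.conj_mem y hy g)
  have hone : y * g * y⁻¹ * g⁻¹ = 1 := orderOf_eq_one_iff.1 (Nat.eq_one_of_dvd_coprimes
    (Nat.coprime_pow_primes 1 n Fact.out Fact.out hrp.symm)
    (orderOf_dvd_of_pow_eq_one (by rw [pow_one, hpow]))
    (orderOf_dvd_of_pow_eq_one (congrArg Subtype.val hn)))
  rw [Subgroup.mem_centralizer_singleton_iff, eq_comm, ← mul_inv_eq_iff_eq_mul]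
  exact mul_inv_eq_one.1 hone

variable [Finite G]

theorem mem_of_isLoneInvolution (h : IsReflectionSet p K) (hxK : x ∈ K) (hx : IsLoneInvolution x)
    (hyy : y * y = 1) (hy : y ≠ 1) : y ∈ K := by
  obtain ⟨g, rfl⟩ := hx.exists_conj_eq hyy hy
  exact h.conj_mem x hxK g

theorem exists_le_centralizer_not_dvd_index [Fact p.Prime] (h : IsReflectionSet p K) (hxK : x ∈ K)
    (hx : IsLoneInvolution x) (S : Sylow 2 G) [IsCyclic S] {r : ℕ} [Fact r.Prime] (hrp : r ≠ p) :
    ∃ y ∈ K, ∃ R : Subgroup G, R ≤ Subgroup.centralizer {y} ∧ ¬ r ∣ R.index := by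
  have : Fact (Nat.Prime 2) := ⟨Nat.prime_two⟩
  have horder : orderOf x = 2 :=
    orderOf_eq_prime (by rw [pow_two, hx.mul_self_eq_one]) hx.ne_one
  have h2 : 2 ∣ Nat.card G := horder ▸ orderOf_dvd_natCard x
  obtain rfl | hr2 := eq_or_ne r 2
  · have hxS : IsPGroup 2 (Subgroup.zpowers x) :=
      isPGroup_zpowers (m := 1) (by rw [pow_one, pow_two, hx.mul_self_eq_one])
    obtain ⟨c, hc⟩ := exists_conj_le_sylow S hxS
    have hcx := hc x (Subgroup.mem_zpowers x)
    have hcomm : IsMulCommutative S := IsCyclic.isMulCommutative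
    refine ⟨_, h.conj_mem x hxK c, S, fun s hs => ?_, S.not_dvd_index⟩
    rw [Subgroup.mem_centralizer_singleton_iff]
    exact congrArg Subtype.val (hcomm.is_comm.comm (⟨s, hs⟩ : S) ⟨_, hcx⟩)
  · obtain ⟨R, hR, hindex, hcard⟩ :=
      exists_minFac_dvd_card_normalizer ((Nat.minFac_eq_two_iff _).2 h2) S hr2.symm
    obtain ⟨y, hyR, hyy, hy⟩ := exists_involution_mem hcard
    have hyK := h.mem_of_isLoneInvolution hxK hx hyy hy
    exact ⟨y, hyK, R, h.le_centralizer_of_mem_normalizer hyK hrp hR hyR, hindex⟩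

theorem exists_ncard_eq_pow_of_isLoneInvolution [Fact p.Prime] (h : IsReflectionSet p K)
    (hp : Odd p) (hgen : Subgroup.closure K = ⊤) (hxK : x ∈ K) (hx : IsLoneInvolution x) :
    ∃ n, K.ncard = p ^ n := by
  obtain ⟨S⟩ : Nonempty (Sylow 2 G) := inferInstance
  have := h.isCyclic_sylow hp hgen hxK hx S
  refine ⟨_, Nat.eq_prime_pow_of_unique_prime_dvd
    ((Set.ncard_pos K.toFinite).2 ⟨x, hxK⟩).ne' fun {r} hr hrK => ?_⟩
  by_contra hrp
  have : Fact r.Prime := ⟨hr⟩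
  obtain ⟨y, hyK, R, hR, hindex⟩ := h.exists_le_centralizer_not_dvd_index hxK hx S hrp
  rw [h.ncard_eq_index_centralizer hp hyK] at hrK
  exact hindex (hrK.trans (Subgroup.index_dvd_of_le hR))

end IsReflectionSet

end NormalComplement

section ProductsOfReflections

universe u

variable {p : ℕ} [Fact p.Prime]

theorem IsReflectionSet.exists_ncard_eq_pow_of_closure_eq_top {G : Type u} [Group G] [Finite G]
    {K : Set G} (h : IsReflectionSet p K) (hp : Odd p) (hgen : Subgroup.closure K = ⊤)
    {x : G} (hxK : x ∈ K) (hx1 : x ≠ 1)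
    (ih : ∀ (H : Type u) [Group H] [Finite H], Nat.card H < Nat.card G →
      ProductsGeneratePGroup p H) :
    ∃ n, K.ncard = p ^ n := by
  by_cases hx : IsLoneInvolution x
  · exact h.exists_ncard_eq_pow_of_isLoneInvolution hp hgen hxK hx
  have hz : ∃ z, z * z = 1 ∧ z * x = x * z ∧ z ≠ 1 ∧ z ≠ x := by
    by_contra! hz
    refine hx ⟨h.mul_self_eq_one x hxK, hx1, fun z hzz hzx => ?_⟩
    exact or_iff_not_imp_left.2 (hz z hzz hzx)
  obtain ⟨z, hzz, hcomm, hz1, hzx⟩ := hz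
  exact h.exists_ncard_eq_pow_of_commute hp hxK hzz hz1 hzx hcomm ih

theorem productsGeneratePGroup_of_odd (hp : Odd p) (G : Type u) [Group G] [Finite G] :
    ProductsGeneratePGroup p G := by
  induction hn : Nat.card G using Nat.strong_induction_on generalizing G with
  | _ n ih =>
  subst hn
  replace ih : ∀ (H : Type u) [Group H] [Finite H], Nat.card H < Nat.card G →
      ProductsGeneratePGroup p H := fun H _ _ hlt => ih _ hlt H rfl
  intro K h
  by_cases hK : K.Subsingleton
  · have hbot : Subgroup.closure (K * K) ≤ ⊥ := by
      rw [Subgroup.closure_le]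
      rintro _ ⟨u, hu, v, hv, rfl⟩
      rw [hK hu hv]
      exact h.mul_self_eq_one v hv
    exact IsPGroup.of_bot.to_le hbot
  by_cases hgen : Subgroup.closure K = ⊤
  · obtain ⟨x, hxK, hx1⟩ := (Set.not_subsingleton_iff.1 hK).exists_ne 1
    obtain ⟨b, hb⟩ := h.exists_ncard_eq_pow_of_closure_eq_top hp hgen hxK hx1 ih
    exact h.isPGroup_closure_mul_of_ncard_eq_pow hp hK hb ih
  · have := h.isPGroup_closure_inter (ih _ (natCard_lt_of_ne_top hgen))
    rwa [Set.inter_eq_left.2 Subgroup.subset_closure] at this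

end ProductsOfReflections

section SolvableClosure

variable {G : Type*} [Group G] {K : Set G}

theorem conj_mem_mul (hK : ∀ u ∈ K, ∀ g, g * u * g⁻¹ ∈ K) :
    ∀ s ∈ K * K, ∀ g, g * s * g⁻¹ ∈ K * K := by
  rintro _ ⟨u, hu, v, hv, rfl⟩ g
  exact ⟨_, hK u hu g, _, hK v hv g, conj_mul⟩

theorem normal_closure_of_conj_mem (hK : ∀ u ∈ K, ∀ g, g * u * g⁻¹ ∈ K) :
    (Subgroup.closure K).Normal := by
  rw [← Subgroup.normalizer_eq_top_iff, eq_top_iff]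
  exact (Subgroup.le_set_normalizer_iff.2 fun g _ u hu => hK u hu g).trans
    (Subgroup.normalizer_le_normalizer_closure K)

theorem isSolvable_closure_of_commute (hK : ∀ u ∈ K, ∀ v ∈ K, u * v = v * u) :
    Group.IsSolvable (Subgroup.closure K) :=
  have hcomm := Subgroup.isMulCommutative_closure hK
  Group.isSolvable_of_comm hcomm.is_comm.comm

/-- Modulo `N` every element of `K` is the inverse of every other, so `K` becomes a single
element. -/
theorem isSolvable_closure_of_mul_mem (N : Subgroup G) [N.Normal] [Group.IsSolvable N]
    (hK : ∀ u ∈ K, ∀ v ∈ K, u * v ∈ N) : Group.IsSolvable (Subgroup.closure K) := by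
  have hmap : Group.IsSolvable ((Subgroup.closure K).map (QuotientGroup.mk' N)) := by
    rw [MonoidHom.map_closure]
    have hinv : ∀ u ∈ K, ∀ v ∈ K, (u : G ⧸ N) = (v : G ⧸ N)⁻¹ := fun u hu v hv =>
      eq_inv_of_mul_eq_one_left ((QuotientGroup.eq_one_iff _).2 (hK u hu v hv))
    refine isSolvable_closure_of_commute ?_
    rintro _ ⟨u, hu, rfl⟩ _ ⟨v, hv, rfl⟩
    have huv : (u : G ⧸ N) = v := (hinv u hu v hv).trans (hinv v hv v hv).symm
    exact congrArg₂ _ huv huv.symm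
  have hinter : Group.IsSolvable (Subgroup.closure K ⊓ N : Subgroup G) :=
    Group.isSolvable_of_isSolvable_injective (Subgroup.inclusion_injective inf_le_right)
  refine Group.isSolvable_of_ker_le_range (Subgroup.inclusion inf_le_left)
    ((QuotientGroup.mk' N).subgroupMap (Subgroup.closure K)) (hG' := hinter) fun a ha => ?_
  have haN := (QuotientGroup.eq_one_iff (a : G)).1 (congrArg Subtype.val ha)
  exact ⟨⟨a, a.2, haN⟩, rfl⟩

end SolvableClosure

section UniformOrders

variable {G : Type*} [Group G]

theorem isSolvable_of_orderOf_eq [Finite G] {n : ℕ} (h : ∀ g : G, g ≠ 1 → orderOf g = n) :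
    Group.IsSolvable G := by
  obtain hG | hG := subsingleton_or_nontrivial G
  · infer_instance
  have : Fact (Nat.card G).minFac.Prime := ⟨Nat.minFac_prime Finite.one_lt_card.ne'⟩
  obtain ⟨c, hc⟩ := exists_prime_orderOf_dvd_card' (Nat.card G).minFac (Nat.minFac_dvd _)
  have hcn : orderOf c = n := h c (by
    rintro rfl
    exact (Fact.out : (Nat.card G).minFac.Prime).one_lt.ne (orderOf_one.symm.trans hc))
  have hpgroup : IsPGroup (Nat.card G).minFac G := fun g => by
    obtain rfl | hg := eq_or_ne g 1
    · exact ⟨0, one_pow _⟩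
    · exact ⟨1, by rw [pow_one, ← hc, hcn, ← h g hg, pow_orderOf_eq_one]⟩
  have := hpgroup.isNilpotent
  infer_instance

theorem odd_orderOf_of_orderOf_sq_eq {d : G} (hd : IsOfFinOrder d)
    (h : orderOf (d ^ 2) = orderOf d) : Odd (orderOf d) := by
  by_contra hodd
  rw [Nat.not_odd_iff_even] at hodd
  rw [hd.orderOf_pow, Nat.gcd_eq_right hodd.two_dvd] at h
  exact (Nat.div_lt_self hd.orderOf_pos one_lt_two).ne h

theorem prime_orderOf_of_pow_eq_one_or {d : G} (hd : IsOfFinOrder d) (hd1 : d ≠ 1)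
    (h : ∀ i, d ^ i = 1 ∨ orderOf (d ^ i) = orderOf d) : (orderOf d).Prime := by
  have hmin := Nat.minFac_prime (mt orderOf_eq_one_iff.1 hd1)
  obtain h1 | h1 := h (orderOf d).minFac
  · rwa [Nat.dvd_antisymm (orderOf_dvd_of_pow_eq_one h1) (Nat.minFac_dvd _)]
  · rw [hd.orderOf_pow, Nat.gcd_eq_right (Nat.minFac_dvd _)] at h1
    exact absurd h1 (Nat.div_lt_self hd.orderOf_pos hmin.one_lt).ne

/-- The powers `d ^ (2 * i)` of an element of odd order are all its powers. -/
theorem odd_prime_orderOf {d : G} (hd : IsOfFinOrder d) (hd2 : d ^ 2 ≠ 1)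
    (h : ∀ i, d ^ (2 * i) = 1 ∨ orderOf (d ^ (2 * i)) = orderOf d) :
    Odd (orderOf d) ∧ (orderOf d).Prime := by
  have hodd := odd_orderOf_of_orderOf_sq_eq hd ((h 1).resolve_left hd2)
  refine ⟨hodd, prime_orderOf_of_pow_eq_one_or hd (by rintro rfl; simp at hd2) fun i => ?_⟩
  obtain ⟨k, hk⟩ := hodd
  have hpow : d ^ (2 * (i * (k + 1))) = d ^ i := by
    rw [show 2 * (i * (k + 1)) = orderOf d * i + i by rw [hk]; ring, pow_add, pow_mul,
      pow_orderOf_eq_one, one_pow, one_mul]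
  exact hpow ▸ h (i * (k + 1))

end UniformOrders

section SquareOfConjugationInvariantSet

universe u

variable {G : Type u} [Group G] {K : Set G} {u v x : G}

theorem mul_pow_two_mul_mem_mul (hconj : ∀ u ∈ K, ∀ g, g * u * g⁻¹ ∈ K)
    (hinv : ∀ u ∈ K, u * u = 1) (hu : u ∈ K) (hv : v ∈ K) (i : ℕ) :
    (u * v) ^ (2 * i) ∈ K * K := by
  have hu' := inv_eq_of_mul_eq_one_left (hinv u hu)
  have hv' := inv_eq_of_mul_eq_one_left (hinv v hv)
  have hflip : u * (u * v) ^ i * u⁻¹ = ((u * v) ^ i)⁻¹ := by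
    rw [← conj_pow, ← inv_pow, mul_inv_rev, hv', hu', ← mul_assoc u u, hinv u hu, one_mul]
  refine ⟨u, hu, _, hconj u hu ((u * v) ^ i)⁻¹, ?_⟩
  calc u * (((u * v) ^ i)⁻¹ * u * ((u * v) ^ i)⁻¹⁻¹)
      = u * ((u * v) ^ i)⁻¹ * u⁻¹ * (u * v) ^ i := by rw [hu']; group
    _ = (u * (u * v) ^ i * u⁻¹)⁻¹ * (u * v) ^ i := by group
    _ = (u * v) ^ (2 * i) := by rw [hflip, inv_inv, ← pow_add, two_mul]

theorem isSolvable_closure_of_involutions [Finite G] (hconj : ∀ u ∈ K, ∀ g, g * u * g⁻¹ ∈ K)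
    (hinv : ∀ u ∈ K, u * u = 1) {n : ℕ} (horder : ∀ s ∈ K * K, s = 1 ∨ orderOf s = n) :
    Group.IsSolvable (Subgroup.closure K) := by
  by_cases hsq : ∀ u ∈ K, ∀ v ∈ K, (u * v) ^ 2 = 1
  · refine isSolvable_closure_of_commute fun u hu v hv => ?_
    have huv := eq_inv_of_mul_eq_one_left ((pow_two (u * v)).symm.trans (hsq u hu v hv))
    rwa [mul_inv_rev, inv_eq_of_mul_eq_one_left (hinv u hu),
      inv_eq_of_mul_eq_one_left (hinv v hv)] at huv
  push Not at hsq
  obtain ⟨u, hu, v, hv, huv⟩ := hsq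
  have huvn : orderOf (u * v) = n :=
    (horder _ (Set.mul_mem_mul hu hv)).resolve_left fun h => huv (by rw [h, one_pow])
  obtain ⟨hodd, hprime⟩ := odd_prime_orderOf (isOfFinOrder_of_finite (u * v)) huv fun i =>
    huvn.symm ▸ horder _ (mul_pow_two_mul_mem_mul hconj hinv hu hv i)
  rw [huvn] at hodd hprime
  have : Fact n.Prime := ⟨hprime⟩
  have hK : IsReflectionSet n K := ⟨hconj, hinv, fun a ha b hb => by
    obtain h | h := horder _ (Set.mul_mem_mul ha hb)
    · rw [h, one_pow]
    · rw [← h, pow_orderOf_eq_one]⟩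
  have := (productsGeneratePGroup_of_odd hodd G K hK).isNilpotent
  have := normal_closure_of_conj_mem (conj_mem_mul hconj)
  exact isSolvable_closure_of_mul_mem (Subgroup.closure (K * K)) fun a ha b hb =>
    Subgroup.subset_closure (Set.mul_mem_mul ha hb)

/-- Freiman's theorem on sets of doubling less than `3 / 2`. -/
theorem exists_subgroup_coe_eq_mul_self (hK : K.Finite) (hinv : K⁻¹ = K)
    (hcard : 2 * (K * K).ncard < 3 * K.ncard) : ∃ N : Subgroup G, (N : Set G) = K * K := by
  classical
  lift K to Finset G using hK
  rw [← Finset.coe_mul, Set.ncard_coe_finset, Set.ncard_coe_finset] at hcard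
  have hdoubling : ((K * K).card : ℚ) < (3 / 2 : ℚ) * K.card := by
    have : (2 * (K * K).card : ℚ) < 3 * K.card := mod_cast hcard
    linarith
  exact ⟨Finset.invMulSubgroup K hdoubling, by
    rw [Finset.invMulSubgroup_eq_inv_mul, Finset.coe_inv, hinv]⟩

theorem isSolvable_closure_of_ncard_mul_self_le [Finite G]
    (hconj : ∀ u ∈ K, ∀ g, g * u * g⁻¹ ∈ K) (hinv : K⁻¹ = K) (hx : x ∈ K) (hxx : x * x ≠ 1)
    (hcard : (K * K).ncard ≤ K.ncard + 1) {n : ℕ} (horder : ∀ s ∈ K * K, s = 1 ∨ orderOf s = n) :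
    Group.IsSolvable (Subgroup.closure K) := by
  obtain hK | hK := le_or_gt K.ncard 2
  · have hpair : {x, x⁻¹} = K := by
      refine Set.eq_of_subset_of_ncard_le (Set.pair_subset hx (by rwa [← Set.mem_inv, hinv])) ?_
      rwa [Set.ncard_pair fun h => hxx (mul_eq_one_iff_eq_inv.2 h)]
    refine isSolvable_closure_of_commute ?_
    rw [← hpair]
    rintro u (rfl | rfl) v (rfl | rfl) <;> simp
  · obtain ⟨N, hN⟩ := exists_subgroup_coe_eq_mul_self K.toFinite hinv (by omega)
    have hmem : ∀ {s}, s ∈ N ↔ s ∈ K * K := fun {s} => by rw [← hN, SetLike.mem_coe]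
    have : N.Normal := ⟨fun s hs g => hmem.2 (conj_mem_mul hconj s (hmem.1 hs) g)⟩
    have : Group.IsSolvable N := isSolvable_of_orderOf_eq fun s hs => by
      rw [← Subgroup.orderOf_coe]
      exact (horder s (hmem.1 s.2)).resolve_left fun h => hs (Subtype.ext h)
    exact isSolvable_closure_of_mul_mem N fun a ha b hb => hmem.2 (Set.mul_mem_mul ha hb)

end SquareOfConjugationInvariantSet

namespace conjClass

variable {G : Type*} [Group G] {a b d x : G}

theorem mem_iff_isConj : a ∈ conjClass x ↔ IsConj x a := by
  rw [isConj_comm, isConj_iff]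
  refine exists_congr fun g => ⟨?_, ?_⟩
  · rintro rfl
    group
  · rintro rfl
    group

theorem self_mem (x : G) : x ∈ conjClass x :=
  mem_iff_isConj.2 (IsConj.refl x)

theorem exists_eq_conj (ha : a ∈ conjClass x) (hb : b ∈ conjClass x) : ∃ g, b = g * a * g⁻¹ := by
  obtain ⟨g, hg⟩ := isConj_iff.1 ((mem_iff_isConj.1 ha).symm.trans (mem_iff_isConj.1 hb))
  exact ⟨g, hg.symm⟩

theorem conj_mem : ∀ a ∈ conjClass x, ∀ g, g * a * g⁻¹ ∈ conjClass x := fun _ ha g =>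
  mem_iff_isConj.2 ((mem_iff_isConj.1 ha).trans (isConj_iff.2 ⟨g, rfl⟩))

theorem orderOf_eq (ha : a ∈ conjClass x) : orderOf a = orderOf x := by
  obtain ⟨g, rfl⟩ := exists_eq_conj (self_mem x) ha
  exact ((SemiconjBy.conj_mk g x).orderOf_eq g).symm

theorem inv_eq_self (h : 1 ∈ conjClass x * conjClass x) : (conjClass x)⁻¹ = conjClass x := by
  obtain ⟨u, hu, v, hv, huv⟩ := h
  refine Set.inv_eq_self_iff_inv_subset.2 fun w hw => ?_
  obtain ⟨g, hg⟩ := exists_eq_conj hu hw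
  have hw' : w = g * v * g⁻¹ := by
    rw [eq_inv_of_mul_eq_one_right huv, ← conj_inv, ← hg, inv_inv]
  exact hw' ▸ conj_mem v hv g

theorem mul_self_eq_one (hxx : x * x = 1) : ∀ a ∈ conjClass x, a * a = 1 := by
  intro a ha
  obtain ⟨g, rfl⟩ := exists_eq_conj (self_mem x) ha
  rw [conj_mul, hxx, mul_one, mul_inv_cancel]

theorem ncard_le_of_sq_mem [Finite G] (hxd : x * x ∈ conjClass d) :
    (conjClass d).ncard ≤ (conjClass x).ncard := by
  refine (Set.ncard_le_ncard (t := (fun a => a * a) '' conjClass x) ?_).trans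
    (Set.ncard_image_le (Set.toFinite _))
  intro t ht
  obtain ⟨g, rfl⟩ := exists_eq_conj hxd ht
  exact ⟨_, conj_mem x (self_mem x) g, conj_mul⟩

end conjClass

/-- **Theorem A (solvability part).** If `K = x^G` is a conjugacy class of a finite group `G`
with `K² = {1} ∪ D` for a conjugacy class `D = d^G` of a non-identity element `d`, then
`⟨K⟩` is a solvable normal subgroup of `G`. -/
theorem square_of_class_eq_one_union_class_solvable
    {G : Type*} [Group G] [Fintype G] (x d : G) (hx : x ≠ 1) (hd : d ≠ 1)
    (K D : Set G) (hK : K = conjClass x) (hD : D = conjClass d)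
    (hKD : K * K = {1} ∪ D) :
    (Subgroup.closure K).Normal ∧ IsSolvable (Subgroup.closure K) := by
  subst hK hD
  have horder : ∀ s ∈ conjClass x * conjClass x, s = 1 ∨ orderOf s = orderOf d := fun s hs =>
    (hKD ▸ hs : s ∈ {1} ∪ conjClass d).imp_right conjClass.orderOf_eq
  refine ⟨normal_closure_of_conj_mem conjClass.conj_mem, ?_⟩
  by_cases hxx : x * x = 1
  · exact isSolvable_closure_of_involutions conjClass.conj_mem (conjClass.mul_self_eq_one hxx)
      horder
  have hxd : x * x ∈ conjClass d :=
    (hKD ▸ Set.mul_mem_mul (conjClass.self_mem x) (conjClass.self_mem x) :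
      x * x ∈ {1} ∪ conjClass d).resolve_left hxx
  have hcard : (conjClass x * conjClass x).ncard ≤ (conjClass x).ncard + 1 := calc
    (conjClass x * conjClass x).ncard ≤ ({1} : Set G).ncard + (conjClass d).ncard :=
      hKD ▸ Set.ncard_union_le _ _
    _ ≤ (conjClass x).ncard + 1 := by
      rw [Set.ncard_singleton, add_comm]
      exact Nat.add_le_add_right (conjClass.ncard_le_of_sq_mem hxd) 1
  have hinv := conjClass.inv_eq_self (x := x) (hKD ▸ Or.inl rfl)
  exact isSolvable_closure_of_ncard_mul_self_le conjClass.conj_mem hinv (conjClass.self_mem x) hxx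
    hcard horder
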